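/- Let p ≥ 1 be an integer and a > 2p a real number. Assume (ε_n) is a martingale difference sequence with E[ε_{n+1}² | F_n] = σ² a.s. for all n and sup_{n≥0} E[|ε_{n+1}|^a | F_n] < ∞ a.s. Assume the explosion coefficient f_n tends to zero a.s. and that there exists a positive random sequence (α_n) increasing to infinity and a symmetric positive definite d×d matrix L such that S_n/α_n → L a.s. With β_n = tr(L^{-1/2} S_n L^{-1/2}), γ_n = (β_n − β_{n-1})/β_n, and m_n = β_{n-1}^{-1} M_n^t L^{-1} M_n, one has almost surely lim_{n→∞} (1/log d_n) Σ_{k=1}^n γ_k m_k^p = ℓ(p)/d^{p+1}, where ℓ(p) = d σ^{2p} ∏_{j=1}^{p-1} (d + 2j). -/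

import Mathlib

open MeasureTheory ProbabilityTheory Filter Finset Matrix Topology

noncomputable section

/-- `S_n = S + ∑_{k=0}^n Φ_k Φ_kᵗ`. -/
def Smat {Ω : Type*} {d : ℕ} (S : Matrix (Fin d) (Fin d) ℝ)
    (Φ : ℕ → Ω → Fin d → ℝ) (n : ℕ) (ω : Ω) : Matrix (Fin d) (Fin d) ℝ :=
  S + ∑ k ∈ Finset.range (n + 1), vecMulVec (Φ k ω) (Φ k ω)

/-- The explosion coefficient `f_n = Φ_nᵗ S_n⁻¹ Φ_n`. -/
def expl {Ω : Type*} {d : ℕ} (S : Matrix (Fin d) (Fin d) ℝ)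
    (Φ : ℕ → Ω → Fin d → ℝ) (n : ℕ) (ω : Ω) : ℝ :=
  Φ n ω ⬝ᵥ ((Smat S Φ n ω)⁻¹ *ᵥ Φ n ω)

/-- The vector martingale transform `M_n = M_0 + ∑_{k=1}^n Φ_{k-1} ε_k`. -/
def Mart {Ω : Type*} {d : ℕ} (M0 : Ω → Fin d → ℝ) (Φ : ℕ → Ω → Fin d → ℝ)
    (ε : ℕ → Ω → ℝ) (n : ℕ) (ω : Ω) : Fin d → ℝ :=
  M0 ω + ∑ k ∈ Finset.range n, ε (k + 1) ω • Φ k ω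

/-- `ℓ(p) = d σ^{2p} ∏_{j=1}^{p-1} (d + 2j)`. -/
def elllim (d p : ℕ) (σ : ℝ) : ℝ :=
  (d : ℝ) * σ ^ (2 * p) * ∏ j ∈ Finset.Icc 1 (p - 1), ((d : ℝ) + 2 * (j : ℝ))

/-!
Whitening by an invertible `K` with `K * L * Kᵀ = 1` makes the Gram matrices asymptotically
isotropic and turns `m_k` into the energy `m = ‖N‖² / tr` of a whitened transform `N`, for which
`m_{k+1} = (1 - γ) m_k + 2 b ε + γ ε²` with `b² ≈ γ m_k / d`: the anisotropy error telescopes.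
Expanding `m_{k+1}^(p+1)` and telescoping, the martingale terms are negligible by Chow's theorem,
once a Robbins-Siegmund argument applied to a logarithm of `m` has shown that `m` grows slower
than every power of `log β`. What is left is `∑ γ m^(p+1) ≈ σ² (1 + 2p/d) ∑ γ m^p`, and
induction on `p` gives the product of the factors `σ² (1 + 2j/d)`, `0 ≤ j < p`. Finally
`∑ γ ~ log β`, whereas `log det ~ d log β`, which accounts for the last factor `1/d`.
-/

open Asymptotics

lemma rpow_eq_rpow_sub_one_mul {x t : ℝ} (hx : 0 ≤ x) (ht : 1 < t) : x ^ t = x ^ (t - 1) * x := by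
  conv_lhs => rw [← sub_add_cancel t 1, Real.rpow_add_of_nonneg hx (by linarith) zero_le_one,
    Real.rpow_one]

lemma rpow_le_one_add_rpow {x u v : ℝ} (hx : 0 ≤ x) (hu : 0 ≤ u) (huv : u ≤ v) :
    x ^ u ≤ 1 + x ^ v := by
  rcases le_total x 1 with h | h
  · linarith [Real.rpow_le_one hx h hu, Real.rpow_nonneg hx v]
  · linarith [Real.rpow_le_rpow_of_exponent_le h huv]

lemma pow_le_one_add_pow {x : ℝ} {m n : ℕ} (hx : 0 ≤ x) (hmn : m ≤ n) : x ^ m ≤ 1 + x ^ n := by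
  simpa using rpow_le_one_add_rpow hx m.cast_nonneg (Nat.cast_le.2 hmn)

lemma rpow_sub_one_le_mul_rpow_add {x δ t : ℝ} (hx : 0 ≤ x) (hδ : 0 < δ) (ht : 1 < t) :
    x ^ (t - 1) ≤ δ * x ^ t + δ⁻¹ ^ (t - 1) := by
  rw [rpow_eq_rpow_sub_one_mul hx ht]
  have hxt := Real.rpow_nonneg hx (t - 1)
  rcases le_total x δ⁻¹ with h | h
  · nlinarith [Real.rpow_le_rpow hx h (sub_nonneg.2 ht.le), mul_nonneg hδ.le (mul_nonneg hxt hx)]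
  · have h1 : 1 ≤ δ * x := by rwa [inv_le_iff_one_le_mul₀' hδ] at h
    nlinarith [Real.rpow_nonneg (inv_nonneg.2 hδ.le) (t - 1)]

lemma one_add_rpow_le_of_sq_le_one {x t : ℝ} (hx : -1 ≤ x) (ht : 0 ≤ t) (hxt : (t * x) ^ 2 ≤ 1) :
    (1 + x) ^ t ≤ 1 + t * x + (t * x) ^ 2 := by
  calc (1 + x) ^ t ≤ Real.exp x ^ t :=
        Real.rpow_le_rpow (by linarith) (by linarith [Real.add_one_le_exp x]) ht
    _ = Real.exp (t * x) := by rw [← Real.exp_mul, mul_comm]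
    _ ≤ 1 + t * x + (t * x) ^ 2 := by
        have := Real.abs_exp_sub_one_sub_id_le ((sq_le_one_iff_abs_le_one _).1 hxt)
        linarith [(abs_le.1 this).2]

lemma two_mul_abs_le_add_of_sq_le_mul {V B Z : ℝ} (hV : 0 ≤ V) (hZ : 0 ≤ Z) (hB : B ^ 2 ≤ V * Z) :
    2 * |B| ≤ V + Z :=
  abs_le_of_sq_le_sq' (by nlinarith [sq_nonneg (V - Z), sq_abs B]) (by positivity) |>.2

lemma rpow_two_mul_add_le_of_le {V B Z t : ℝ} (ht : 1 < t) (hV : 0 ≤ V) (hZ : 0 ≤ Z)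
    (hB : B ^ 2 ≤ V * Z) (hZV : 10 * t ^ 2 * Z ≤ V) :
    (V + 2 * B + Z) ^ t ≤ V ^ t + 2 * t * B * V ^ (t - 1) + 11 * t ^ 2 * (V ^ (t - 1) * Z) := by
  have hZV' : 10 * Z ≤ V := by nlinarith [mul_nonneg (by nlinarith : 0 ≤ t ^ 2 - 1) hZ]
  rcases hV.eq_or_lt with rfl | hV0
  · have hZ0 : Z = 0 := le_antisymm (by linarith) hZ
    have hB0 : B = 0 := by simpa [hZ0, sq_nonpos_iff] using hB
    simp [hZ0, hB0]
  obtain ⟨x, hx⟩ : ∃ x, 2 * B + Z = V * x := ⟨(2 * B + Z) / V, by field_simp⟩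
  have hsq : V ^ 2 * x ^ 2 ≤ V * (10 * Z) := by
    have : Z * Z ≤ V * Z := mul_le_mul_of_nonneg_right (by linarith) hZ
    rw [← mul_pow, ← hx]
    nlinarith [sq_nonneg (2 * B - Z)]
  have hVx : V * x ^ 2 ≤ 10 * Z := le_of_mul_le_mul_left (by linarith) hV0
  have htx : (t * x) ^ 2 ≤ 1 := le_of_mul_le_mul_left
    (by nlinarith [mul_le_mul_of_nonneg_left hVx (sq_nonneg t)]) hV0
  have hx1 : -1 ≤ x := by nlinarith [neg_le_of_abs_le ((sq_le_one_iff_abs_le_one _).1 htx)]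
  have hVt := Real.rpow_nonneg hV (t - 1)
  calc (V + 2 * B + Z) ^ t = V ^ t * (1 + x) ^ t := by
        rw [← Real.mul_rpow hV (by linarith), add_assoc, hx]; ring_nf
    _ ≤ V ^ t * (1 + t * x + (t * x) ^ 2) := by
        gcongr; exact one_add_rpow_le_of_sq_le_one hx1 (by linarith) htx
    _ = V ^ t + t * V ^ (t - 1) * (V * x) + t ^ 2 * V ^ (t - 1) * (V * x ^ 2) := by
        rw [rpow_eq_rpow_sub_one_mul hV ht]; ring
    _ ≤ V ^ t + t * V ^ (t - 1) * (2 * B + Z) + t ^ 2 * V ^ (t - 1) * (10 * Z) := by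
        rw [hx]; gcongr
    _ ≤ V ^ t + 2 * t * B * V ^ (t - 1) + 11 * t ^ 2 * (V ^ (t - 1) * Z) := by
        nlinarith [mul_nonneg (mul_nonneg hVt hZ) (by nlinarith : 0 ≤ t ^ 2 - t)]

lemma rpow_two_mul_add_le_of_ge {V B Z t K : ℝ} (ht : 1 < t) (hV : 0 ≤ V) (hZ : 0 ≤ Z)
    (hK : 0 ≤ K) (hB : B ^ 2 ≤ V * Z) (hVZ : V ≤ K * Z) :
    (V + 2 * B + Z) ^ t ≤ V ^ t + 2 * t * B * V ^ (t - 1) +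
      ((2 * K + 2) ^ t + t * (K + 1) * K ^ (t - 1)) * Z ^ t := by
  have hB2 := abs_le.1 (show |2 * B| ≤ V + Z by
    simpa [abs_mul] using two_mul_abs_le_add_of_sq_le_mul hV hZ hB)
  have hVt : V ^ (t - 1) ≤ K ^ (t - 1) * Z ^ (t - 1) := by
    rw [← Real.mul_rpow hK hZ]; exact Real.rpow_le_rpow hV hVZ (by linarith)
  have hmain : (V + 2 * B + Z) ^ t ≤ (2 * K + 2) ^ t * Z ^ t := by
    rw [← Real.mul_rpow (by linarith) hZ]
    exact Real.rpow_le_rpow (by linarith) (by linarith) (by linarith)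
  have hcross : -(t * (K + 1) * K ^ (t - 1) * Z ^ t) ≤ t * V ^ (t - 1) * (2 * B) := by
    calc -(t * (K + 1) * K ^ (t - 1) * Z ^ t)
        = -(t * (K ^ (t - 1) * Z ^ (t - 1)) * ((K + 1) * Z)) := by
          rw [rpow_eq_rpow_sub_one_mul hZ ht]; ring
      _ ≤ -(t * V ^ (t - 1) * ((K + 1) * Z)) := by gcongr
      _ = t * V ^ (t - 1) * (-((K + 1) * Z)) := by ring
      _ ≤ t * V ^ (t - 1) * (2 * B) := by gcongr; linarith
  linarith [Real.rpow_nonneg hV t]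

lemma exists_rpow_two_mul_add_le {t : ℝ} (ht : 1 < t) : ∃ C : ℝ, 0 ≤ C ∧ ∀ V B Z : ℝ, 0 ≤ V →
    0 ≤ Z → B ^ 2 ≤ V * Z →
    (V + 2 * B + Z) ^ t ≤
      V ^ t + 2 * t * B * V ^ (t - 1) + C * (V ^ (t - 1) * Z + Z ^ t) := by
  set C' : ℝ := (2 * (10 * t ^ 2) + 2) ^ t + t * (10 * t ^ 2 + 1) * (10 * t ^ 2) ^ (t - 1)
  have hC' : 0 ≤ C' := by positivity
  refine ⟨11 * t ^ 2 + C', by positivity, fun V B Z hV hZ hB => ?_⟩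
  have h1 : 0 ≤ V ^ (t - 1) * Z := by positivity
  have h2 : 0 ≤ Z ^ t := by positivity
  rcases le_total (10 * t ^ 2 * Z) V with h | h
  · nlinarith [rpow_two_mul_add_le_of_le ht hV hZ hB h, mul_nonneg hC' h1, mul_nonneg hC' h2,
      mul_nonneg (sq_nonneg t) h2]
  · nlinarith [rpow_two_mul_add_le_of_ge ht hV hZ (by positivity) hB h, mul_nonneg hC' h1,
      mul_nonneg (sq_nonneg t) h1, mul_nonneg (sq_nonneg t) h2]

/-- A smooth substitute for `|x|`: it grows linearly but has a Lipschitz derivative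
`x / smoothAbs x`, bounded by `1`. -/
def smoothAbs (x : ℝ) : ℝ := √(1 + x ^ 2)

lemma one_le_smoothAbs (x : ℝ) : 1 ≤ smoothAbs x :=
  Real.one_le_sqrt.2 (by nlinarith [sq_nonneg x])

lemma sq_smoothAbs (x : ℝ) : smoothAbs x ^ 2 = 1 + x ^ 2 := Real.sq_sqrt (by positivity)

lemma abs_div_smoothAbs_le_one (x : ℝ) : |x / smoothAbs x| ≤ 1 := by
  have h1 := one_le_smoothAbs x
  rw [abs_div, abs_of_pos (by linarith : 0 < smoothAbs x), div_le_one (by linarith)]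
  exact abs_le_of_sq_le_sq (by linarith [sq_smoothAbs x]) (by linarith)

lemma smoothAbs_add_le_abs (x y : ℝ) : smoothAbs (x + y) ≤ smoothAbs x + |y| := by
  have h1 := one_le_smoothAbs x
  have hx : |x| ≤ smoothAbs x := abs_le_of_sq_le_sq (by linarith [sq_smoothAbs x]) (by linarith)
  refine abs_le_of_sq_le_sq (by
    nlinarith [sq_smoothAbs x, sq_smoothAbs (x + y), sq_abs y, le_abs_self (x * y), abs_mul x y,
      mul_le_mul_of_nonneg_right hx (abs_nonneg y)]) (by positivity) |> (le_abs_self _).trans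

lemma smoothAbs_add_le_sq (x y : ℝ) :
    smoothAbs (x + y) ≤ smoothAbs x + x / smoothAbs x * y + y ^ 2 := by
  have h1 := one_le_smoothAbs x
  refine le_of_mul_le_mul_left (a := smoothAbs x) ?_ (by linarith)
  calc smoothAbs x * smoothAbs (x + y) ≤ (smoothAbs x ^ 2 + smoothAbs (x + y) ^ 2) / 2 := by
        linarith [two_mul_le_add_sq (smoothAbs x) (smoothAbs (x + y))]
    _ ≤ smoothAbs x ^ 2 + x * y + 1 * y ^ 2 := by
        rw [sq_smoothAbs, sq_smoothAbs]; nlinarith [sq_nonneg y]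
    _ ≤ smoothAbs x ^ 2 + x * y + smoothAbs x * y ^ 2 := by gcongr
    _ = smoothAbs x * (smoothAbs x + x / smoothAbs x * y + y ^ 2) := by field_simp

lemma smoothAbs_add_le_rpow {r : ℝ} (h1r : 1 ≤ r) (hr2 : r ≤ 2) (x y : ℝ) :
    smoothAbs (x + y) ≤ smoothAbs x + x / smoothAbs x * y + 2 * |y| ^ r := by
  rcases le_total |y| 1 with h | h
  · have : y ^ 2 ≤ |y| ^ r := by
      rw [← sq_abs, ← Real.rpow_two]
      exact Real.rpow_le_rpow_of_exponent_ge_of_imp (abs_nonneg y) h hr2 (by intros; linarith)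
    linarith [smoothAbs_add_le_sq x y, sq_nonneg y]
  · have hyr : |y| ≤ |y| ^ r := by simpa using Real.rpow_le_rpow_of_exponent_le h h1r
    have hlin : -|y| ≤ x / smoothAbs x * y := by
      refine neg_le_of_abs_le ?_
      rw [abs_mul]
      exact mul_le_of_le_one_left (abs_nonneg y) (abs_div_smoothAbs_le_one x)
    linarith [smoothAbs_add_le_abs x y]

lemma continuous_div_smoothAbs : Continuous fun x => x / smoothAbs x :=
  continuous_id.div (by unfold smoothAbs; fun_prop) fun x => by linarith [one_le_smoothAbs x]

lemma isLittleO_const_of_tendsto_atTop {A : ℕ → ℝ} (hA : Tendsto A atTop atTop) (c : ℝ) :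
    (fun _ => c) =o[atTop] A :=
  isLittleO_const_left.2 (.inr (tendsto_norm_atTop_atTop.comp hA))

lemma isLittleO_sum_mul_sub {A θ : ℕ → ℝ} (hA : Monotone A) (hAtop : Tendsto A atTop atTop)
    (hθ : Tendsto θ atTop (𝓝 0)) :
    (fun n => ∑ k ∈ range n, θ k * (A (k + 1) - A k)) =o[atTop] A := by
  have hsum : ∀ n, ∑ k ∈ range n, (A (k + 1) - A k) = A n - A 0 := fun n => sum_range_sub A n
  have hlo : (fun k => θ k * (A (k + 1) - A k)) =o[atTop] fun k => A (k + 1) - A k := by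
    simpa using ((isLittleO_one_iff ℝ).2 hθ).mul_isBigO
      (isBigO_refl (fun k => A (k + 1) - A k) atTop)
  refine (hlo.sum_range (fun k => sub_nonneg.2 (hA k.le_succ)) ?_).trans_isBigO ?_
  · simp only [hsum]
    exact tendsto_atTop_add_const_right _ (-A 0) hAtop
  · simpa only [hsum] using
      (isBigO_refl A atTop).sub (isLittleO_const_of_tendsto_atTop hAtop _).isBigO

lemma isLittleO_sum_of_tendsto_sum_div {A u : ℕ → ℝ} {l : ℝ} (hA : Monotone A)
    (hpos : ∀ n, 0 < A n) (hAtop : Tendsto A atTop atTop)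
    (h : Tendsto (fun n => ∑ k ∈ range n, u k / A (k + 1)) atTop (𝓝 l)) :
    (fun n => ∑ k ∈ range n, u k) =o[atTop] A := by
  set s : ℕ → ℝ := fun n => ∑ k ∈ range n, u k / A (k + 1) - l with hs
  have hs0 : Tendsto s atTop (𝓝 0) := by simpa [hs] using h.sub_const l
  have habel : ∀ n, ∑ k ∈ range n, u k =
      A n * s n - A 0 * s 0 - ∑ k ∈ range n, s k * (A (k + 1) - A k) := by
    intro n
    induction n with
    | zero => simp
    | succ n ih =>
      have hu : u n = A (n + 1) * (s (n + 1) - s n) := by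
        have := (hpos (n + 1)).ne'
        simp only [hs, sum_range_succ]
        field_simp
        ring
      rw [sum_range_succ, ih, sum_range_succ, hu]
      ring
  have hAs : (fun n => A n * s n) =o[atTop] A := by
    simpa using (isBigO_refl A atTop).mul_isLittleO ((isLittleO_one_iff ℝ).2 hs0)
  exact ((hAs.sub (isLittleO_const_of_tendsto_atTop hAtop _)).sub
    (isLittleO_sum_mul_sub hA hAtop hs0)).congr_left fun n => (habel n).symm

lemma eq_zero_of_summable_mul_of_tendsto {γ x : ℕ → ℝ} {l : ℝ} (hγ : ¬ Summable γ)
    (hγx : Summable fun n => γ n * x n) (hx : Tendsto x atTop (𝓝 l)) : l = 0 := by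
  by_contra hl
  have h1 : (fun _ => (1 : ℝ)) =O[atTop] x :=
    (isBigO_const_left_iff_pos_le_norm one_ne_zero).2 ⟨‖l‖ / 2, by positivity,
      (hx.norm.eventually (lt_mem_nhds (half_lt_self (norm_pos_iff.2 hl)))).mono
        fun _ h => h.le⟩
  exact hγ (summable_of_isBigO_nat hγx (by simpa using (isBigO_refl γ atTop).mul h1))

lemma summable_and_tendsto_of_le_sub_add {U B C D : ℕ → ℝ} {s : ℝ} (hU : ∀ n, 0 ≤ U n)
    (hB : ∀ n, 0 ≤ B n) (hle : ∀ n, U (n + 1) ≤ U n - B n + C n + D n) (hC : Summable C)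
    (hs : Tendsto (fun n => ∑ k ∈ range n, D k) atTop (𝓝 s)) :
    Summable B ∧ ∃ l, Tendsto U atTop (𝓝 l) := by
  set Y : ℕ → ℝ := fun n =>
    U n + ∑ k ∈ range n, B k - (∑ k ∈ range n, C k + ∑ k ∈ range n, D k) with hY
  have hCD := hC.hasSum.tendsto_sum_nat.add hs
  have hanti : Antitone Y := antitone_nat_of_succ_le fun n => by
    simp only [hY, sum_range_succ]
    linarith [hle n]
  have hBpos (n : ℕ) : 0 ≤ ∑ k ∈ range n, B k := sum_nonneg fun k _ => hB k
  obtain ⟨M, hM⟩ := hCD.bddAbove_range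
  have hlim := tendsto_atTop_ciInf hanti ⟨-M, Set.forall_mem_range.2 fun n => by
    linarith [hM ⟨n, rfl⟩, hU n, hBpos n]⟩
  have hUB : Tendsto (fun n => U n + ∑ k ∈ range n, B k) atTop (𝓝 _) :=
    (hlim.add hCD).congr fun n => sub_add_cancel _ _
  obtain ⟨M', hM'⟩ := hUB.bddAbove_range
  have hBsum : Summable B := summable_of_sum_range_le hB fun n => by
    linarith [hM' ⟨n, rfl⟩, hU n]
  exact ⟨hBsum, _, (hUB.sub hBsum.hasSum.tendsto_sum_nat).congr fun n => add_sub_cancel_right _ _⟩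

/-- `1 + γ 0 + ⋯ + γ (n - 1)`, the clock in which all the sums below are measured; the summand `1`
makes it a positive denominator. -/
def cumWeight (γ : ℕ → ℝ) (n : ℕ) : ℝ := 1 + ∑ k ∈ range n, γ k

section CumWeight

variable {γ : ℕ → ℝ}

lemma cumWeight_zero (γ : ℕ → ℝ) : cumWeight γ 0 = 1 := by simp [cumWeight]

lemma cumWeight_succ (γ : ℕ → ℝ) (n : ℕ) : cumWeight γ (n + 1) = cumWeight γ n + γ n := by
  rw [cumWeight, sum_range_succ, ← add_assoc, cumWeight]

lemma monotone_cumWeight (hγ : ∀ n, 0 ≤ γ n) : Monotone (cumWeight γ) :=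
  monotone_nat_of_le_succ fun n => by linarith [cumWeight_succ γ n, hγ n]

lemma one_le_cumWeight (hγ : ∀ n, 0 ≤ γ n) (n : ℕ) : 1 ≤ cumWeight γ n :=
  (cumWeight_zero γ).symm.le.trans (monotone_cumWeight hγ n.zero_le)

lemma cumWeight_pos (hγ : ∀ n, 0 ≤ γ n) (n : ℕ) : 0 < cumWeight γ n :=
  one_pos.trans_le (one_le_cumWeight hγ n)

lemma isLittleO_sum_mul_cumWeight {θ : ℕ → ℝ} (hγ : ∀ n, 0 ≤ γ n)
    (hA : Tendsto (cumWeight γ) atTop atTop) (hθ : Tendsto θ atTop (𝓝 0)) :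
    (fun n => ∑ k ∈ range n, θ k * γ k) =o[atTop] cumWeight γ := by
  simpa [cumWeight_succ] using isLittleO_sum_mul_sub (monotone_cumWeight hγ) hA hθ

lemma isLittleO_sum_of_abs_le_mul {θ v : ℕ → ℝ} (hγ : ∀ n, 0 ≤ γ n)
    (hA : Tendsto (cumWeight γ) atTop atTop) (hθ : Tendsto θ atTop (𝓝 0))
    (hv : ∀ n, |v n| ≤ θ n * γ n) : (fun n => ∑ k ∈ range n, v k) =o[atTop] cumWeight γ :=
  (IsBigO.of_norm_le fun n => (abs_sum_le_sum_abs v (range n)).trans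
    (sum_le_sum fun k _ => hv k)).trans_isLittleO (isLittleO_sum_mul_cumWeight hγ hA hθ)

lemma not_summable_of_tendsto_cumWeight (hA : Tendsto (cumWeight γ) atTop atTop) :
    ¬ Summable γ := fun h =>
  not_tendsto_nhds_of_tendsto_atTop hA _ (h.hasSum.tendsto_sum_nat.const_add 1)

lemma tendsto_cumWeight_div_cumWeight_succ (hγ : ∀ n, 0 ≤ γ n)
    (hA : Tendsto (cumWeight γ) atTop atTop) (hγ0 : Tendsto γ atTop (𝓝 0)) :
    Tendsto (fun n => cumWeight γ n / cumWeight γ (n + 1)) atTop (𝓝 1) := by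
  have h0 : Tendsto (fun n => 1 - γ n / cumWeight γ (n + 1)) atTop (𝓝 (1 - 0)) :=
    (hγ0.div_atTop (hA.comp (tendsto_add_atTop_nat 1))).const_sub 1
  refine (sub_zero (1 : ℝ) ▸ h0).congr fun n => ?_
  have := (cumWeight_pos hγ (n + 1)).ne'
  rw [one_sub_div this, cumWeight_succ, add_sub_cancel_right]

lemma sub_one_mul_div_rpow_le {X Y r : ℝ} (hX : 0 < X) (hY : 0 < Y) (hr : 1 ≤ r) :
    (r - 1) * ((Y - X) / Y ^ r) ≤ X ^ (1 - r) - Y ^ (1 - r) := by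
  have hlog : 1 + (r - 1) * (1 - X / Y) ≤ (Y / X) ^ (r - 1) := by
    have h1 := Real.one_sub_inv_le_log_of_pos (div_pos hY hX)
    rw [Real.rpow_def_of_pos (div_pos hY hX)]
    nlinarith [Real.add_one_le_exp (Real.log (Y / X) * (r - 1)), inv_div Y X]
  have hYr : Y ^ r = Y ^ (r - 1) * Y := by
    rw [← Real.rpow_add_one hY.ne', sub_add_cancel]
  have hXr : X ^ (1 - r) = (X ^ (r - 1))⁻¹ := by rw [← Real.rpow_neg hX.le, neg_sub]
  have hYr' : Y ^ (1 - r) = (Y ^ (r - 1))⁻¹ := by rw [← Real.rpow_neg hY.le, neg_sub]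
  have hY0 : 0 < Y ^ (r - 1) := Real.rpow_pos_of_pos hY _
  rw [Real.div_rpow hY.le hX.le] at hlog
  calc (r - 1) * ((Y - X) / Y ^ r) = (r - 1) * (1 - X / Y) * (Y ^ (r - 1))⁻¹ := by
        rw [hYr]; field_simp
    _ ≤ (Y ^ (r - 1) / X ^ (r - 1) - 1) * (Y ^ (r - 1))⁻¹ := by gcongr; linarith
    _ = X ^ (1 - r) - Y ^ (1 - r) := by rw [hXr, hYr']; field_simp

lemma summable_div_cumWeight_rpow (hγ : ∀ n, 0 ≤ γ n) {r : ℝ} (hr : 1 < r) :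
    Summable fun n => γ n / cumWeight γ (n + 1) ^ r := by
  have hpos := cumWeight_pos hγ
  refine summable_of_sum_range_le (c := (r - 1)⁻¹)
    (fun n => div_nonneg (hγ n) (Real.rpow_nonneg (hpos _).le _)) fun n => ?_
  refine le_of_mul_le_mul_left ?_ (sub_pos.2 hr)
  rw [mul_inv_cancel₀ (sub_pos.2 hr).ne', mul_sum]
  calc ∑ k ∈ range n, (r - 1) * (γ k / cumWeight γ (k + 1) ^ r)
      ≤ ∑ k ∈ range n, (cumWeight γ k ^ (1 - r) - cumWeight γ (k + 1) ^ (1 - r)) :=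
        sum_le_sum fun k _ => by
          simpa [cumWeight_succ] using sub_one_mul_div_rpow_le (hpos k) (hpos (k + 1)) hr.le
    _ = 1 - cumWeight γ n ^ (1 - r) := by rw [sum_range_sub', cumWeight_zero, Real.one_rpow]
    _ ≤ 1 := by linarith [Real.rpow_nonneg (hpos n).le (1 - r)]

end CumWeight

section MartingaleDifference

variable {Ω : Type*} {m0 : MeasurableSpace Ω} {μ : Measure Ω} {F : Filtration ℕ m0}
  {D u : ℕ → Ω → ℝ}

/-- The martingale difference sequences with respect to `F`, indexed so that `D n` is the increment
between the times `n` and `n + 1`. -/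
structure IsMartingaleDifference (μ : Measure Ω) (F : Filtration ℕ m0) (D : ℕ → Ω → ℝ) :
    Prop where
  stronglyMeasurable (n : ℕ) : StronglyMeasurable[F (n + 1)] (D n)
  integrable (n : ℕ) : Integrable (D n) μ
  condExp_eq_zero (n : ℕ) : μ[D n | F n] =ᵐ[μ] 0

namespace IsMartingaleDifference

lemma add {D' : ℕ → Ω → ℝ} (hD : IsMartingaleDifference μ F D)
    (hD' : IsMartingaleDifference μ F D') : IsMartingaleDifference μ F fun n => D n + D' n where
  stronglyMeasurable n := (hD.stronglyMeasurable n).add (hD'.stronglyMeasurable n)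
  integrable n := (hD.integrable n).add (hD'.integrable n)
  condExp_eq_zero n := by
    filter_upwards [condExp_add (hD.integrable n) (hD'.integrable n) (F n),
      hD.condExp_eq_zero n, hD'.condExp_eq_zero n] with ω h h₁ h₂
    simp [h, h₁, h₂]

lemma stronglyMeasurable_sum (hD : IsMartingaleDifference μ F D) (n : ℕ) :
    StronglyMeasurable[F n] fun ω => ∑ k ∈ range n, D k ω :=
  Finset.stronglyMeasurable_fun_sum _ fun k hk =>
    (hD.stronglyMeasurable k).mono (F.mono (mem_range.1 hk))

lemma integrable_sum (hD : IsMartingaleDifference μ F D) (n : ℕ) :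
    Integrable (fun ω => ∑ k ∈ range n, D k ω) μ :=
  integrable_finsetSum _ fun k _ => hD.integrable k

variable [IsFiniteMeasure μ]

lemma bdd_mul (hD : IsMartingaleDifference μ F D) (hu : ∀ n, StronglyMeasurable[F n] (u n)) {C : ℝ}
    (hC : ∀ n ω, |u n ω| ≤ C) : IsMartingaleDifference μ F fun n => u n * D n where
  stronglyMeasurable n := ((hu n).mono (F.mono n.le_succ)).mul (hD.stronglyMeasurable n)
  integrable n := (hD.integrable n).bdd_mul ((hu n).mono (F.le n)).aestronglyMeasurable
    (ae_of_all μ (hC n))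
  condExp_eq_zero n := by
    filter_upwards [condExp_stronglyMeasurable_mul_of_bound (F.le n) (hu n) (hD.integrable n) C
      (ae_of_all μ (hC n)), hD.condExp_eq_zero n] with ω h h₀
    simp [h, h₀]

lemma martingale_sum (hD : IsMartingaleDifference μ F D) :
    Martingale (fun n ω => ∑ k ∈ range n, D k ω) F μ :=
  martingale_of_condExp_sub_eq_zero_nat hD.stronglyMeasurable_sum hD.integrable_sum fun n => by
    have h : (fun ω => ∑ k ∈ range (n + 1), D k ω) - (fun ω => ∑ k ∈ range n, D k ω) = D n := by
      ext ω; simp [sum_range_succ]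
    rw [h]
    exact hD.condExp_eq_zero n

lemma integral_sum (hD : IsMartingaleDifference μ F D) (n : ℕ) :
    ∫ ω, ∑ k ∈ range n, D k ω ∂μ = 0 := by
  simpa using (hD.martingale_sum.setIntegral_eq n.zero_le .univ).symm

lemma ae_tendsto_sum_of_neg_const_le (hD : IsMartingaleDifference μ F D) {K : ℝ}
    (hK : ∀ᵐ ω ∂μ, ∀ n, -K ≤ ∑ k ∈ range n, D k ω) :
    ∀ᵐ ω ∂μ, ∃ l, Tendsto (fun n => ∑ k ∈ range n, D k ω) atTop (𝓝 l) := by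
  refine hD.martingale_sum.submartingale.exists_ae_tendsto_of_bdd
    (R := (μ.real .univ * (2 * K)).toNNReal) fun n => ?_
  rw [eLpNorm_one_eq_lintegral_enorm,
    ← ofReal_integral_norm_eq_lintegral_enorm (hD.integrable_sum n)]
  refine ENNReal.ofReal_le_ofReal ?_
  calc ∫ ω, ‖∑ k ∈ range n, D k ω‖ ∂μ ≤ ∫ ω, (∑ k ∈ range n, D k ω + 2 * K) ∂μ := by
        refine integral_mono_ae (hD.integrable_sum n).norm
          ((hD.integrable_sum n).add (integrable_const _)) ?_
        filter_upwards [hK] with ω h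
        have h0 : -K ≤ 0 := by simpa using h 0
        exact abs_le.2 ⟨by linarith [h n], by linarith⟩
    _ = μ.real .univ * (2 * K) := by
        rw [integral_add (hD.integrable_sum n) (integrable_const _), hD.integral_sum]
        simp

lemma ae_tendsto_sum_of_neg_le {Z : ℕ → Ω → ℝ} (hD : IsMartingaleDifference μ F D)
    (hZ : ∀ n, StronglyMeasurable[F n] (Z n)) (hmono : ∀ᵐ ω ∂μ, Monotone fun n => Z n ω)
    (hle : ∀ᵐ ω ∂μ, ∀ n, -Z n ω ≤ ∑ k ∈ range (n + 1), D k ω)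
    (hbdd : ∀ᵐ ω ∂μ, BddAbove (Set.range fun n => Z n ω)) :
    ∀ᵐ ω ∂μ, ∃ l, Tendsto (fun n => ∑ k ∈ range n, D k ω) atTop (𝓝 l) := by
  set v : ℕ → ℕ → Ω → ℝ := fun K n => {ω | Z n ω ≤ K}.indicator 1 with hv
  have hmds (K : ℕ) : IsMartingaleDifference μ F fun n => v K n * D n := by
    refine hD.bdd_mul (C := 1) (fun n => stronglyMeasurable_one.indicator
      ((hZ n).measurable measurableSet_Iic)) fun n ω => ?_
    simp only [hv, Set.indicator]
    split_ifs <;> simp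
  have hsum {ω : Ω} {K n : ℕ} (hω : Monotone fun n => Z n ω) (h : Z n ω ≤ K) :
      ∑ k ∈ range (n + 1), (v K k * D k) ω = ∑ k ∈ range (n + 1), D k ω :=
    sum_congr rfl fun k hk => by
      simp [hv, (hω (Nat.lt_succ_iff.1 (mem_range.1 hk))).trans h]
  have hbelow (K : ℕ) : ∀ᵐ ω ∂μ, ∀ n, -(K : ℝ) ≤ ∑ k ∈ range n, (v K k * D k) ω := by
    filter_upwards [hmono, hle] with ω hω hleω n
    induction n with
    | zero => simp
    | succ n ih =>
      by_cases h : Z n ω ≤ K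
      · rw [hsum hω h]
        linarith [hleω n]
      · simpa [sum_range_succ, hv, h] using ih
  filter_upwards [ae_all_iff.2 fun K : ℕ => (hmds K).ae_tendsto_sum_of_neg_const_le (hbelow K),
    hmono, hbdd] with ω hconv hω ⟨C, hC⟩
  obtain ⟨K, hK⟩ := exists_nat_ge C
  obtain ⟨l, hl⟩ := hconv K
  refine ⟨l, (tendsto_add_atTop_iff_nat 1).1 ?_⟩
  exact ((tendsto_add_atTop_iff_nat 1).2 hl).congr fun n =>
    hsum hω ((hC ⟨n, rfl⟩).trans hK)

/-- The Robbins-Siegmund theorem. -/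
theorem ae_summable_and_tendsto_of_le {U B C : ℕ → Ω → ℝ} (hD : IsMartingaleDifference μ F D)
    (hU₀ : StronglyMeasurable[F 0] (U 0)) (hCm : ∀ n, StronglyMeasurable[F n] (C n))
    (hU : ∀ n ω, 0 ≤ U n ω) (hB : ∀ n ω, 0 ≤ B n ω) (hC : ∀ᵐ ω ∂μ, ∀ n, 0 ≤ C n ω)
    (hle : ∀ᵐ ω ∂μ, ∀ n, U (n + 1) ω ≤ U n ω - B n ω + C n ω + D n ω)
    (hsum : ∀ᵐ ω ∂μ, Summable fun n => C n ω) :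
    ∀ᵐ ω ∂μ, Summable (fun n => B n ω) ∧ ∃ l, Tendsto (fun n => U n ω) atTop (𝓝 l) := by
  have hD' : ∀ᵐ ω ∂μ, ∃ l, Tendsto (fun n => ∑ k ∈ range n, D k ω) atTop (𝓝 l) := by
    refine hD.ae_tendsto_sum_of_neg_le (Z := fun n ω => U 0 ω + ∑ k ∈ range (n + 1), C k ω)
      (fun n => (hU₀.mono (F.mono n.zero_le)).add (Finset.stronglyMeasurable_fun_sum _ fun k hk =>
        (hCm k).mono (F.mono (Nat.lt_succ_iff.1 (mem_range.1 hk))))) ?_ ?_ ?_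
    · filter_upwards [hC] with ω h
      exact monotone_nat_of_le_succ fun n => by simp [sum_range_succ _ (n + 1), h]
    · filter_upwards [hle] with ω h n
      have hrec : ∀ n, U n ω ≤ U 0 ω + ∑ k ∈ range n, C k ω + ∑ k ∈ range n, D k ω := by
        intro n
        induction n with
        | zero => simp
        | succ n ih => simp only [sum_range_succ]; linarith [h n, hB n ω]
      linarith [hrec (n + 1), hU (n + 1) ω]
    · filter_upwards [hC, hsum] with ω h₀ h
      exact ⟨U 0 ω + ∑' k, C k ω, Set.forall_mem_range.2 fun n => by
        gcongr; exact h.sum_le_tsum _ fun k _ => h₀ k⟩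
  filter_upwards [hD', hle, hsum] with ω ⟨s, hs⟩ h hCω
  exact summable_and_tendsto_of_le_sub_add (fun n => hU n ω) (fun n => hB n ω) h hCω hs

end IsMartingaleDifference

variable [IsFiniteMeasure μ]

lemma isMartingaleDifference_sub_condExp {ξ : ℕ → Ω → ℝ}
    (hξ : ∀ n, StronglyMeasurable[F (n + 1)] (ξ n)) (hint : ∀ n, Integrable (ξ n) μ) :
    IsMartingaleDifference μ F fun n => ξ n - μ[ξ n | F n] where
  stronglyMeasurable n := (hξ n).sub (stronglyMeasurable_condExp.mono (F.mono n.le_succ))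
  integrable n := (hint n).sub integrable_condExp
  condExp_eq_zero n := by
    refine (condExp_sub (hint n) integrable_condExp (F n)).trans ?_
    rw [condExp_of_stronglyMeasurable (F.le n) stronglyMeasurable_condExp integrable_condExp,
      sub_self]

end MartingaleDifference

section Transform

variable {Ω : Type*} {m0 : MeasurableSpace Ω} {μ : Measure Ω} {F : Filtration ℕ m0}
  {D u ξ : ℕ → Ω → ℝ} {r : ℝ}

lemma stronglyMeasurable_abs_rpow {_ : MeasurableSpace Ω} {f : Ω → ℝ} (hf : StronglyMeasurable f)
    (r : ℝ) : StronglyMeasurable fun ω => |f ω| ^ r :=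
  (hf.measurable.abs.pow_const r).stronglyMeasurable

namespace IsMartingaleDifference

variable [IsFiniteMeasure μ]

lemma smoothAbs_noise (hD : IsMartingaleDifference μ F D) (hr : 0 ≤ r)
    (hint : ∀ n, Integrable (fun ω => |D n ω| ^ r) μ)
    (hu : ∀ n, StronglyMeasurable[F n] (u n)) (hu1 : ∀ n ω, |u n ω| ≤ 1) {S : ℕ → Ω → ℝ}
    (hS : ∀ n, StronglyMeasurable[F n] (S n)) :
    IsMartingaleDifference μ F fun n =>
      (fun ω => S n ω / smoothAbs (S n ω) * u n ω) * D n +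
      (fun ω => 2 * |u n ω| ^ r) * ((fun ω => |D n ω| ^ r) - μ[fun ω => |D n ω| ^ r | F n]) := by
  refine (hD.bdd_mul (C := 1) (fun n => ?_) fun n ω => ?_).add
    ((isMartingaleDifference_sub_condExp (fun n => stronglyMeasurable_abs_rpow
      (hD.stronglyMeasurable n) r) hint).bdd_mul (C := 2) (fun n => ?_) fun n ω => ?_)
  · exact (continuous_div_smoothAbs.comp_stronglyMeasurable (hS n)).mul (hu n)
  · rw [abs_mul]
    exact mul_le_one₀ (abs_div_smoothAbs_le_one _) (abs_nonneg _) (hu1 n ω)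
  · exact (stronglyMeasurable_abs_rpow (hu n) r).const_mul 2
  · rw [abs_of_nonneg (by positivity)]
    linarith [Real.rpow_le_one (abs_nonneg (u n ω)) (hu1 n ω) hr]

lemma ae_tendsto_smoothAbs_add_sum_mul (hD : IsMartingaleDifference μ F D) (h1r : 1 ≤ r)
    (hr2 : r ≤ 2) (hint : ∀ n, Integrable (fun ω => |D n ω| ^ r) μ)
    (hmom : ∀ᵐ ω ∂μ, ∃ C, ∀ n, μ[fun ω => |D n ω| ^ r | F n] ω ≤ C)
    (hu : ∀ n, StronglyMeasurable[F n] (u n)) (hu1 : ∀ n ω, |u n ω| ≤ 1)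
    (hsum : ∀ᵐ ω ∂μ, Summable fun n => |u n ω| ^ r) (x : ℝ) :
    ∀ᵐ ω ∂μ, ∃ l,
      Tendsto (fun n => smoothAbs (x + ∑ k ∈ range n, u k ω * D k ω)) atTop (𝓝 l) := by
  set κ : ℕ → Ω → ℝ := fun n => μ[fun ω => |D n ω| ^ r | F n]
  set S : ℕ → Ω → ℝ := fun n ω => x + ∑ k ∈ range n, u k ω * D k ω
  have hur (n : ℕ) : StronglyMeasurable[F n] fun ω => 2 * |u n ω| ^ r :=
    (stronglyMeasurable_abs_rpow (hu n) r).const_mul 2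
  have hS (n : ℕ) : StronglyMeasurable[F n] (S n) :=
    stronglyMeasurable_const.add ((hD.bdd_mul hu hu1).stronglyMeasurable_sum n)
  have hκ : ∀ᵐ ω ∂μ, ∀ n, 0 ≤ κ n ω := ae_all_iff.2 fun n =>
    condExp_nonneg (ae_of_all μ fun ω => by positivity)
  refine ((hD.smoothAbs_noise (by linarith) hint hu hu1 hS).ae_summable_and_tendsto_of_le
    (U := fun n ω => smoothAbs (S n ω)) (B := fun _ _ => 0)
    (C := fun n ω => 2 * |u n ω| ^ r * κ n ω) ?_
    (fun n => (hur n).mul stronglyMeasurable_condExp)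
    (fun n ω => zero_le_one.trans (one_le_smoothAbs _)) (fun _ _ => le_rfl) ?_ ?_ ?_).mono
      fun ω h => h.2
  · simpa [S] using stronglyMeasurable_const
  · filter_upwards [hκ] with ω h n using mul_nonneg (by positivity) (h n)
  · refine ae_of_all μ fun ω n => ?_
    have h := smoothAbs_add_le_rpow h1r hr2 (S n ω) (u n ω * D n ω)
    rw [abs_mul, Real.mul_rpow (abs_nonneg _) (abs_nonneg _)] at h
    simp only [S, sum_range_succ, ← add_assoc, Pi.add_apply, Pi.mul_apply, Pi.sub_apply] at h ⊢
    linarith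
  · filter_upwards [hsum, hκ, hmom] with ω h h₀ ⟨C, hC⟩
    refine .of_nonneg_of_le (fun n => mul_nonneg (by positivity) (h₀ n)) (fun n => ?_)
      ((h.mul_left 2).mul_right C)
    gcongr
    exact hC n

lemma ae_tendsto_sum_mul_of_abs_le_one (hD : IsMartingaleDifference μ F D) (h1r : 1 ≤ r)
    (hr2 : r ≤ 2) (hint : ∀ n, Integrable (fun ω => |D n ω| ^ r) μ)
    (hmom : ∀ᵐ ω ∂μ, ∃ C, ∀ n, μ[fun ω => |D n ω| ^ r | F n] ω ≤ C)
    (hu : ∀ n, StronglyMeasurable[F n] (u n)) (hu1 : ∀ n ω, |u n ω| ≤ 1)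
    (hsum : ∀ᵐ ω ∂μ, Summable fun n => |u n ω| ^ r) :
    ∀ᵐ ω ∂μ, ∃ l, Tendsto (fun n => ∑ k ∈ range n, u k ω * D k ω) atTop (𝓝 l) := by
  filter_upwards [hD.ae_tendsto_smoothAbs_add_sum_mul h1r hr2 hint hmom hu hu1 hsum 0,
    hD.ae_tendsto_smoothAbs_add_sum_mul h1r hr2 hint hmom hu hu1 hsum 1] with ω ⟨l, hl⟩ ⟨l', hl'⟩
  -- `S` is recovered from `smoothAbs S ^ 2 = 1 + S ^ 2` and `smoothAbs (1 + S) ^ 2`.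
  refine ⟨_, ((((hl'.pow 2).sub (hl.pow 2)).sub_const 1).div_const 2).congr fun n => ?_⟩
  rw [sq_smoothAbs, sq_smoothAbs]
  ring

/-- Chow's local convergence theorem for martingale transforms. -/
theorem ae_tendsto_sum_mul (hD : IsMartingaleDifference μ F D) (h1r : 1 ≤ r)
    (hr2 : r ≤ 2) (hint : ∀ n, Integrable (fun ω => |D n ω| ^ r) μ)
    (hmom : ∀ᵐ ω ∂μ, ∃ C, ∀ n, μ[fun ω => |D n ω| ^ r | F n] ω ≤ C)
    (hu : ∀ n, StronglyMeasurable[F n] (u n))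
    (hsum : ∀ᵐ ω ∂μ, Summable fun n => |u n ω| ^ r) :
    ∀ᵐ ω ∂μ, ∃ l, Tendsto (fun n => ∑ k ∈ range n, u k ω * D k ω) atTop (𝓝 l) := by
  set v : ℕ → Ω → ℝ := fun n => {ω | |u n ω| ≤ 1}.indicator (u n) with hv
  have hvm (n : ℕ) : StronglyMeasurable[F n] (v n) :=
    (hu n).indicator ((hu n).norm.measurable measurableSet_Iic)
  have hv1 (n : ℕ) (ω : Ω) : |v n ω| ≤ 1 := by
    by_cases h : |u n ω| ≤ 1 <;> simp [hv, h]
  have hvu (n : ℕ) (ω : Ω) : |v n ω| ≤ |u n ω| := by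
    by_cases h : |u n ω| ≤ 1 <;> simp [hv, h]
  have hvsum : ∀ᵐ ω ∂μ, Summable fun n => |v n ω| ^ r := by
    filter_upwards [hsum] with ω h
    exact h.of_nonneg_of_le (fun n => by positivity) fun n =>
      Real.rpow_le_rpow (abs_nonneg _) (hvu n ω) (by linarith)
  filter_upwards [hsum, hD.ae_tendsto_sum_mul_of_abs_le_one h1r hr2 hint hmom hvm hv1 hvsum]
    with ω hω ⟨l, hl⟩
  obtain ⟨N, hN⟩ : ∃ N, ∀ n ≥ N, |u n ω| ≤ 1 := by
    refine eventually_atTop.1 ((hω.tendsto_atTop_zero.eventually_lt_const one_pos).mono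
      fun n h => ?_)
    exact ((Real.rpow_lt_one_iff' (abs_nonneg _) (by linarith)).1 h).le
  have hconst (n : ℕ) (hn : N ≤ n) : ∑ k ∈ range n, u k ω * D k ω =
      ∑ k ∈ range n, v k ω * D k ω + ∑ k ∈ range N, (u k ω - v k ω) * D k ω := by
    rw [← sub_eq_iff_eq_add', ← sum_sub_distrib, ← sum_subset (range_mono hn) fun k _ hk => ?_]
    · simp only [sub_mul]
    · simp [hv, hN k (not_lt.1 (mt mem_range.2 hk))]
  exact ⟨_, (hl.add_const _).congr' (eventually_atTop.2 ⟨N, fun n hn => (hconst n hn).symm⟩)⟩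

end IsMartingaleDifference

end Transform

section CenteredMoments

variable {r : ℝ}

lemma convexOn_abs_rpow (hr : 1 ≤ r) : ConvexOn ℝ Set.univ fun x : ℝ => |x| ^ r := by
  refine ⟨convex_univ, fun x _ y _ s t hs ht hst => ?_⟩
  calc |s • x + t • y| ^ r ≤ (s • |x| + t • |y|) ^ r := by
        refine Real.rpow_le_rpow (abs_nonneg _) ?_ (by linarith)
        exact convexOn_univ_norm.2 (Set.mem_univ x) (Set.mem_univ y) hs ht hst
    _ ≤ s • |x| ^ r + t • |y| ^ r :=
        (convexOn_rpow hr).2 (abs_nonneg x) (abs_nonneg y) hs ht hst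

lemma abs_sub_rpow_le (hr : 1 ≤ r) (x y : ℝ) :
    |x - y| ^ r ≤ 2 ^ r / 2 * (|x| ^ r + |y| ^ r) := by
  have h := (convexOn_abs_rpow hr).2 (Set.mem_univ (2 * x)) (Set.mem_univ (-(2 * y)))
    (one_half_pos (α := ℝ)).le one_half_pos.le (add_halves 1)
  have hmid : 1 / 2 * (2 * x) + 1 / 2 * -(2 * y) = x - y := by ring
  simp only [smul_eq_mul, hmid, abs_neg, abs_mul, abs_two,
    Real.mul_rpow zero_le_two (abs_nonneg _)] at h
  linarith

variable {Ω : Type*} {m m0 : MeasurableSpace Ω} {μ : Measure Ω} [IsFiniteMeasure μ] {ξ : Ω → ℝ}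

lemma condExp_abs_sub_condExp_rpow_le (hm : m ≤ m0) (hr : 1 ≤ r) (hξ : Integrable ξ μ)
    (hξr : Integrable (fun ω => |ξ ω| ^ r) μ) :
    Integrable (fun ω => |ξ ω - μ[ξ | m] ω| ^ r) μ ∧
      μ[fun ω => |ξ ω - μ[ξ | m] ω| ^ r | m] ≤ᵐ[μ]
        fun ω => 2 ^ r * μ[fun ω => |ξ ω| ^ r | m] ω := by
  set c := μ[ξ | m]
  have hrpos : 0 < r := by linarith
  have hmem {f : Ω → ℝ} (hf : Integrable f μ) :
      Integrable (fun ω => |f ω| ^ r) μ ↔ MemLp f (ENNReal.ofReal r) μ := by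
    simpa [ENNReal.toReal_ofReal hrpos.le] using
      integrable_norm_rpow_iff hf.1 (ENNReal.ofReal_pos.2 hrpos).ne' ENNReal.ofReal_ne_top
  have hc : MemLp c (ENNReal.ofReal r) μ :=
    ((hmem hξ).1 hξr).condExp (ENNReal.one_le_ofReal.2 hr)
  have hcr := (hmem integrable_condExp).2 hc
  have hsub : Integrable (fun ω => |ξ ω - c ω| ^ r) μ :=
    (hmem (hξ.sub integrable_condExp)).2 (((hmem hξ).1 hξr).sub hc)
  have hjensen : (fun ω => |c ω| ^ r) ≤ᵐ[μ] μ[fun ω => |ξ ω| ^ r | m] :=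
    (convexOn_abs_rpow hr).map_condExp_le_univ hm
      (continuous_abs.rpow_const fun _ => .inr hrpos.le).lowerSemicontinuous hξ hξr
  have hsplit : μ[fun ω => 2 ^ r / 2 * (|ξ ω| ^ r + |c ω| ^ r) | m] =ᵐ[μ]
      fun ω => 2 ^ r / 2 * (μ[fun ω => |ξ ω| ^ r | m] ω + |c ω| ^ r) := by
    filter_upwards [condExp_smul (2 ^ r / 2 : ℝ) (fun ω => |ξ ω| ^ r + |c ω| ^ r) m,
      condExp_add hξr hcr m] with ω h₁ h₂
    rw [condExp_of_stronglyMeasurable hm (stronglyMeasurable_abs_rpow stronglyMeasurable_condExp r)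
      hcr] at h₂
    exact h₁.trans (congrArg (2 ^ r / 2 * ·) h₂)
  refine ⟨hsub, ?_⟩
  filter_upwards [hjensen, hsplit, condExp_mono hsub ((hξr.add hcr).const_mul (2 ^ r / 2))
    (ae_of_all μ fun ω => abs_sub_rpow_le hr _ _)] with ω h₁ h₂ h₃
  refine (h₃.trans_eq h₂).trans ?_
  nlinarith [Real.rpow_pos_of_pos two_pos r]

end CenteredMoments

section Noise

variable {Ω : Type*} {m0 : MeasurableSpace Ω} {μ : Measure Ω} {F : Filtration ℕ m0}
  {ε : ℕ → Ω → ℝ} {σ a r s : ℝ}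

/-- Martingale difference sequences with constant conditional variance `σ²` and almost surely
bounded conditional moments of order `a`. -/
structure IsNoise (μ : Measure Ω) (F : Filtration ℕ m0) (ε : ℕ → Ω → ℝ) (σ a : ℝ) : Prop where
  isMartingaleDifference : IsMartingaleDifference μ F ε
  condExp_sq (n : ℕ) : μ[fun ω => ε n ω ^ 2 | F n] =ᵐ[μ] fun _ => σ ^ 2
  integrable_abs_rpow (n : ℕ) : Integrable (fun ω => |ε n ω| ^ a) μ
  ae_exists_condExp_le : ∀ᵐ ω ∂μ, ∃ C, ∀ n, μ[fun ω => |ε n ω| ^ a | F n] ω ≤ C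

lemma stronglyMeasurable_cumWeight {w : ℕ → Ω → ℝ} (hw : ∀ n, StronglyMeasurable[F n] (w n))
    {n l : ℕ} (hn : n ≤ l + 1) : StronglyMeasurable[F l] fun ω => cumWeight (w · ω) n :=
  stronglyMeasurable_const.add (Finset.stronglyMeasurable_fun_sum _ fun k hk =>
    (hw k).mono (F.mono (Nat.lt_succ_iff.1 ((mem_range.1 hk).trans_le hn))))

namespace IsNoise

variable [IsFiniteMeasure μ]

lemma integrable_abs_rpow_of_le (hε : IsNoise μ F ε σ a) (hs : 0 ≤ s) (hsa : s ≤ a) (n : ℕ) :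
    Integrable (fun ω => |ε n ω| ^ s) μ :=
  ((integrable_const 1).add (hε.integrable_abs_rpow n)).mono' (stronglyMeasurable_abs_rpow
    ((hε.isMartingaleDifference.stronglyMeasurable n).mono (F.le _)) s).aestronglyMeasurable
    (ae_of_all μ fun ω => by
      rw [Real.norm_of_nonneg (by positivity)]
      exact rpow_le_one_add_rpow (abs_nonneg _) hs hsa)

lemma ae_exists_condExp_le_of_le (hε : IsNoise μ F ε σ a) (hs : 0 ≤ s) (hsa : s ≤ a) :
    ∀ᵐ ω ∂μ, ∃ C, ∀ n, μ[fun ω => |ε n ω| ^ s | F n] ω ≤ C := by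
  have hle (n : ℕ) : μ[fun ω => |ε n ω| ^ s | F n] ≤ᵐ[μ]
      fun ω => 1 + μ[fun ω => |ε n ω| ^ a | F n] ω := by
    have h := condExp_mono (m := F n) (hε.integrable_abs_rpow_of_le hs hsa n)
      ((integrable_const 1).add (hε.integrable_abs_rpow n))
      (ae_of_all μ fun ω => rpow_le_one_add_rpow (abs_nonneg (ε n ω)) hs hsa)
    filter_upwards [h, condExp_add (integrable_const (1 : ℝ)) (hε.integrable_abs_rpow n) (F n)]
      with ω h₁ h₂
    simpa [h₂, condExp_const (F.le n)] using h₁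
  filter_upwards [ae_all_iff.2 hle, hε.ae_exists_condExp_le] with ω h ⟨C, hC⟩
  exact ⟨1 + C, fun n => (h n).trans (by gcongr; exact hC n)⟩

lemma integrable_pow (hε : IsNoise μ F ε σ a) {j : ℕ} (hj : j ≤ a) (n : ℕ) :
    Integrable (fun ω => ε n ω ^ j) μ :=
  (hε.integrable_abs_rpow_of_le j.cast_nonneg hj n).mono
    (((hε.isMartingaleDifference.stronglyMeasurable n).pow j).mono (F.le _)).aestronglyMeasurable
    (ae_of_all μ fun ω => by simp)

lemma ae_exists_abs_condExp_pow_le (hε : IsNoise μ F ε σ a) {j : ℕ} (hj : j ≤ a) :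
    ∀ᵐ ω ∂μ, ∃ C, ∀ n, |μ[fun ω => ε n ω ^ j | F n] ω| ≤ C := by
  have habs (n : ℕ) : (fun ω => |μ[fun ω => ε n ω ^ j | F n] ω|) ≤ᵐ[μ]
      μ[fun ω => |ε n ω| ^ (j : ℝ) | F n] := by
    simpa [Function.comp_def] using convexOn_univ_norm.map_condExp_le_univ (F.le n)
      continuous_norm.lowerSemicontinuous (hε.integrable_pow hj n) (hε.integrable_pow hj n).norm
  filter_upwards [ae_all_iff.2 habs, hε.ae_exists_condExp_le_of_le j.cast_nonneg hj]
    with ω h ⟨C, hC⟩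
  exact ⟨C, fun n => (h n).trans (hC n)⟩

lemma isLittleO_sum_mul_pow_sub_condExp (hε : IsNoise μ F ε σ a) (h1r : 1 ≤ r) (hr2 : r ≤ 2)
    {j : ℕ} (hj : j * r ≤ a) {w u : ℕ → Ω → ℝ} (hw : ∀ n, StronglyMeasurable[F n] (w n))
    (hw0 : ∀ n ω, 0 ≤ w n ω) (hu : ∀ n, StronglyMeasurable[F n] (u n))
    (hwtop : ∀ᵐ ω ∂μ, Tendsto (cumWeight (w · ω)) atTop atTop)
    (hsum : ∀ᵐ ω ∂μ, Summable fun n => |u n ω / cumWeight (w · ω) (n + 1)| ^ r) :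
    ∀ᵐ ω ∂μ, (fun n => ∑ k ∈ range n,
        u k ω * (ε k ω ^ j - μ[fun ω => ε k ω ^ j | F k] ω))
      =o[atTop] cumWeight (w · ω) := by
  have hpow (n : ℕ) : (fun ω => |ε n ω ^ j| ^ r) = fun ω => |ε n ω| ^ (j * r) := by
    ext ω
    rw [abs_pow, ← Real.rpow_natCast, ← Real.rpow_mul (abs_nonneg _)]
  have hm (n : ℕ) : StronglyMeasurable[F (n + 1)] fun ω => ε n ω ^ j :=
    (hε.isMartingaleDifference.stronglyMeasurable n).pow j
  have hint := hε.integrable_pow ((le_mul_of_one_le_right j.cast_nonneg h1r).trans hj)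
  have hintr (n : ℕ) : Integrable (fun ω => |ε n ω ^ j| ^ r) μ := by
    rw [hpow]
    exact hε.integrable_abs_rpow_of_le (by positivity) hj n
  have hcent (n : ℕ) := condExp_abs_sub_condExp_rpow_le (F.le n) h1r (hint n) (hintr n)
  have hbdd : ∀ᵐ ω ∂μ, ∃ C, ∀ n,
      μ[fun ω => |ε n ω ^ j - μ[fun ω => ε n ω ^ j | F n] ω| ^ r | F n] ω ≤ C := by
    filter_upwards [ae_all_iff.2 fun n => (hcent n).2,
      hε.ae_exists_condExp_le_of_le (s := j * r) (by positivity) hj] with ω h ⟨C, hC⟩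
    refine ⟨2 ^ r * C, fun n => (h n).trans ?_⟩
    gcongr
    rw [hpow]
    exact hC n
  filter_upwards [hwtop, (isMartingaleDifference_sub_condExp hm hint).ae_tendsto_sum_mul h1r hr2
    (fun n => (hcent n).1) hbdd (fun n => (hu n).div (stronglyMeasurable_cumWeight hw le_rfl)) hsum]
    with ω htop ⟨l, hl⟩
  refine isLittleO_sum_of_tendsto_sum_div (l := l) (monotone_cumWeight fun n => hw0 n ω)
    (cumWeight_pos fun n => hw0 n ω) htop (hl.congr fun n => sum_congr rfl fun k _ => ?_)
  exact (div_mul_eq_mul_div _ _ _)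

end IsNoise

end Noise

section Growth

lemma exists_rpow_energy_step_le {t a : ℝ} (ht : 1 < t) (hta : 2 * t ≤ a) :
    ∃ C, 0 ≤ C ∧ ∀ γ m b x : ℝ, 0 ≤ γ → γ ≤ 1 → 0 ≤ m → b ^ 2 ≤ (1 - γ) * m * γ →
      ((1 - γ) * m + 2 * b * x + γ * x ^ 2) ^ t ≤ (1 - γ) * m ^ t +
        2 * t * b * ((1 - γ) * m) ^ (t - 1) * x + C * γ * (m ^ (t - 1) + 1) * (1 + |x| ^ a) := by
  obtain ⟨C, hC, h⟩ := exists_rpow_two_mul_add_le ht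
  refine ⟨C, hC, fun γ m b x hγ0 hγ1 hm hb => ?_⟩
  have hγ : 0 ≤ 1 - γ := sub_nonneg.2 hγ1
  have hV : 0 ≤ (1 - γ) * m := mul_nonneg hγ hm
  have hVm : (1 - γ) * m ≤ m := mul_le_of_le_one_left hm (by linarith)
  have hpow : ((1 - γ) * m) ^ t ≤ (1 - γ) * m ^ t := by
    rw [Real.mul_rpow hγ hm]
    gcongr
    exact Real.rpow_le_self_of_le_one hγ (by linarith) ht.le
  have hx2 : x ^ 2 ≤ 1 + |x| ^ a := by
    have := rpow_le_one_add_rpow (abs_nonneg x) zero_le_two (show (2 : ℝ) ≤ a by linarith)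
    rwa [Real.rpow_two, sq_abs] at this
  have hxt : (γ * x ^ 2) ^ t ≤ γ * (1 + |x| ^ a) := by
    rw [Real.mul_rpow hγ0 (sq_nonneg x), ← sq_abs, ← Real.rpow_two, ← Real.rpow_mul (abs_nonneg x)]
    exact mul_le_mul (Real.rpow_le_self_of_le_one hγ0 hγ1 ht.le)
      (rpow_le_one_add_rpow (abs_nonneg x) (by linarith) hta) (by positivity) hγ0
  have hVt : ((1 - γ) * m) ^ (t - 1) ≤ m ^ (t - 1) := Real.rpow_le_rpow hV hVm (by linarith)
  calc ((1 - γ) * m + 2 * b * x + γ * x ^ 2) ^ t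
      = ((1 - γ) * m + 2 * (b * x) + γ * x ^ 2) ^ t := by rw [mul_assoc 2 b]
    _ ≤ ((1 - γ) * m) ^ t + 2 * t * (b * x) * ((1 - γ) * m) ^ (t - 1) +
          C * (((1 - γ) * m) ^ (t - 1) * (γ * x ^ 2) + (γ * x ^ 2) ^ t) :=
        h _ _ _ hV (by positivity) (by nlinarith [mul_le_mul_of_nonneg_right hb (sq_nonneg x)])
    _ ≤ (1 - γ) * m ^ t + 2 * t * (b * x) * ((1 - γ) * m) ^ (t - 1) +
          C * (m ^ (t - 1) * (γ * (1 + |x| ^ a)) + γ * (1 + |x| ^ a)) := by gcongr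
    _ = _ := by ring

lemma mul_rpow_sub_one_add_one_le {c y t : ℝ} (hc : 0 ≤ c) (hy : 0 ≤ y) (ht : 1 < t) :
    c * (y ^ (t - 1) + 1) ≤ y ^ t / 2 + c * ((2 * (c + 1)) ^ (t - 1) + 1) := by
  have h := rpow_sub_one_le_mul_rpow_add hy (inv_pos.2 (by linarith : 0 < 2 * (c + 1))) ht
  rw [inv_inv] at h
  have hδ : c * ((2 * (c + 1))⁻¹ * y ^ t) ≤ y ^ t / 2 := by
    rw [← mul_assoc, div_eq_inv_mul]
    gcongr
    rw [← div_eq_mul_inv, div_le_iff₀ (by linarith)]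
    linarith
  nlinarith [mul_le_mul_of_nonneg_left h hc]

lemma log_one_add_le {X Y : ℝ} (hX : 0 ≤ X) (hY : 0 ≤ Y) :
    Real.log (1 + Y) ≤ Real.log (1 + X) + (Y - X) / (1 + X) := by
  have h := Real.log_le_sub_one_of_pos (show 0 < (1 + Y) / (1 + X) by positivity)
  rw [Real.log_div (by positivity) (by positivity)] at h
  have : (1 + Y) / (1 + X) - 1 = (Y - X) / (1 + X) := by field_simp; ring
  linarith

lemma energy_step_nonneg {γ m b : ℝ} (hγ0 : 0 ≤ γ) (hγ1 : γ ≤ 1) (hm : 0 ≤ m)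
    (hb : b ^ 2 ≤ (1 - γ) * m * γ) (x : ℝ) : 0 ≤ (1 - γ) * m + 2 * b * x + γ * x ^ 2 := by
  have := two_mul_abs_le_add_of_sq_le_mul (mul_nonneg (sub_nonneg.2 hγ1) hm)
    (mul_nonneg hγ0 (sq_nonneg x)) (B := b * x)
    (by nlinarith [mul_le_mul_of_nonneg_right hb (sq_nonneg x)])
  linarith [neg_abs_le (b * x)]

lemma exists_log_energy_step_le {t a r : ℝ} (ht : 1 < t) (hta : 2 * t ≤ a) (hr : 0 ≤ r) :
    ∃ C, 0 ≤ C ∧ ∀ γ m b x κ A : ℝ, 0 ≤ γ → γ ≤ 1 → 0 ≤ m → b ^ 2 ≤ (1 - γ) * m * γ → 0 ≤ κ →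
      0 < A →
      Real.log (1 + ((1 - γ) * m + 2 * b * x + γ * x ^ 2) ^ t / (A + γ) ^ r) ≤
        Real.log (1 + m ^ t / A ^ r) -
          γ * m ^ t / 2 / ((A + γ) ^ r * (1 + m ^ t / A ^ r)) +
          C * (1 + κ) * ((2 * (C * (1 + κ) + 1)) ^ (t - 1) + 1) * (γ / (A + γ) ^ r) +
          (2 * t * b * ((1 - γ) * m) ^ (t - 1) / ((A + γ) ^ r * (1 + m ^ t / A ^ r)) * x +
            C * γ * (m ^ (t - 1) + 1) / ((A + γ) ^ r * (1 + m ^ t / A ^ r)) *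
              (|x| ^ a - κ)) := by
  obtain ⟨C, hC, h⟩ := exists_rpow_energy_step_le ht hta
  refine ⟨C, hC, fun γ m b x κ A hγ0 hγ1 hm hb hκ hA => ?_⟩
  set c := C * (1 + κ)
  set c' := c * ((2 * (c + 1)) ^ (t - 1) + 1)
  set X := m ^ t / A ^ r with hX
  set lin := 2 * t * b * ((1 - γ) * m) ^ (t - 1)
  set quad := C * γ * (m ^ (t - 1) + 1)
  set m' := (1 - γ) * m + 2 * b * x + γ * x ^ 2
  have hm' : 0 ≤ m' := energy_step_nonneg hγ0 hγ1 hm hb x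
  have hX0 : 0 ≤ X := by positivity
  have hmX : m ^ t ≤ (A + γ) ^ r * X := by
    rw [hX, mul_div_left_comm]
    exact le_mul_of_one_le_right (by positivity)
      ((one_le_div (by positivity)).2 (Real.rpow_le_rpow hA.le (by linarith) hr))
  have hstep : m' ^ t ≤ m ^ t - γ * m ^ t / 2 + c' * γ + (lin * x + quad * (|x| ^ a - κ)) := by
    have hyoung := mul_rpow_sub_one_add_one_le (c := c) (by positivity) hm ht
    have := h γ m b x hγ0 hγ1 hm hb
    nlinarith [mul_le_mul_of_nonneg_left hyoung hγ0]
  calc Real.log (1 + m' ^ t / (A + γ) ^ r)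
      ≤ Real.log (1 + X) + (m' ^ t / (A + γ) ^ r - X) / (1 + X) :=
        log_one_add_le hX0 (by positivity)
    _ = Real.log (1 + X) + (m' ^ t - (A + γ) ^ r * X) / ((A + γ) ^ r * (1 + X)) := by
        field_simp
    _ ≤ Real.log (1 + X) + (-(γ * m ^ t / 2) + c' * γ + (lin * x + quad * (|x| ^ a - κ))) /
          ((A + γ) ^ r * (1 + X)) := by gcongr; linarith
    _ = Real.log (1 + X) - γ * m ^ t / 2 / ((A + γ) ^ r * (1 + X)) +
          c' * (γ / (A + γ) ^ r) / (1 + X) + (lin / ((A + γ) ^ r * (1 + X)) * x +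
            quad / ((A + γ) ^ r * (1 + X)) * (|x| ^ a - κ)) := by field_simp; ring
    _ ≤ _ := by gcongr; exact div_le_self (by positivity) (by linarith)

lemma one_add_rpow_le_rpow_mul {t r m A A' : ℝ} (hr : 0 ≤ r) (hm : 0 ≤ m) (hA : 1 ≤ A)
    (hA' : A ≤ A') : 1 + m ^ t ≤ A' ^ r * (1 + m ^ t / A ^ r) := by
  have hpos : 0 < A ^ r := by positivity
  have h1 : 1 ≤ A ^ r := Real.one_le_rpow hA hr
  calc 1 + m ^ t ≤ A ^ r * (1 + m ^ t / A ^ r) := by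
        rw [mul_add, mul_one, mul_div_cancel₀ _ hpos.ne']
        gcongr
    _ ≤ A' ^ r * (1 + m ^ t / A ^ r) := by
        have := Real.rpow_nonneg hm t
        gcongr

lemma abs_energy_slope_le {t γ m b G : ℝ} (ht : 1 < t) (hγ0 : 0 ≤ γ) (hγ1 : γ ≤ 1) (hm : 0 ≤ m)
    (hb : b ^ 2 ≤ (1 - γ) * m * γ) (hG : 1 + m ^ t ≤ G) :
    |2 * t * b * ((1 - γ) * m) ^ (t - 1) / G| ≤ 2 * t := by
  have hγ : 0 ≤ 1 - γ := sub_nonneg.2 hγ1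
  have hV : (1 - γ) * m ≤ m := mul_le_of_le_one_left hm (by linarith)
  have hb' : 2 * |b| ≤ m + 1 := by
    linarith [two_mul_abs_le_add_of_sq_le_mul (mul_nonneg hγ hm) hγ0 hb]
  have hmt : m ^ (t - 1) ≤ 1 + m ^ t := rpow_le_one_add_rpow hm (by linarith) (by linarith)
  have hpos : 0 < G := by linarith [Real.rpow_nonneg hm t]
  rw [abs_div, abs_of_pos hpos, div_le_iff₀ hpos, abs_mul, abs_mul,
    abs_of_pos (by linarith : 0 < 2 * t), abs_of_nonneg (Real.rpow_nonneg (mul_nonneg hγ hm) _)]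
  calc 2 * t * |b| * ((1 - γ) * m) ^ (t - 1) ≤ 2 * t * |b| * m ^ (t - 1) := by
        gcongr
    _ = t * (2 * |b|) * m ^ (t - 1) := by ring
    _ ≤ t * (m + 1) * m ^ (t - 1) := by gcongr
    _ = t * (m ^ t + m ^ (t - 1)) := by rw [rpow_eq_rpow_sub_one_mul hm ht]; ring
    _ ≤ t * (2 * G) := by gcongr; linarith
    _ = 2 * t * G := by ring

lemma abs_energy_noise_le {t γ m C G : ℝ} (ht : 1 < t) (hγ0 : 0 ≤ γ) (hγ1 : γ ≤ 1) (hm : 0 ≤ m)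
    (hC : 0 ≤ C) (hG : 1 + m ^ t ≤ G) : |C * γ * (m ^ (t - 1) + 1) / G| ≤ 2 * C := by
  have hmt : m ^ (t - 1) ≤ 1 + m ^ t := rpow_le_one_add_rpow hm (by linarith) (by linarith)
  have hmt0 := Real.rpow_nonneg hm t
  have hpos : 0 < G := by linarith
  rw [abs_of_nonneg (by positivity), div_le_iff₀ hpos]
  calc C * γ * (m ^ (t - 1) + 1) ≤ C * 1 * (2 * G) := by gcongr; linarith
    _ = 2 * C * G := by ring

end Growth

section EnergyRecursion

variable {Ω : Type*} {m0 : MeasurableSpace Ω} {μ : Measure Ω} {F : Filtration ℕ m0}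
  {ε γ m b : ℕ → Ω → ℝ} {σ a r t : ℝ}

/-- The scalar recursion satisfied by the energies `m n = |N n|² / tr (T n)` of a vector martingale
transform `N (n + 1) = N n + ε n • x n`, where `T (n + 1) = T n + x n (x n)ᵗ`. Here `γ n` and `b n`
stand for `|x n|²` and `⟨N n, x n⟩`, both divided by `tr (T (n + 1))`. -/
structure IsEnergyRecursion (μ : Measure Ω) (F : Filtration ℕ m0) (ε γ m b : ℕ → Ω → ℝ) :
    Prop where
  stronglyMeasurable_weight (n : ℕ) : StronglyMeasurable[F n] (γ n)
  stronglyMeasurable_energy (n : ℕ) : StronglyMeasurable[F n] (m n)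
  stronglyMeasurable_slope (n : ℕ) : StronglyMeasurable[F n] (b n)
  weight_nonneg (n : ℕ) (ω : Ω) : 0 ≤ γ n ω
  weight_le_one (n : ℕ) (ω : Ω) : γ n ω ≤ 1
  energy_nonneg (n : ℕ) (ω : Ω) : 0 ≤ m n ω
  sq_slope_le (n : ℕ) (ω : Ω) : b n ω ^ 2 ≤ (1 - γ n ω) * m n ω * γ n ω
  energy_succ (n : ℕ) (ω : Ω) :
    m (n + 1) ω = (1 - γ n ω) * m n ω + 2 * b n ω * ε n ω + γ n ω * ε n ω ^ 2
  ae_tendsto_weight : ∀ᵐ ω ∂μ, Tendsto (fun n => γ n ω) atTop (𝓝 0)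
  ae_tendsto_cumWeight : ∀ᵐ ω ∂μ, Tendsto (cumWeight (γ · ω)) atTop atTop

namespace IsEnergyRecursion

/-- The normalization `A(n+1)^r (1 + m(n)^t / A(n)^r)` of the increment of
`log (1 + m(n)^t / A(n)^r)`, where `A(n) = 1 + ∑_{k<n} γ(k)`. -/
def gauge (γ m : ℕ → Ω → ℝ) (t r : ℝ) (n : ℕ) (ω : Ω) : ℝ :=
  cumWeight (γ · ω) (n + 1) ^ r * (1 + m n ω ^ t / cumWeight (γ · ω) n ^ r)

lemma one_add_rpow_le_gauge (hE : IsEnergyRecursion μ F ε γ m b) (hr : 0 ≤ r) (n : ℕ) (ω : Ω) :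
    1 + m n ω ^ t ≤ gauge γ m t r n ω :=
  one_add_rpow_le_rpow_mul hr (hE.energy_nonneg n ω)
    (one_le_cumWeight (fun k => hE.weight_nonneg k ω) n)
    (monotone_cumWeight (fun k => hE.weight_nonneg k ω) n.le_succ)

lemma stronglyMeasurable_gauge (hE : IsEnergyRecursion μ F ε γ m b) (n : ℕ) :
    StronglyMeasurable[F n] (gauge γ m t r n) := by
  have hA {l : ℕ} (hl : l ≤ n + 1) : Measurable[F n] fun ω => cumWeight (γ · ω) l :=
    (stronglyMeasurable_cumWeight hE.stronglyMeasurable_weight hl).measurable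
  have hm := (hE.stronglyMeasurable_energy n).measurable
  exact (((hA le_rfl).pow_const r).mul
    (((hm.pow_const t).div ((hA n.le_succ).pow_const r)).const_add 1)).stronglyMeasurable

lemma ae_summable_condExp_mul_div_cumWeight (hE : IsEnergyRecursion μ F ε γ m b)
    (hε : IsNoise μ F ε σ a) (hr : 1 < r) {c : ℝ → ℝ} (hc0 : ∀ x, 0 ≤ x → 0 ≤ c x)
    (hc : MonotoneOn c (Set.Ici 0)) :
    ∀ᵐ ω ∂μ, Summable fun n =>
      c (μ[fun ω => |ε n ω| ^ a | F n] ω) * (γ n ω / cumWeight (γ · ω) (n + 1) ^ r) := by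
  have hκ : ∀ᵐ ω ∂μ, ∀ n, 0 ≤ μ[fun ω => |ε n ω| ^ a | F n] ω := ae_all_iff.2 fun n =>
    condExp_nonneg (ae_of_all μ fun ω => by positivity)
  filter_upwards [hκ, hε.ae_exists_condExp_le] with ω h ⟨M, hM⟩
  have hγ (n : ℕ) : 0 ≤ γ n ω / cumWeight (γ · ω) (n + 1) ^ r :=
    div_nonneg (hE.weight_nonneg n ω)
      (Real.rpow_nonneg (cumWeight_pos (fun k => hE.weight_nonneg k ω) _).le r)
  refine .of_nonneg_of_le (fun n => mul_nonneg (hc0 _ (h n)) (hγ n)) (fun n => ?_)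
    ((summable_div_cumWeight_rpow (fun n => hE.weight_nonneg n ω) hr).mul_left (c M))
  exact mul_le_mul_of_nonneg_right (hc (h n) ((h n).trans (hM n)) (hM n)) (hγ n)

variable [IsFiniteMeasure μ]

lemma isMartingaleDifference_log_noise (hE : IsEnergyRecursion μ F ε γ m b)
    (hε : IsNoise μ F ε σ a) (ht : 1 < t) (hr : 0 ≤ r) {C : ℝ} (hC : 0 ≤ C) :
    IsMartingaleDifference μ F fun n =>
      (fun ω => 2 * t * b n ω * ((1 - γ n ω) * m n ω) ^ (t - 1) / gauge γ m t r n ω) * ε n +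
      (fun ω => C * γ n ω * (m n ω ^ (t - 1) + 1) / gauge γ m t r n ω) *
        ((fun ω => |ε n ω| ^ a) - μ[fun ω => |ε n ω| ^ a | F n]) := by
  have hγm := hE.stronglyMeasurable_weight
  have hmm := hE.stronglyMeasurable_energy
  have hbm := hE.stronglyMeasurable_slope
  have hGm := hE.stronglyMeasurable_gauge (t := t) (r := r)
  have hD := hε.isMartingaleDifference
  refine (hD.bdd_mul (C := 2 * t) (fun n => by fun_prop) fun n ω => ?_).add
    ((isMartingaleDifference_sub_condExp (fun n => stronglyMeasurable_abs_rpow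
      (hD.stronglyMeasurable n) a) hε.integrable_abs_rpow).bdd_mul (C := 2 * C)
      (fun n => by fun_prop) fun n ω => ?_)
  · exact abs_energy_slope_le ht (hE.weight_nonneg n ω) (hE.weight_le_one n ω)
      (hE.energy_nonneg n ω) (hE.sq_slope_le n ω) (hE.one_add_rpow_le_gauge hr n ω)
  · exact abs_energy_noise_le ht (hE.weight_nonneg n ω) (hE.weight_le_one n ω)
      (hE.energy_nonneg n ω) hC (hE.one_add_rpow_le_gauge hr n ω)

lemma ae_summable_and_tendsto_log (hE : IsEnergyRecursion μ F ε γ m b) (hε : IsNoise μ F ε σ a)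
    (ht : 1 < t) (hta : 2 * t ≤ a) (hr : 1 < r) :
    ∀ᵐ ω ∂μ, Summable (fun n => γ n ω * m n ω ^ t / 2 / gauge γ m t r n ω) ∧
      ∃ l, Tendsto (fun n => Real.log (1 + m n ω ^ t / cumWeight (γ · ω) n ^ r)) atTop
        (𝓝 l) := by
  have hr0 : 0 ≤ r := by linarith
  obtain ⟨C, hC, hlog⟩ := exists_log_energy_step_le ht hta hr0
  set κ : ℕ → Ω → ℝ := fun n => μ[fun ω => |ε n ω| ^ a | F n]
  have hκm (n : ℕ) : StronglyMeasurable[F n] (κ n) := stronglyMeasurable_condExp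
  have hκ : ∀ᵐ ω ∂μ, ∀ n, 0 ≤ κ n ω := ae_all_iff.2 fun n =>
    condExp_nonneg (ae_of_all μ fun ω => by positivity)
  set c : ℝ → ℝ := fun x => C * (1 + x) * ((2 * (C * (1 + x) + 1)) ^ (t - 1) + 1)
  have hc0 (x : ℝ) (hx : 0 ≤ x) : 0 ≤ c x := by positivity
  have hc : MonotoneOn c (Set.Ici 0) := fun x (hx : 0 ≤ x) y (hy : 0 ≤ y) hxy => by
    simp only [c]
    gcongr
  have hγ := hE.weight_nonneg
  have hm := hE.energy_nonneg
  have hApos (ω : Ω) := cumWeight_pos fun n => hγ n ω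
  have hγm := hE.stronglyMeasurable_weight
  have hmm := hE.stronglyMeasurable_energy
  refine (hE.isMartingaleDifference_log_noise hε ht hr0 hC).ae_summable_and_tendsto_of_le
    (U := fun n ω => Real.log (1 + m n ω ^ t / cumWeight (γ · ω) n ^ r))
    (C := fun n ω => c (κ n ω) * (γ n ω / cumWeight (γ · ω) (n + 1) ^ r))
    ?_ (fun n => ?_) (fun n ω => Real.log_nonneg ?_) (fun n ω => ?_) ?_ ?_ ?_
  · simp only [cumWeight_zero, Real.one_rpow, div_one]
    have := (hmm 0).measurable
    exact Measurable.stronglyMeasurable (by fun_prop)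
  · have hcm : Measurable c := by fun_prop
    exact (hcm.comp (hκm n).measurable).stronglyMeasurable.mul ((hγm n).div
      ((stronglyMeasurable_cumWeight hγm le_rfl).measurable.pow_const r).stronglyMeasurable)
  · have := div_nonneg (Real.rpow_nonneg (hm n ω) t) (Real.rpow_nonneg (hApos ω n).le r)
    linarith
  · have := Real.rpow_nonneg (hm n ω) t
    exact div_nonneg (div_nonneg (mul_nonneg (hγ n ω) this) zero_le_two)
      (by linarith [hE.one_add_rpow_le_gauge (t := t) hr0 n ω])
  · filter_upwards [hκ] with ω h n using mul_nonneg (hc0 _ (h n)) <|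
      div_nonneg (hγ n ω) (Real.rpow_nonneg (hApos ω _).le r)
  · filter_upwards [hκ] with ω h n
    have := hlog (γ n ω) (m n ω) (b n ω) (ε n ω) (κ n ω) (cumWeight (γ · ω) n) (hγ n ω)
      (hE.weight_le_one n ω) (hm n ω) (hE.sq_slope_le n ω) (h n) (hApos ω n)
    rwa [← hE.energy_succ, ← cumWeight_succ (γ · ω)] at this
  · exact hE.ae_summable_condExp_mul_div_cumWeight hε hr hc0 hc

theorem ae_summable_and_tendsto (hE : IsEnergyRecursion μ F ε γ m b) (hε : IsNoise μ F ε σ a)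
    (ht : 1 < t) (hta : 2 * t ≤ a) (hr : 1 < r) :
    ∀ᵐ ω ∂μ, Summable (fun n => γ n ω * (m n ω ^ t / cumWeight (γ · ω) (n + 1) ^ r)) ∧
      ∃ l, Tendsto (fun n => m n ω ^ t / cumWeight (γ · ω) n ^ r) atTop (𝓝 l) := by
  filter_upwards [hE.ae_summable_and_tendsto_log hε ht hta hr] with ω ⟨hB, l, hl⟩
  have hApos := cumWeight_pos fun n => hE.weight_nonneg n ω
  have hX0 (n : ℕ) : 0 ≤ m n ω ^ t / cumWeight (γ · ω) n ^ r :=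
    div_nonneg (Real.rpow_nonneg (hE.energy_nonneg n ω) t) (Real.rpow_nonneg (hApos n).le r)
  have hX : Tendsto (fun n => m n ω ^ t / cumWeight (γ · ω) n ^ r) atTop
      (𝓝 (Real.exp l - 1)) := by
    refine (((Real.continuous_exp.tendsto l).comp hl).sub_const 1).congr fun n => ?_
    simp only [Function.comp_apply]
    rw [Real.exp_log (by linarith [hX0 n]), add_sub_cancel_left]
  obtain ⟨M, hM⟩ := hX.bddAbove_range
  refine ⟨.of_nonneg_of_le (fun n => ?_) (fun n => ?_) (hB.mul_left (2 * (1 + M))), _, hX⟩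
  · exact mul_nonneg (hE.weight_nonneg n ω)
      (div_nonneg (Real.rpow_nonneg (hE.energy_nonneg n ω) t) (Real.rpow_nonneg (hApos _).le r))
  · have hXM : m n ω ^ t / cumWeight (γ · ω) n ^ r ≤ M := hM ⟨n, rfl⟩
    have hγ := hE.weight_nonneg n ω
    have := Real.rpow_nonneg (hE.energy_nonneg n ω) t
    have := Real.rpow_pos_of_pos (hApos (n + 1)) r
    have := hX0 n
    calc γ n ω * (m n ω ^ t / cumWeight (γ · ω) (n + 1) ^ r)
        = 2 * (1 + m n ω ^ t / cumWeight (γ · ω) n ^ r) *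
            (γ n ω * m n ω ^ t / 2 / gauge γ m t r n ω) := by
          have : 1 + m n ω ^ t / cumWeight (γ · ω) n ^ r ≠ 0 := by positivity
          rw [gauge]
          field_simp
      _ ≤ 2 * (1 + M) * (γ n ω * m n ω ^ t / 2 / gauge γ m t r n ω) := by
          rw [gauge]
          gcongr

end IsEnergyRecursion

end EnergyRecursion

section EnergyGrowth

lemma summable_mul_rpow_of_le {γ y : ℕ → ℝ} {r s : ℝ} (hγ : ∀ n, 0 ≤ γ n) (hy : ∀ n, 0 ≤ y n)
    (hbdd : BddAbove (Set.range y)) (hr : 0 ≤ r) (hrs : r ≤ s)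
    (h : Summable fun n => γ n * y n ^ r) : Summable fun n => γ n * y n ^ s := by
  obtain ⟨M, hM⟩ := hbdd
  refine .of_nonneg_of_le (fun n => mul_nonneg (hγ n) (Real.rpow_nonneg (hy n) s)) (fun n => ?_)
    (h.mul_left (M ^ (s - r)))
  have hyM : y n ^ (s - r) ≤ M ^ (s - r) :=
    Real.rpow_le_rpow (hy n) (hM ⟨n, rfl⟩) (sub_nonneg.2 hrs)
  calc γ n * y n ^ s = y n ^ (s - r) * (γ n * y n ^ r) := by
        rw [mul_left_comm, ← Real.rpow_add_of_nonneg (hy n) (sub_nonneg.2 hrs) hr, sub_add_cancel]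
    _ ≤ M ^ (s - r) * (γ n * y n ^ r) :=
        mul_le_mul_of_nonneg_right hyM (mul_nonneg (hγ n) (Real.rpow_nonneg (hy n) r))

lemma summable_mul_one_add_div_cumWeight_rpow {γ y : ℕ → ℝ} {r : ℝ} (hγ : ∀ n, 0 ≤ γ n)
    (hy : ∀ n, 0 ≤ y n) (hr : 1 < r)
    (h : Summable fun n => γ n * (y n ^ r / cumWeight γ (n + 1) ^ r)) :
    Summable fun n => γ n * ((1 + y n) / cumWeight γ (n + 1)) ^ r := by
  have hA := cumWeight_pos hγ
  refine .of_nonneg_of_le (fun n => mul_nonneg (hγ n) ?_) (fun n => ?_)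
    (((summable_div_cumWeight_rpow hγ hr).add h).mul_left (2 ^ r / 2))
  · exact Real.rpow_nonneg (div_nonneg (by linarith [hy n]) (hA _).le) r
  · have hsplit := abs_sub_rpow_le hr.le 1 (-y n)
    rw [sub_neg_eq_add, abs_one, Real.one_rpow, abs_neg, abs_of_nonneg (hy n),
      abs_of_nonneg (by linarith [hy n])] at hsplit
    have := hγ n
    have := Real.rpow_pos_of_pos (hA (n + 1)) r
    calc γ n * ((1 + y n) / cumWeight γ (n + 1)) ^ r
        = γ n * ((1 + y n) ^ r / cumWeight γ (n + 1) ^ r) := by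
          rw [Real.div_rpow (by linarith [hy n]) (hA _).le]
      _ ≤ γ n * (2 ^ r / 2 * (1 + y n ^ r) / cumWeight γ (n + 1) ^ r) := by gcongr
      _ = 2 ^ r / 2 * (γ n / cumWeight γ (n + 1) ^ r +
            γ n * (y n ^ r / cumWeight γ (n + 1) ^ r)) := by ring

namespace IsEnergyRecursion

variable {Ω : Type*} {m0 : MeasurableSpace Ω} {μ : Measure Ω} [IsFiniteMeasure μ]
  {F : Filtration ℕ m0} {ε γ m b : ℕ → Ω → ℝ} {σ a r t : ℝ} {p : ℕ}

lemma ae_tendsto_rpow_div (hE : IsEnergyRecursion μ F ε γ m b) (hε : IsNoise μ F ε σ a)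
    (ht : 1 < t) (hta : 2 * t ≤ a) (hr : 1 < r) :
    ∀ᵐ ω ∂μ, Tendsto (fun n => m n ω ^ t / cumWeight (γ · ω) n ^ r) atTop (𝓝 0) := by
  filter_upwards [hE.ae_summable_and_tendsto hε ht hta hr, hE.ae_tendsto_weight,
    hE.ae_tendsto_cumWeight] with ω ⟨hsum, l, hl⟩ hγ0 hA
  have hγ (n : ℕ) := hE.weight_nonneg n ω
  have hpos := cumWeight_pos hγ
  have hratio := (tendsto_cumWeight_div_cumWeight_succ hγ hA hγ0).rpow_const
    (p := r) (.inl one_ne_zero)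
  rw [Real.one_rpow] at hratio
  have hshift : Tendsto (fun n => m n ω ^ t / cumWeight (γ · ω) (n + 1) ^ r) atTop (𝓝 l) := by
    refine (mul_one l ▸ hl.mul hratio).congr fun n => ?_
    have := (Real.rpow_pos_of_pos (hpos n) r).ne'
    rw [Real.div_rpow (hpos n).le (hpos _).le]
    field_simp
  rwa [eq_zero_of_summable_mul_of_tendsto (not_summable_of_tendsto_cumWeight hA) hsum hshift]
    at hl

theorem ae_isLittleO_pow_and_summable (hE : IsEnergyRecursion μ F ε γ m b)
    (hε : IsNoise μ F ε σ a) (hp : 1 ≤ p) (hr : 1 < r) (hpr : 2 * (p * r) ≤ a) :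
    ∀ᵐ ω ∂μ, ((m · ω ^ p) =o[atTop] cumWeight (γ · ω)) ∧ ∀ s, r ≤ s →
      Summable fun n => γ n ω * ((1 + m n ω ^ p) / cumWeight (γ · ω) (n + 1)) ^ s := by
  have ht : 1 < p * r := hr.trans_le (le_mul_of_one_le_left (by linarith) (mod_cast hp))
  have hr0 : 0 < r := by linarith
  filter_upwards [hE.ae_summable_and_tendsto hε ht hpr hr, hE.ae_tendsto_rpow_div hε ht hpr hr,
    hE.ae_tendsto_cumWeight] with ω ⟨hsum, _⟩ hlim hA
  have hγ (n : ℕ) := hE.weight_nonneg n ω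
  have hpos := cumWeight_pos hγ
  have hmp (n : ℕ) : 0 ≤ m n ω ^ p := pow_nonneg (hE.energy_nonneg n ω) p
  have hpow (n : ℕ) : m n ω ^ (p * r) = (m n ω ^ p) ^ r := by
    rw [Real.rpow_mul (hE.energy_nonneg n ω), Real.rpow_natCast]
  simp only [hpow] at hsum hlim
  have hlo : (m · ω ^ p) =o[atTop] cumWeight (γ · ω) := by
    refine (isLittleO_iff_tendsto fun n h => absurd h (hpos n).ne').2 ?_
    have := hlim.rpow_const (p := r⁻¹) (.inr (inv_nonneg.2 hr0.le))
    rw [Real.zero_rpow (inv_ne_zero hr0.ne')] at this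
    refine this.congr fun n => ?_
    rw [← Real.div_rpow (hmp n) (hpos n).le,
      Real.rpow_rpow_inv (div_nonneg (hmp n) (hpos n).le) hr0.ne']
  refine ⟨hlo, fun s hs => ?_⟩
  refine summable_mul_rpow_of_le hγ (fun n => div_nonneg (by linarith [hmp n]) (hpos _).le) ?_
    hr0.le hs (summable_mul_one_add_div_cumWeight_rpow hγ hmp hr hsum)
  obtain ⟨M, hM⟩ := (((isLittleO_const_of_tendsto_atTop hA 1).add hlo).tendsto_div_nhds_zero
    ).bddAbove_range
  refine ⟨M, Set.forall_mem_range.2 fun n => le_trans ?_ (hM ⟨n, rfl⟩)⟩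
  exact div_le_div_of_nonneg_left (by linarith [hmp n]) (hpos n)
    (monotone_cumWeight hγ n.le_succ)

end IsEnergyRecursion

end EnergyGrowth

section PolynomialIncrements

open Polynomial

variable {Ω : Type*} {m0 : MeasurableSpace Ω} {μ : Measure Ω} {F : Filtration ℕ m0}
  {ε γ m b : ℕ → Ω → ℝ} {σ a r s : ℝ} {p j : ℕ}

/-- The summands `γ (1 + m^p)` of the gauge against which the error terms in the recursion for
`∑ γ m^p` are negligible. -/
def momentWeight (γ m : ℕ → Ω → ℝ) (p n : ℕ) (ω : Ω) : ℝ := γ n ω * (1 + m n ω ^ p)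

lemma exists_one_lt_le_two_mul_le {q a : ℝ} (hq : 0 < q) (ha : 2 * q < a) :
    ∃ r, 1 < r ∧ r ≤ 2 ∧ 2 * (q * r) ≤ a := by
  refine ⟨min 2 (a / (2 * q)), lt_min one_lt_two ((one_lt_div (by linarith)).2 ha),
    min_le_left _ _, ?_⟩
  rw [← mul_assoc, ← le_div_iff₀' (by linarith)]
  exact min_le_right _ _

lemma sqrt_pow_rpow_le {x : ℝ} (hx0 : 0 ≤ x) (hx1 : x ≤ 1) (hjs : 2 ≤ j * s) :
    (√x ^ j) ^ s ≤ x := by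
  rw [← Real.rpow_natCast, ← Real.rpow_mul (Real.sqrt_nonneg x), Real.sqrt_eq_rpow,
    ← Real.rpow_mul hx0]
  exact Real.rpow_le_self_of_le_one hx0 hx1 (by linarith)

lemma sqrt_pow_le_sqrt_mul {x : ℝ} (hx0 : 0 ≤ x) (hx1 : x ≤ 1) (hj : 3 ≤ j) :
    √x ^ j ≤ √x * x := by
  calc √x ^ j ≤ √x ^ 3 := pow_le_pow_of_le_one (Real.sqrt_nonneg x) (Real.sqrt_le_one.2 hx1) hj
    _ = √x * x := by rw [pow_succ', Real.sq_sqrt hx0]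

lemma IsNoise.ae_condExp_pow_eq [IsFiniteMeasure μ] (hε : IsNoise μ F ε σ a) :
    ∀ᵐ ω ∂μ, ∀ n, μ[fun ω => ε n ω ^ 0 | F n] ω = 1 ∧ μ[fun ω => ε n ω ^ 1 | F n] ω = 0 ∧
      μ[fun ω => ε n ω ^ 2 | F n] ω = σ ^ 2 := by
  filter_upwards [ae_all_iff.2 hε.isMartingaleDifference.condExp_eq_zero,
    ae_all_iff.2 hε.condExp_sq] with ω h1 h2 n
  simp only [pow_zero, condExp_const (F.le n), pow_one, true_and]
  exact ⟨h1 n, h2 n⟩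

namespace IsEnergyRecursion

lemma stronglyMeasurable_momentWeight (hE : IsEnergyRecursion μ F ε γ m b) (p n : ℕ) :
    StronglyMeasurable[F n] (momentWeight γ m p n) :=
  (hE.stronglyMeasurable_weight n).mul
    (stronglyMeasurable_const.add ((hE.stronglyMeasurable_energy n).pow p))

lemma weight_le_momentWeight (hE : IsEnergyRecursion μ F ε γ m b) (p n : ℕ) (ω : Ω) :
    γ n ω ≤ momentWeight γ m p n ω :=
  le_mul_of_one_le_right (hE.weight_nonneg n ω)
    (by linarith [pow_nonneg (hE.energy_nonneg n ω) p])

lemma momentWeight_nonneg (hE : IsEnergyRecursion μ F ε γ m b) (p n : ℕ) (ω : Ω) :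
    0 ≤ momentWeight γ m p n ω :=
  (hE.weight_nonneg n ω).trans (hE.weight_le_momentWeight p n ω)

lemma cumWeight_le_cumWeight_momentWeight (hE : IsEnergyRecursion μ F ε γ m b) (p n : ℕ)
    (ω : Ω) : cumWeight (γ · ω) n ≤ cumWeight (momentWeight γ m p · ω) n :=
  add_le_add_right (sum_le_sum fun k _ => hE.weight_le_momentWeight p k ω) 1

lemma ae_tendsto_cumWeight_momentWeight (hE : IsEnergyRecursion μ F ε γ m b) (p : ℕ) :
    ∀ᵐ ω ∂μ, Tendsto (cumWeight (momentWeight γ m p · ω)) atTop atTop := by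
  filter_upwards [hE.ae_tendsto_cumWeight] with ω hA
  exact tendsto_atTop_mono (hE.cumWeight_le_cumWeight_momentWeight p · ω) hA

variable [IsFiniteMeasure μ]

lemma isLittleO_sum_mul_pow_sub_condExp (hE : IsEnergyRecursion μ F ε γ m b)
    (hε : IsNoise μ F ε σ a) (hp : 1 ≤ p) (hr : 1 < r) (hpr : 2 * (p * r) ≤ a) (hrs : r ≤ s)
    (hs2 : s ≤ 2) (hjs : 2 ≤ j * s) (hjsa : j * s ≤ a) {u : ℕ → Ω → ℝ}
    (hu : ∀ n, StronglyMeasurable[F n] (u n))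
    (hu_le : ∀ᵐ ω ∂μ, ∃ C, ∀ n, |u n ω| ≤ C * √(γ n ω) ^ j * (1 + m n ω ^ p)) :
    ∀ᵐ ω ∂μ, (fun n => ∑ k ∈ range n,
        u k ω * (ε k ω ^ j - μ[fun ω => ε k ω ^ j | F k] ω))
      =o[atTop] cumWeight (momentWeight γ m p · ω) := by
  refine hε.isLittleO_sum_mul_pow_sub_condExp (by linarith) hs2 hjsa
    (hE.stronglyMeasurable_momentWeight p) (hE.momentWeight_nonneg p) hu
    (hE.ae_tendsto_cumWeight_momentWeight p) ?_
  filter_upwards [hE.ae_isLittleO_pow_and_summable hε hp hr hpr, hu_le]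
    with ω ⟨_, hsum⟩ ⟨C, hC⟩
  refine .of_nonneg_of_le (fun n => Real.rpow_nonneg (abs_nonneg _) s) (fun n => ?_)
    ((hsum s hrs).mul_left (|C| ^ s))
  have hγ := hE.weight_nonneg n ω
  have hmp := pow_nonneg (hE.energy_nonneg n ω) p
  have hA := cumWeight_pos (fun k => hE.weight_nonneg k ω) (n + 1)
  have hAW := hE.cumWeight_le_cumWeight_momentWeight p (n + 1) ω
  have hW := hA.trans_le hAW
  have hs0 : 0 ≤ s := by linarith
  calc |u n ω / cumWeight (momentWeight γ m p · ω) (n + 1)| ^ s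
      ≤ (|C| * √(γ n ω) ^ j * (1 + m n ω ^ p) / cumWeight (γ · ω) (n + 1)) ^ s := by
        rw [abs_div, abs_of_pos hW]
        gcongr
        refine (hC n).trans ?_
        gcongr
        exact le_abs_self C
    _ = |C| ^ s * ((√(γ n ω) ^ j) ^ s * ((1 + m n ω ^ p) / cumWeight (γ · ω) (n + 1)) ^ s) := by
        rw [mul_div_assoc, mul_assoc, Real.mul_rpow (abs_nonneg C) (by positivity),
          Real.mul_rpow (by positivity) (by positivity)]
    _ ≤ |C| ^ s * (γ n ω * ((1 + m n ω ^ p) / cumWeight (γ · ω) (n + 1)) ^ s) := by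
        gcongr
        exact sqrt_pow_rpow_le hγ (hE.weight_le_one n ω) hjs

lemma isLittleO_sum_mul_condExp_pow (hE : IsEnergyRecursion μ F ε γ m b)
    (hε : IsNoise μ F ε σ a) (hj : 3 ≤ j) (hja : j ≤ a) {u : ℕ → Ω → ℝ}
    (hu_le : ∀ᵐ ω ∂μ, ∃ C, ∀ n, |u n ω| ≤ C * √(γ n ω) ^ j * (1 + m n ω ^ p)) :
    ∀ᵐ ω ∂μ, (fun n => ∑ k ∈ range n, u k ω * μ[fun ω => ε k ω ^ j | F k] ω)
      =o[atTop] cumWeight (momentWeight γ m p · ω) := by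
  filter_upwards [hu_le, hε.ae_exists_abs_condExp_pow_le hja, hE.ae_tendsto_weight,
    hE.ae_tendsto_cumWeight_momentWeight p] with ω ⟨C, hC⟩ ⟨K, hK⟩ hγ0 hW
  have hθ : Tendsto (fun n => |C| * K * √(γ n ω)) atTop (𝓝 0) := by
    simpa using (hγ0.sqrt.const_mul (|C| * K))
  refine isLittleO_sum_of_abs_le_mul (fun n => hE.momentWeight_nonneg p n ω) hW hθ fun n => ?_
  have hmp := pow_nonneg (hE.energy_nonneg n ω) p
  have hK0 := (abs_nonneg _).trans (hK n)
  calc |u n ω * μ[fun ω => ε n ω ^ j | F n] ω|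
      ≤ C * √(γ n ω) ^ j * (1 + m n ω ^ p) * K := by
        rw [abs_mul]
        exact mul_le_mul (hC n) (hK n) (abs_nonneg _) ((abs_nonneg _).trans (hC n))
    _ ≤ |C| * (√(γ n ω) * γ n ω) * (1 + m n ω ^ p) * K := by
        gcongr
        · exact le_abs_self C
        · exact sqrt_pow_le_sqrt_mul (hE.weight_nonneg n ω) (hE.weight_le_one n ω) hj
    _ = |C| * K * √(γ n ω) * momentWeight γ m p n ω := by rw [momentWeight]; ring

lemma isLittleO_sum_mul_pow_sub_condExp_of_le (hE : IsEnergyRecursion μ F ε γ m b)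
    (hε : IsNoise μ F ε σ a) (hp : 1 ≤ p) (hpa : 2 * p < a) (hj : j ≤ 2 * p) {u : ℕ → Ω → ℝ}
    (hu : ∀ n, StronglyMeasurable[F n] (u n))
    (hu_le : ∀ᵐ ω ∂μ, ∃ C, ∀ n, |u n ω| ≤ C * √(γ n ω) ^ j * (1 + m n ω ^ p)) :
    ∀ᵐ ω ∂μ, (fun n => ∑ k ∈ range n,
        u k ω * (ε k ω ^ j - μ[fun ω => ε k ω ^ j | F k] ω))
      =o[atTop] cumWeight (momentWeight γ m p · ω) := by
  have hp1 : (1 : ℝ) ≤ p := mod_cast hp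
  obtain ⟨r, hr1, hr2, hpr⟩ := exists_one_lt_le_two_mul_le (by linarith) hpa
  obtain rfl | rfl | hj2 : j = 0 ∨ j = 1 ∨ 2 ≤ j := by omega
  · have h0 (k : ℕ) (ω : Ω) : μ[fun ω => ε k ω ^ 0 | F k] ω = 1 := by
      simp only [pow_zero, condExp_const (F.le k)]
    simp only [pow_zero] at h0
    simp [h0]
  · exact hE.isLittleO_sum_mul_pow_sub_condExp hε hp hr1 hpr hr2 le_rfl (by simp)
      (by push_cast; linarith) hu hu_le
  · have hj2' : (2 : ℝ) ≤ j := mod_cast hj2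
    have hj' : (j : ℝ) ≤ 2 * p := mod_cast hj
    exact hE.isLittleO_sum_mul_pow_sub_condExp hε hp hr1 hpr le_rfl hr2 (by nlinarith)
      (by nlinarith) hu hu_le

theorem isLittleO_sum_eval_sub (hE : IsEnergyRecursion μ F ε γ m b) (hε : IsNoise μ F ε σ a)
    (hp : 1 ≤ p) (hpa : 2 * p < a) {P : ℕ → Ω → ℝ[X]}
    (hP : ∀ n ω, (P n ω).natDegree ≤ 2 * p)
    (hPm : ∀ n j, StronglyMeasurable[F n] fun ω => (P n ω).coeff j)
    (hP_le : ∀ᵐ ω ∂μ, ∃ C, ∀ n j, |(P n ω).coeff j| ≤ C * √(γ n ω) ^ j * (1 + m n ω ^ p)) :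
    ∀ᵐ ω ∂μ, (fun n => ∑ k ∈ range n,
        ((P k ω).eval (ε k ω) - ((P k ω).coeff 0 + σ ^ 2 * (P k ω).coeff 2)))
      =o[atTop] cumWeight (momentWeight γ m p · ω) := by
  have hle (j : ℕ) : ∀ᵐ ω ∂μ, ∃ C, ∀ n,
      |(P n ω).coeff j| ≤ C * √(γ n ω) ^ j * (1 + m n ω ^ p) :=
    hP_le.mono fun ω ⟨C, hC⟩ => ⟨C, (hC · j)⟩
  have hnoise := ae_all_iff.2 fun j => eventually_imp_distrib_left.2 fun hj : j ≤ 2 * p =>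
    hE.isLittleO_sum_mul_pow_sub_condExp_of_le hε hp hpa hj (hPm · j) (hle j)
  have hcomp := ae_all_iff.2 fun j => eventually_imp_distrib_left.2 fun hj : 3 ≤ j ∧ j ≤ 2 * p =>
    hE.isLittleO_sum_mul_condExp_pow hε hj.1
      ((show (j : ℝ) ≤ 2 * p from mod_cast hj.2).trans hpa.le) (hle j)
  filter_upwards [hnoise, hcomp, hε.ae_condExp_pow_eq] with ω hnoise hcomp hκ
  have hsplit (k : ℕ) : (P k ω).eval (ε k ω) - ((P k ω).coeff 0 + σ ^ 2 * (P k ω).coeff 2) =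
      ∑ j ∈ range (2 * p + 1),
        (P k ω).coeff j * (ε k ω ^ j - μ[fun ω => ε k ω ^ j | F k] ω) +
      ∑ j ∈ Ico 3 (2 * p + 1), (P k ω).coeff j * μ[fun ω => ε k ω ^ j | F k] ω := by
    have hlow := sum_range_add_sum_Ico
      (fun j => (P k ω).coeff j * μ[fun ω => ε k ω ^ j | F k] ω) (show 3 ≤ 2 * p + 1 by omega)
    obtain ⟨h0, h1, h2⟩ := hκ k
    simp only [sum_range_succ _ 2, sum_range_succ _ 1, sum_range_one, h0, h1, h2] at hlow
    rw [eval_eq_sum_range' (Nat.lt_succ_of_le (hP k ω))]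
    simp only [mul_sub, sum_sub_distrib, ← hlow]
    ring
  simp only [hsplit, sum_add_distrib, sum_comm (s := range _) (t := range (2 * p + 1)),
    sum_comm (s := range _) (t := Ico _ _)]
  refine .add (.fun_sum fun j hj => ?_) (.fun_sum fun j hj => ?_)
  · exact hnoise j (Nat.lt_succ_iff.1 (mem_range.1 hj))
  · exact hcomp j ⟨(mem_Ico.1 hj).1, Nat.lt_succ_iff.1 (mem_Ico.1 hj).2⟩

end IsEnergyRecursion

end PolynomialIncrements

section CoefficientMajorants

open Polynomial

/-- Coefficientwise domination of a real polynomial by a polynomial with nonnegative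
coefficients. -/
def CoeffAbsLE (P Q : ℝ[X]) : Prop := ∀ j, |P.coeff j| ≤ Q.coeff j

namespace CoeffAbsLE

variable {P P' Q Q' : ℝ[X]}

lemma mul (h : CoeffAbsLE P Q) (h' : CoeffAbsLE P' Q') : CoeffAbsLE (P * P') (Q * Q') := by
  intro j
  simp only [coeff_mul]
  refine (abs_sum_le_sum_abs _ _).trans (sum_le_sum fun x _ => ?_)
  rw [abs_mul]
  exact mul_le_mul (h x.1) (h' x.2) (abs_nonneg _) ((abs_nonneg _).trans (h x.1))

lemma one : CoeffAbsLE 1 1 := fun j => by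
  rw [coeff_one]
  split_ifs <;> simp

lemma pow (h : CoeffAbsLE P Q) (n : ℕ) : CoeffAbsLE (P ^ n) (Q ^ n) := by
  induction n with
  | zero => simpa using one
  | succ n ih => simpa only [pow_succ] using ih.mul h

lemma natDegree_le (h : CoeffAbsLE P Q) : P.natDegree ≤ Q.natDegree :=
  natDegree_le_iff_coeff_eq_zero.2 fun j hj =>
    abs_nonpos_iff.1 ((h j).trans_eq (coeff_eq_zero_of_natDegree_lt hj))

end CoeffAbsLE

lemma natDegree_C_add_C_mul_X_pow_le (v g : ℝ) (n : ℕ) :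
    ((C v + C g * X) ^ n).natDegree ≤ n := by
  rw [add_comm]
  simpa using natDegree_pow_le_of_le n (natDegree_linear_le (a := g) (b := v))

lemma coeff_C_add_C_mul_X_pow_le {v g w : ℝ} (hv : 0 ≤ v) (hg : 0 ≤ g) (hvw : v ≤ w) (hw : 1 ≤ w)
    (n j : ℕ) : ((C v + C g * X) ^ n).coeff j ≤ (2 * w) ^ n * g ^ j := by
  induction n generalizing j with
  | zero =>
    rw [pow_zero, coeff_one, pow_zero, one_mul]
    split_ifs with h
    · simp [h]
    · positivity
  | succ n ih =>
    have : 0 ≤ (2 * w) ^ n := by positivity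
    rw [pow_succ', add_mul, coeff_add, coeff_C_mul, mul_assoc, coeff_C_mul]
    cases j with
    | zero =>
      have := ih 0
      simp only [coeff_X_mul_zero, mul_zero, add_zero, pow_zero, mul_one] at this ⊢
      calc v * ((C v + C g * X) ^ n).coeff 0 ≤ v * (2 * w) ^ n := by gcongr
        _ ≤ 2 * w * (2 * w) ^ n := by gcongr; linarith
        _ = (2 * w) ^ (n + 1) := (pow_succ' _ _).symm
    | succ j =>
      rw [coeff_X_mul]
      calc v * ((C v + C g * X) ^ n).coeff (j + 1) + g * ((C v + C g * X) ^ n).coeff j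
          ≤ v * ((2 * w) ^ n * g ^ (j + 1)) + g * ((2 * w) ^ n * g ^ j) := by
            gcongr
            exacts [ih _, ih _]
        _ = (v + 1) * ((2 * w) ^ n * g ^ (j + 1)) := by ring
        _ ≤ 2 * w * ((2 * w) ^ n * g ^ (j + 1)) := by gcongr; linarith
        _ = (2 * w) ^ (n + 1) * g ^ (j + 1) := by ring

lemma coeff_C_sqrt_add_C_sqrt_mul_X_pow_le {V γ m : ℝ} {q p : ℕ} (hVm : V ≤ m) (hm : 0 ≤ m)
    (hqp : q ≤ p) (j : ℕ) :
    ((C √V + C √γ * X) ^ (2 * q)).coeff j ≤ 8 ^ p * √γ ^ j * (1 + m ^ p) := by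
  have hsq : √(1 + m) ^ 2 = 1 + m := Real.sq_sqrt (by linarith)
  have hw : 1 ≤ √(1 + m) := Real.one_le_sqrt.2 (by linarith)
  calc ((C √V + C √γ * X) ^ (2 * q)).coeff j
      ≤ (2 * √(1 + m)) ^ (2 * q) * √γ ^ j :=
        coeff_C_add_C_mul_X_pow_le (Real.sqrt_nonneg V) (Real.sqrt_nonneg γ)
          (Real.sqrt_le_sqrt (by linarith)) hw _ j
    _ ≤ (2 * √(1 + m)) ^ (2 * p) * √γ ^ j := by
        gcongr
        linarith
    _ = 4 ^ p * (1 + m) ^ p * √γ ^ j := by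
        rw [pow_mul, mul_pow, hsq, mul_pow]
        norm_num
    _ ≤ 4 ^ p * (2 ^ p * (1 + m ^ p)) * √γ ^ j := by
        gcongr
        calc (1 + m) ^ p ≤ 2 ^ (p - 1) * (1 ^ p + m ^ p) := add_pow_le zero_le_one hm p
          _ ≤ 2 ^ p * (1 + m ^ p) := by
            rw [one_pow]
            gcongr
            exacts [one_le_two, Nat.sub_le p 1]
    _ = 8 ^ p * √γ ^ j * (1 + m ^ p) := by
        rw [show (8 : ℝ) = 4 * 2 by norm_num, mul_pow]
        ring

/-- The quadratic polynomial in the noise giving the next energy in `IsEnergyRecursion`. -/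
def energyPoly (V b γ : ℝ) : ℝ[X] := C V + C (2 * b) * X + C γ * X ^ 2

section EnergyPoly

variable {V b γ : ℝ}

lemma eval_energyPoly (V b γ x : ℝ) :
    (energyPoly V b γ).eval x = V + 2 * b * x + γ * x ^ 2 := by simp [energyPoly]

lemma coeff_energyPoly_zero (V b γ : ℝ) : (energyPoly V b γ).coeff 0 = V := by
  simp [energyPoly]

lemma coeff_energyPoly_one (V b γ : ℝ) : (energyPoly V b γ).coeff 1 = 2 * b := by
  simp [energyPoly, coeff_C, coeff_X_pow]

lemma coeff_energyPoly_two (V b γ : ℝ) : (energyPoly V b γ).coeff 2 = γ := by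
  simp [energyPoly]

lemma coeff_energyPoly_pow_zero (V b γ : ℝ) (n : ℕ) : (energyPoly V b γ ^ n).coeff 0 = V ^ n := by
  rw [coeff_zero_eq_eval_zero, eval_pow, eval_energyPoly]
  ring

lemma coeff_energyPoly_pow_one (V b γ : ℝ) (n : ℕ) :
    (energyPoly V b γ ^ (n + 1)).coeff 1 = (n + 1) * (2 * b) * V ^ n := by
  induction n with
  | zero => simp [coeff_energyPoly_one]
  | succ n ih =>
    rw [pow_succ, mul_coeff_one, ih, coeff_energyPoly_pow_zero, coeff_energyPoly_zero,
      coeff_energyPoly_one]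
    push_cast
    ring

lemma coeff_energyPoly_pow_two (V b γ : ℝ) (n : ℕ) :
    (energyPoly V b γ ^ (n + 1)).coeff 2 =
      (n + 1) * γ * V ^ n + 2 * n * (n + 1) * V ^ (n - 1) * b ^ 2 := by
  induction n with
  | zero => simp [coeff_energyPoly_two]
  | succ n ih =>
    rw [pow_succ, coeff_mul, Nat.sum_antidiagonal_eq_sum_range_succ_mk]
    simp only [sum_range_succ, sum_range_zero, Nat.sub_self, Nat.sub_zero, Nat.reduceSub, zero_add,
      ih, coeff_energyPoly_pow_zero, coeff_energyPoly_pow_one, coeff_energyPoly_zero,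
      coeff_energyPoly_one, coeff_energyPoly_two]
    cases n with
    | zero => norm_num; ring
    | succ n => simp only [Nat.add_sub_cancel]; push_cast; ring

lemma coeffAbsLE_energyPoly_of_abs_le {e V' b' γ' : ℝ} (hV : 0 ≤ V) (hγ : 0 ≤ γ)
    (hV' : |V'| ≤ e * V) (hb' : |b'| ≤ e * (√V * √γ)) (hγ' : |γ'| ≤ e * γ) :
    CoeffAbsLE (energyPoly V' b' γ') (C e * (C √V + C √γ * X) ^ 2) := by
  have hexp : (C √V + C √γ * X) ^ 2 = energyPoly V (√V * √γ) γ :=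
    calc (C √V + C √γ * X) ^ 2 = energyPoly (√V ^ 2) (√V * √γ) (√γ ^ 2) := by
          simp only [energyPoly, map_mul, map_pow, map_ofNat]
          ring
      _ = energyPoly V (√V * √γ) γ := by rw [Real.sq_sqrt hV, Real.sq_sqrt hγ]
  intro j
  rw [hexp, coeff_C_mul]
  match j with
  | 0 => simpa only [coeff_energyPoly_zero] using hV'
  | 1 =>
    simp only [coeff_energyPoly_one, abs_mul, abs_two]
    linarith
  | 2 => simpa only [coeff_energyPoly_two] using hγ'
  | j + 3 => simp [energyPoly]

lemma coeffAbsLE_energyPoly (hV : 0 ≤ V) (hγ : 0 ≤ γ) (hb : b ^ 2 ≤ V * γ) :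
    CoeffAbsLE (energyPoly V b γ) ((C √V + C √γ * X) ^ 2) := by
  have hb' : |b| ≤ √V * √γ := by
    rw [← Real.sqrt_mul hV]
    exact Real.abs_le_sqrt hb
  simpa using coeffAbsLE_energyPoly_of_abs_le (e := 1) hV hγ (by rw [one_mul, abs_of_nonneg hV])
    (by rwa [one_mul]) (by rw [one_mul, abs_of_nonneg hγ])

end EnergyPoly

section Measurability

variable {Ω : Type*} {m : MeasurableSpace Ω} {P Q : Ω → ℝ[X]}

lemma stronglyMeasurable_coeff_mul (hP : ∀ j, StronglyMeasurable fun ω => (P ω).coeff j)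
    (hQ : ∀ j, StronglyMeasurable fun ω => (Q ω).coeff j) (j : ℕ) :
    StronglyMeasurable fun ω => (P ω * Q ω).coeff j := by
  simp only [coeff_mul]
  exact Finset.stronglyMeasurable_fun_sum _ fun x _ => (hP x.1).mul (hQ x.2)

lemma stronglyMeasurable_coeff_pow (hP : ∀ j, StronglyMeasurable fun ω => (P ω).coeff j)
    (n j : ℕ) : StronglyMeasurable fun ω => (P ω ^ n).coeff j := by
  induction n generalizing j with
  | zero => simpa using stronglyMeasurable_const
  | succ n ih => simpa only [pow_succ] using stronglyMeasurable_coeff_mul ih hP j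

lemma stronglyMeasurable_coeff_energyPoly {V b γ : Ω → ℝ} (hV : StronglyMeasurable V)
    (hb : StronglyMeasurable b) (hγ : StronglyMeasurable γ) (j : ℕ) :
    StronglyMeasurable fun ω => (energyPoly (V ω) (b ω) (γ ω)).coeff j := by
  simp only [energyPoly, coeff_add, coeff_C_mul, coeff_C, coeff_X, coeff_X_pow]
  split_ifs <;> fun_prop

end Measurability

end CoefficientMajorants

section MomentRecursion

lemma abs_one_sub_one_sub_pow_le {x : ℝ} (hx0 : 0 ≤ x) (hx1 : x ≤ 1) (n : ℕ) :
    |1 - (1 - x) ^ n| ≤ n * x := by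
  have h0 := one_add_mul_le_pow (show (-2 : ℝ) ≤ -x by linarith) n
  have h1 := pow_le_one₀ (sub_nonneg.2 hx1) (sub_le_self 1 hx0) (n := n)
  rw [abs_of_nonneg (sub_nonneg.2 h1)]
  rw [← sub_eq_add_neg] at h0
  linarith

lemma abs_one_sub_one_sub_pow_sub_le {x : ℝ} (hx0 : 0 ≤ x) (hx1 : x ≤ 1) (n : ℕ) :
    |1 - (1 - x) ^ n - n * x| ≤ n ^ 2 * x ^ 2 := by
  have h := (abs_le.1 (abs_one_sub_one_sub_pow_le hx0 hx1 n)).2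
  rw [abs_of_nonpos (by linarith), neg_le_iff_add_nonneg']
  suffices (1 - x) ^ n ≤ 1 - n * x + n ^ 2 * x ^ 2 by linarith
  clear h
  induction n with
  | zero => simp
  | succ n ih =>
    have h := mul_le_mul_of_nonneg_right ih (sub_nonneg.2 hx1)
    have h2 : 0 ≤ (n + 1 : ℝ) * x ^ 2 := by positivity
    have h3 : 0 ≤ (n : ℝ) ^ 2 * x ^ 3 := by positivity
    rw [pow_succ]
    push_cast
    linarith

lemma tendsto_div_of_sub_isLittleO_add {A u v : ℕ → ℝ} {c : ℝ} (hA : ∀ n, 0 < A n)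
    (h : (fun n => u n - v n) =o[atTop] fun n => A n + u n)
    (hv : Tendsto (fun n => v n / A n) atTop (𝓝 c)) :
    Tendsto (fun n => u n / A n) atTop (𝓝 c) := by
  have hequiv : IsEquivalent atTop (fun n => A n + v n) fun n => A n + u n :=
    h.neg_left.congr_left fun n => by simp only [Pi.sub_apply]; ring
  have hdiv (w : ℕ → ℝ) (n : ℕ) : (A n + w n) / A n = 1 + w n / A n := by
    rw [add_div, div_self (hA n).ne']
  have := (hequiv.div (IsEquivalent.refl (u := A))).tendsto_nhds (c := 1 + c) <|
    (hv.const_add 1).congr fun n => (hdiv v n).symm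
  simpa using (this.congr fun n => hdiv u n).const_add (-1)

open Polynomial

variable {Ω : Type*} {m0 : MeasurableSpace Ω} {μ : Measure Ω} {F : Filtration ℕ m0}
  {ε γ m b : ℕ → Ω → ℝ} {σ a D : ℝ} {p l : ℕ} {q e : ℕ → Ω → ℝ} {Q : ℕ → Ω → ℝ[X]}

/-- The anisotropy of the recursion `IsEnergyRecursion` vanishes asymptotically. For
`E n = T n / tr (T n) - 1 / D`, where `D` is the dimension, `q n` stands for
`⟨N n, E n (N n)⟩ / tr (T n)`, `Q n` is the polynomial giving `q (n + 1)` in terms of the noise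
`ε n`, and `e n` bounds the norm of `E n`. -/
structure IsAsymptoticallyIsotropic (μ : Measure Ω) (F : Filtration ℕ m0)
    (ε γ m b : ℕ → Ω → ℝ) (D : ℝ) (q e : ℕ → Ω → ℝ) (Q : ℕ → Ω → ℝ[X]) : Prop where
  stronglyMeasurable_coeff (n j : ℕ) : StronglyMeasurable[F n] fun ω => (Q n ω).coeff j
  eval_eq (n : ℕ) (ω : Ω) : (Q n ω).eval (ε n ω) = q (n + 1) ω
  bound_nonneg (n : ℕ) (ω : Ω) : 0 ≤ e n ω
  abs_le (n : ℕ) (ω : Ω) : |q n ω| ≤ e n ω * m n ω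
  coeffAbsLE (n : ℕ) (ω : Ω) : CoeffAbsLE (Q n ω)
    (C (e (n + 1) ω) * (C √((1 - γ n ω) * m n ω) + C √(γ n ω) * X) ^ 2)
  sq_slope (n : ℕ) (ω : Ω) : b n ω ^ 2 =
    γ n ω * ((1 - γ n ω) * m n ω) / D + ((Q n ω).coeff 0 - (1 - γ n ω) ^ 2 * q n ω)
  ae_tendsto_bound : ∀ᵐ ω ∂μ, Tendsto (fun n => e n ω) atTop (𝓝 0)

namespace IsEnergyRecursion

lemma pred_energy_nonneg (hE : IsEnergyRecursion μ F ε γ m b) (n : ℕ) (ω : Ω) :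
    0 ≤ (1 - γ n ω) * m n ω :=
  mul_nonneg (sub_nonneg.2 (hE.weight_le_one n ω)) (hE.energy_nonneg n ω)

lemma pred_energy_le (hE : IsEnergyRecursion μ F ε γ m b) (n : ℕ) (ω : Ω) :
    (1 - γ n ω) * m n ω ≤ m n ω :=
  mul_le_of_le_one_left (hE.energy_nonneg n ω) (by linarith [hE.weight_nonneg n ω])

lemma eval_energyPoly (hE : IsEnergyRecursion μ F ε γ m b) (n : ℕ) (ω : Ω) :
    (energyPoly ((1 - γ n ω) * m n ω) (b n ω) (γ n ω)).eval (ε n ω) = m (n + 1) ω := by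
  rw [_root_.eval_energyPoly, hE.energy_succ]

lemma coeffAbsLE_energyPoly (hE : IsEnergyRecursion μ F ε γ m b) (n : ℕ) (ω : Ω) :
    CoeffAbsLE (energyPoly ((1 - γ n ω) * m n ω) (b n ω) (γ n ω))
      ((C √((1 - γ n ω) * m n ω) + C √(γ n ω) * X) ^ 2) :=
  _root_.coeffAbsLE_energyPoly (hE.pred_energy_nonneg n ω) (hE.weight_nonneg n ω)
    (hE.sq_slope_le n ω)

lemma stronglyMeasurable_coeff_energyPoly (hE : IsEnergyRecursion μ F ε γ m b) (n j : ℕ) :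
    StronglyMeasurable[F n]
      fun ω => (energyPoly ((1 - γ n ω) * m n ω) (b n ω) (γ n ω)).coeff j :=
  _root_.stronglyMeasurable_coeff_energyPoly
    ((stronglyMeasurable_const.sub (hE.stronglyMeasurable_weight n)).mul
      (hE.stronglyMeasurable_energy n))
    (hE.stronglyMeasurable_slope n) (hE.stronglyMeasurable_weight n) j

lemma abs_coeff_le (hE : IsEnergyRecursion μ F ε γ m b) (hlp : l ≤ p) {P : ℝ[X]} {c : ℝ}
    (hc : 0 ≤ c) {n : ℕ} {ω : Ω}
    (hP : CoeffAbsLE P (C c * (C √((1 - γ n ω) * m n ω) + C √(γ n ω) * X) ^ (2 * l))) (j : ℕ) :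
    |P.coeff j| ≤ 8 ^ p * c * √(γ n ω) ^ j * (1 + m n ω ^ p) := by
  calc |P.coeff j|
      ≤ c * ((C √((1 - γ n ω) * m n ω) + C √(γ n ω) * X) ^ (2 * l)).coeff j := by
        simpa only [coeff_C_mul] using hP j
    _ ≤ c * (8 ^ p * √(γ n ω) ^ j * (1 + m n ω ^ p)) := by
        gcongr
        exact coeff_C_sqrt_add_C_sqrt_mul_X_pow_le (hE.pred_energy_le n ω)
          (hE.energy_nonneg n ω) hlp j
    _ = 8 ^ p * c * √(γ n ω) ^ j * (1 + m n ω ^ p) := by ring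

lemma weight_mul_energy_pow_le (hE : IsEnergyRecursion μ F ε γ m b) (hlp : l ≤ p) (n : ℕ) (ω : Ω) :
    γ n ω * m n ω ^ l ≤ momentWeight γ m p n ω :=
  mul_le_mul_of_nonneg_left (pow_le_one_add_pow (hE.energy_nonneg n ω) hlp)
    (hE.weight_nonneg n ω)

lemma isLittleO_sum_energy_pow_sub_pred (hE : IsEnergyRecursion μ F ε γ m b) (hlp : l ≤ p) :
    ∀ᵐ ω ∂μ, (fun n => ∑ k ∈ range n,
        (m k ω ^ l - ((1 - γ k ω) * m k ω) ^ l - l * (γ k ω * m k ω ^ l)))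
      =o[atTop] cumWeight (momentWeight γ m p · ω) := by
  filter_upwards [hE.ae_tendsto_weight, hE.ae_tendsto_cumWeight_momentWeight p] with ω hγ0 hW
  have hθ := hγ0.const_mul ((l : ℝ) ^ 2)
  rw [mul_zero] at hθ
  refine isLittleO_sum_of_abs_le_mul (hE.momentWeight_nonneg p · ω) hW hθ fun n => ?_
  have hγ := hE.weight_nonneg n ω
  have hm := pow_nonneg (hE.energy_nonneg n ω) l
  calc |m n ω ^ l - ((1 - γ n ω) * m n ω) ^ l - l * (γ n ω * m n ω ^ l)|
      = |(1 - (1 - γ n ω) ^ l - l * γ n ω) * m n ω ^ l| := by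
        rw [mul_pow]
        ring_nf
    _ = |1 - (1 - γ n ω) ^ l - l * γ n ω| * m n ω ^ l := by rw [abs_mul, abs_of_nonneg hm]
    _ ≤ l ^ 2 * γ n ω ^ 2 * m n ω ^ l := by
        gcongr
        exact abs_one_sub_one_sub_pow_sub_le hγ (hE.weight_le_one n ω) l
    _ = l ^ 2 * γ n ω * (γ n ω * m n ω ^ l) := by ring
    _ ≤ l ^ 2 * γ n ω * momentWeight γ m p n ω := by
        gcongr
        exact hE.weight_mul_energy_pow_le hlp n ω

lemma isLittleO_sum_weight_mul_energy_pow_sub_pred (hE : IsEnergyRecursion μ F ε γ m b)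
    (hlp : l ≤ p) :
    ∀ᵐ ω ∂μ, (fun n => ∑ k ∈ range n, γ k ω * (m k ω ^ l - ((1 - γ k ω) * m k ω) ^ l))
      =o[atTop] cumWeight (momentWeight γ m p · ω) := by
  filter_upwards [hE.ae_tendsto_weight, hE.ae_tendsto_cumWeight_momentWeight p] with ω hγ0 hW
  have hθ := hγ0.const_mul (l : ℝ)
  rw [mul_zero] at hθ
  refine isLittleO_sum_of_abs_le_mul (hE.momentWeight_nonneg p · ω) hW hθ fun n => ?_
  have hγ := hE.weight_nonneg n ω
  have hm := pow_nonneg (hE.energy_nonneg n ω) l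
  calc |γ n ω * (m n ω ^ l - ((1 - γ n ω) * m n ω) ^ l)|
      = |(1 - (1 - γ n ω) ^ l) * (γ n ω * m n ω ^ l)| := by
        rw [mul_pow]
        ring_nf
    _ = |1 - (1 - γ n ω) ^ l| * (γ n ω * m n ω ^ l) := by
        rw [abs_mul, abs_of_nonneg (mul_nonneg hγ hm)]
    _ ≤ l * γ n ω * momentWeight γ m p n ω := by
        gcongr
        · exact abs_one_sub_one_sub_pow_le hγ (hE.weight_le_one n ω) l
        · exact hE.weight_mul_energy_pow_le hlp n ω

variable [IsFiniteMeasure μ]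

lemma isLittleO_sum_eval_sub_of_coeffAbsLE (hE : IsEnergyRecursion μ F ε γ m b)
    (hε : IsNoise μ F ε σ a) (hp : 1 ≤ p) (hpa : 2 * p < a) (hlp : l ≤ p) {P : ℕ → Ω → ℝ[X]}
    {c : ℕ → Ω → ℝ} (hc : ∀ n ω, 0 ≤ c n ω) (hc_le : ∀ᵐ ω ∂μ, BddAbove (Set.range (c · ω)))
    (hPm : ∀ n j, StronglyMeasurable[F n] fun ω => (P n ω).coeff j)
    (hP : ∀ n ω, CoeffAbsLE (P n ω)
      (C (c n ω) * (C √((1 - γ n ω) * m n ω) + C √(γ n ω) * X) ^ (2 * l))) :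
    ∀ᵐ ω ∂μ, (fun n => ∑ k ∈ range n,
        ((P k ω).eval (ε k ω) - ((P k ω).coeff 0 + σ ^ 2 * (P k ω).coeff 2)))
      =o[atTop] cumWeight (momentWeight γ m p · ω) := by
  refine hE.isLittleO_sum_eval_sub hε hp hpa (fun n ω => ?_) hPm ?_
  · exact (hP n ω).natDegree_le.trans ((natDegree_C_mul_le _ _).trans
      ((natDegree_C_add_C_mul_X_pow_le _ _ _).trans (by lia)))
  · filter_upwards [hc_le] with ω ⟨K, hK⟩
    refine ⟨8 ^ p * K, fun n j => (hE.abs_coeff_le hlp (hc n ω) (hP n ω) j).trans ?_⟩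
    have := pow_nonneg (hE.energy_nonneg n ω) p
    gcongr
    exact hK ⟨n, rfl⟩

lemma ae_isLittleO_pow (hE : IsEnergyRecursion μ F ε γ m b) (hε : IsNoise μ F ε σ a) (hp : 1 ≤ p)
    (hpa : 2 * p < a) :
    ∀ᵐ ω ∂μ, (m · ω ^ p) =o[atTop] cumWeight (momentWeight γ m p · ω) := by
  have hp1 : (1 : ℝ) ≤ p := mod_cast hp
  obtain ⟨r, hr1, -, hpr⟩ := exists_one_lt_le_two_mul_le (by linarith) hpa
  filter_upwards [hE.ae_isLittleO_pow_and_summable hε hp hr1 hpr] with ω ⟨hm, _⟩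
  refine hm.trans_le fun n => ?_
  rw [Real.norm_of_nonneg (cumWeight_pos (fun k => hE.weight_nonneg k ω) n).le,
    Real.norm_of_nonneg (cumWeight_pos (fun k => hE.momentWeight_nonneg p k ω) n).le]
  exact hE.cumWeight_le_cumWeight_momentWeight p n ω

end IsEnergyRecursion

namespace IsAsymptoticallyIsotropic

open IsEnergyRecursion

lemma abs_energy_pow_mul_le (hI : IsAsymptoticallyIsotropic μ F ε γ m b D q e Q)
    (hE : IsEnergyRecursion μ F ε γ m b) (l n : ℕ) (ω : Ω) :
    |m n ω ^ l * q n ω| ≤ e n ω * m n ω ^ (l + 1) := by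
  have hm := pow_nonneg (hE.energy_nonneg n ω) l
  calc |m n ω ^ l * q n ω| = m n ω ^ l * |q n ω| := by rw [abs_mul, abs_of_nonneg hm]
    _ ≤ m n ω ^ l * (e n ω * m n ω) := by gcongr; exact hI.abs_le n ω
    _ = e n ω * m n ω ^ (l + 1) := by ring

lemma coeffAbsLE_energyPoly_pow_mul (hI : IsAsymptoticallyIsotropic μ F ε γ m b D q e Q)
    (hE : IsEnergyRecursion μ F ε γ m b) (l n : ℕ) (ω : Ω) :
    CoeffAbsLE (energyPoly ((1 - γ n ω) * m n ω) (b n ω) (γ n ω) ^ l * Q n ω)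
      (C (e (n + 1) ω) * (C √((1 - γ n ω) * m n ω) + C √(γ n ω) * X) ^ (2 * (l + 1))) := by
  have := ((hE.coeffAbsLE_energyPoly n ω).pow l).mul (hI.coeffAbsLE n ω)
  rwa [← pow_mul, mul_left_comm, ← pow_add, ← mul_add_one] at this

variable [IsFiniteMeasure μ]

lemma isLittleO_energy_pow_mul (hI : IsAsymptoticallyIsotropic μ F ε γ m b D q e Q)
    (hE : IsEnergyRecursion μ F ε γ m b) (hε : IsNoise μ F ε σ a) (hlp : l < p)
    (hpa : 2 * p < a) :
    ∀ᵐ ω ∂μ, (fun n => m n ω ^ l * q n ω) =o[atTop] cumWeight (momentWeight γ m p · ω) := by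
  have hp : 1 ≤ p := by lia
  filter_upwards [hI.ae_tendsto_bound, hE.ae_isLittleO_pow hε hp hpa,
    hE.ae_tendsto_cumWeight_momentWeight p] with ω he hm hW
  have hle (n : ℕ) : ‖m n ω ^ l * q n ω‖ ≤ e n ω * (1 + m n ω ^ p) :=
    (hI.abs_energy_pow_mul_le hE l n ω).trans (mul_le_mul_of_nonneg_left
      (pow_le_one_add_pow (hE.energy_nonneg n ω) hlp) (hI.bound_nonneg n ω))
  refine (IsBigO.of_norm_le hle).trans_isLittleO ?_
  simpa only [one_mul] using
    (he.isBigO_one ℝ).mul_isLittleO ((isLittleO_const_of_tendsto_atTop hW 1).add hm)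

/-- The increments of `m ^ l * q` telescope, so their compensators are negligible. -/
lemma isLittleO_sum_coeff_zero_sub (hI : IsAsymptoticallyIsotropic μ F ε γ m b D q e Q)
    (hE : IsEnergyRecursion μ F ε γ m b) (hε : IsNoise μ F ε σ a) (hlp : l < p)
    (hpa : 2 * p < a) :
    ∀ᵐ ω ∂μ, (fun n => ∑ k ∈ range n, (((1 - γ k ω) * m k ω) ^ l * (Q k ω).coeff 0 -
      m k ω ^ l * q k ω)) =o[atTop] cumWeight (momentWeight γ m p · ω) := by
  set P : ℕ → Ω → ℝ[X] := fun n ω =>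
    energyPoly ((1 - γ n ω) * m n ω) (b n ω) (γ n ω) ^ l * Q n ω with hP
  have hmart := hE.isLittleO_sum_eval_sub_of_coeffAbsLE hε (by lia) hpa hlp (P := P)
    (fun n ω => hI.bound_nonneg (n + 1) ω)
    (hI.ae_tendsto_bound.mono fun ω h => (h.comp (tendsto_add_atTop_nat 1)).bddAbove_range)
    (fun n => stronglyMeasurable_coeff_mul (stronglyMeasurable_coeff_pow
      (hE.stronglyMeasurable_coeff_energyPoly n) l) (hI.stronglyMeasurable_coeff n))
    (hI.coeffAbsLE_energyPoly_pow_mul hE l)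
  filter_upwards [hmart, hI.ae_tendsto_bound, hI.isLittleO_energy_pow_mul hE hε hlp hpa,
    hE.ae_tendsto_cumWeight_momentWeight p] with ω hmart he htelescope hW
  have heval (n : ℕ) : (P n ω).eval (ε n ω) = m (n + 1) ω ^ l * q (n + 1) ω := by
    rw [hP, eval_mul, eval_pow, hE.eval_energyPoly, hI.eval_eq]
  have hcoeff0 (n : ℕ) : (P n ω).coeff 0 = ((1 - γ n ω) * m n ω) ^ l * (Q n ω).coeff 0 := by
    rw [hP, mul_coeff_zero, coeff_energyPoly_pow_zero]
  have hcoeff2 : (fun n => ∑ k ∈ range n, (P k ω).coeff 2)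
      =o[atTop] cumWeight (momentWeight γ m p · ω) := by
    have hθ := (he.comp (tendsto_add_atTop_nat 1)).const_mul (8 ^ p)
    rw [mul_zero] at hθ
    refine isLittleO_sum_of_abs_le_mul (hE.momentWeight_nonneg p · ω) hW hθ fun n =>
      (hE.abs_coeff_le hlp (hI.bound_nonneg (n + 1) ω)
        (hI.coeffAbsLE_energyPoly_pow_mul hE l n ω) 2).trans_eq ?_
    rw [Real.sq_sqrt (hE.weight_nonneg n ω), mul_assoc, momentWeight, Function.comp_apply]
  refine (((htelescope.sub (isLittleO_const_of_tendsto_atTop hW (m 0 ω ^ l * q 0 ω))).sub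
    hmart).sub (hcoeff2.const_mul_left (σ ^ 2))).congr_left fun n => ?_
  rw [← sum_range_sub fun k => m k ω ^ l * q k ω, mul_sum, ← sum_sub_distrib, ← sum_sub_distrib]
  exact sum_congr rfl fun k _ => by simp only [heval, hcoeff0]; ring

lemma isLittleO_sum_energy_pow_mul_sq_slope_sub
    (hI : IsAsymptoticallyIsotropic μ F ε γ m b D q e Q) (hE : IsEnergyRecursion μ F ε γ m b)
    (hε : IsNoise μ F ε σ a) (hlp : l < p) (hpa : 2 * p < a) :
    ∀ᵐ ω ∂μ, (fun n => ∑ k ∈ range n, ((1 - γ k ω) * m k ω) ^ l *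
      (b k ω ^ 2 - γ k ω * ((1 - γ k ω) * m k ω) / D))
      =o[atTop] cumWeight (momentWeight γ m p · ω) := by
  filter_upwards [hI.isLittleO_sum_coeff_zero_sub hE hε hlp hpa, hI.ae_tendsto_bound,
    hE.ae_tendsto_cumWeight_momentWeight p] with ω hQ he hW
  have hθ := he.const_mul (l + 2 : ℝ)
  rw [mul_zero] at hθ
  have hdamp := isLittleO_sum_of_abs_le_mul (hE.momentWeight_nonneg p · ω) hW hθ
    (v := fun k => (1 - (1 - γ k ω) ^ (l + 2)) * (m k ω ^ l * q k ω)) fun n => by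
      calc |(1 - (1 - γ n ω) ^ (l + 2)) * (m n ω ^ l * q n ω)|
          ≤ (l + 2) * γ n ω * (e n ω * m n ω ^ (l + 1)) := by
            rw [abs_mul]
            have := hE.weight_nonneg n ω
            gcongr
            · simpa using abs_one_sub_one_sub_pow_le this (hE.weight_le_one n ω) (l + 2)
            · exact hI.abs_energy_pow_mul_le hE l n ω
        _ = (l + 2) * e n ω * (γ n ω * m n ω ^ (l + 1)) := by ring
        _ ≤ (l + 2) * e n ω * momentWeight γ m p n ω := by
            have := hI.bound_nonneg n ω
            gcongr
            exact hE.weight_mul_energy_pow_le hlp n ω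
  refine (hQ.add hdamp).congr_left fun n => ?_
  rw [← sum_add_distrib]
  exact sum_congr rfl fun k _ => by rw [hI.sq_slope, mul_pow]; ring

lemma isLittleO_sum_energy_pow_sub (hI : IsAsymptoticallyIsotropic μ F ε γ m b D q e Q)
    (hE : IsEnergyRecursion μ F ε γ m b) (hε : IsNoise μ F ε σ a) (hla : 2 * (l + 1 : ℕ) < a) :
    ∀ᵐ ω ∂μ, (fun n => ∑ k ∈ range n, (m k ω ^ (l + 1) - ((1 - γ k ω) * m k ω) ^ (l + 1) -
      (l + 1) * (σ ^ 2 * (1 + 2 * l / D)) * (γ k ω * ((1 - γ k ω) * m k ω) ^ l)))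
      =o[atTop] cumWeight (momentWeight γ m (l + 1) · ω) := by
  have hmart := hE.isLittleO_sum_eval_sub_of_coeffAbsLE hε l.succ_pos hla le_rfl
    (c := fun _ _ => 1) (fun _ _ => zero_le_one) (.of_forall fun _ => by simp)
    (fun n => stronglyMeasurable_coeff_pow (hE.stronglyMeasurable_coeff_energyPoly n) (l + 1))
    (fun n ω => by simpa only [← pow_mul, map_one, one_mul] using
      (hE.coeffAbsLE_energyPoly n ω).pow (l + 1))
  have hslope := hI.isLittleO_sum_energy_pow_mul_sq_slope_sub hE hε
    (show l - 1 < l + 1 by lia) hla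
  filter_upwards [hmart, hslope, hE.ae_isLittleO_pow hε l.succ_pos hla,
    hE.ae_tendsto_cumWeight_momentWeight (l + 1)] with ω hmart hslope hm hW
  refine (((hm.sub (isLittleO_const_of_tendsto_atTop hW (m 0 ω ^ (l + 1)))).neg_left.add hmart).add
    (hslope.const_mul_left (σ ^ 2 * (2 * l * (l + 1))))).congr_left fun n => ?_
  rw [← sum_range_sub fun k => m k ω ^ (l + 1), mul_sum, ← sum_neg_distrib, ← sum_add_distrib,
    ← sum_add_distrib]
  refine sum_congr rfl fun k _ => ?_
  rw [eval_pow, hE.eval_energyPoly, coeff_energyPoly_pow_zero, coeff_energyPoly_pow_two]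
  cases l with
  | zero => simp; ring
  | succ l => simp only [Nat.add_sub_cancel]; push_cast; ring

lemma isLittleO_sum_weight_mul_energy_pow_sub
    (hI : IsAsymptoticallyIsotropic μ F ε γ m b D q e Q) (hE : IsEnergyRecursion μ F ε γ m b)
    (hε : IsNoise μ F ε σ a) (hla : 2 * (l + 1 : ℕ) < a) :
    ∀ᵐ ω ∂μ, (fun n => ∑ k ∈ range n,
        (γ k ω * m k ω ^ (l + 1) - σ ^ 2 * (1 + 2 * l / D) * (γ k ω * m k ω ^ l)))
      =o[atTop] cumWeight (momentWeight γ m (l + 1) · ω) := by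
  filter_upwards [hI.isLittleO_sum_energy_pow_sub hE hε hla,
    hE.isLittleO_sum_energy_pow_sub_pred (le_refl (l + 1)),
    hE.isLittleO_sum_weight_mul_energy_pow_sub_pred l.le_succ] with ω hmain hfirst hsecond
  set κ := σ ^ 2 * (1 + 2 * l / D)
  refine (((hmain.sub hfirst).sub (hsecond.const_mul_left ((l + 1) * κ))).const_mul_left
    (l + 1 : ℝ)⁻¹).congr_left fun n => ?_
  rw [mul_sum _ _ ((l + 1) * κ), ← sum_sub_distrib, ← sum_sub_distrib, mul_sum]
  refine sum_congr rfl fun k _ => ?_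
  push_cast
  field_simp
  ring

theorem ae_tendsto_sum_weight_mul_energy_pow_div
    (hI : IsAsymptoticallyIsotropic μ F ε γ m b D q e Q) (hE : IsEnergyRecursion μ F ε γ m b)
    (hε : IsNoise μ F ε σ a) (hpa : 2 * p < a) :
    ∀ᵐ ω ∂μ, Tendsto (fun n => (∑ k ∈ range n, γ k ω * m k ω ^ p) / cumWeight (γ · ω) n) atTop
      (𝓝 (∏ j ∈ range p, σ ^ 2 * (1 + 2 * j / D))) := by
  induction p with
  | zero =>
    filter_upwards [hE.ae_tendsto_cumWeight] with ω hA
    have h := (hA.inv_tendsto_atTop).const_sub 1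
    rw [sub_zero] at h
    refine h.congr fun n => ?_
    have := (cumWeight_pos (fun k => hE.weight_nonneg k ω) n).ne'
    simp only [pow_zero, mul_one, Pi.inv_apply]
    field_simp
    simp [cumWeight]
  | succ l ih =>
    filter_upwards [ih (lt_of_le_of_lt (by simp) hpa),
      hI.isLittleO_sum_weight_mul_energy_pow_sub hE hε hpa] with ω ih h
    refine tendsto_div_of_sub_isLittleO_add
      (v := fun n => σ ^ 2 * (1 + 2 * l / D) * ∑ k ∈ range n, γ k ω * m k ω ^ l)
      (cumWeight_pos (hE.weight_nonneg · ω)) (h.congr (fun n => ?_) fun n => ?_) ?_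
    · rw [sum_sub_distrib, mul_sum]
    · simp only [cumWeight, momentWeight, mul_add, mul_one, sum_add_distrib, add_assoc]
    · simpa only [prod_range_succ_comm, mul_div_assoc] using ih.const_mul (σ ^ 2 * (1 + 2 * l / D))

end IsAsymptoticallyIsotropic

end MomentRecursion

section QuadraticForms

open scoped Matrix.Norms.L2Operator

variable {ι : Type*} [Fintype ι]

lemma dotProduct_self_nonneg (u : ι → ℝ) : 0 ≤ u ⬝ᵥ u := by
  simpa using dotProduct_self_star_nonneg u

lemma sq_dotProduct_le (u v : ι → ℝ) : (u ⬝ᵥ v) ^ 2 ≤ (u ⬝ᵥ u) * (v ⬝ᵥ v) := by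
  simpa only [dotProduct, pow_two] using Finset.sum_mul_sq_le_sq_mul_sq univ u v

lemma norm_toLp_eq_sqrt_dotProduct_self (u : ι → ℝ) : ‖WithLp.toLp 2 u‖ = √(u ⬝ᵥ u) := by
  simp [EuclideanSpace.norm_eq, dotProduct, pow_two]

lemma abs_dotProduct_mulVec_le [DecidableEq ι] (A : Matrix ι ι ℝ) (u v : ι → ℝ) :
    |u ⬝ᵥ (A *ᵥ v)| ≤ ‖A‖ * (√(u ⬝ᵥ u) * √(v ⬝ᵥ v)) := by
  simp only [← norm_toLp_eq_sqrt_dotProduct_self]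
  calc |u ⬝ᵥ (A *ᵥ v)| = |inner ℝ (WithLp.toLp 2 (A *ᵥ v)) (WithLp.toLp 2 u)| := by
        rw [EuclideanSpace.inner_eq_star_dotProduct, star_trivial]
    _ ≤ ‖WithLp.toLp 2 (A *ᵥ v)‖ * ‖WithLp.toLp 2 u‖ := abs_real_inner_le_norm _ _
    _ ≤ ‖A‖ * ‖WithLp.toLp 2 v‖ * ‖WithLp.toLp 2 u‖ := by
        gcongr
        exact Matrix.l2_opNorm_mulVec A (WithLp.toLp 2 v)
    _ = ‖A‖ * (‖WithLp.toLp 2 u‖ * ‖WithLp.toLp 2 v‖) := by ring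

lemma abs_dotProduct_mulVec_self_le [DecidableEq ι] (A : Matrix ι ι ℝ) (u : ι → ℝ) :
    |u ⬝ᵥ (A *ᵥ u)| ≤ ‖A‖ * (u ⬝ᵥ u) := by
  simpa only [Real.mul_self_sqrt (dotProduct_self_nonneg u)] using abs_dotProduct_mulVec_le A u u

open scoped MatrixOrder in
lemma sq_dotProduct_mulVec_le {A : Matrix ι ι ℝ}
    (hA : A.PosSemidef) (u v : ι → ℝ) :
    (u ⬝ᵥ (A *ᵥ v)) ^ 2 ≤ (u ⬝ᵥ (A *ᵥ u)) * (v ⬝ᵥ (A *ᵥ v)) := by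
  classical
  obtain ⟨B, rfl⟩ := CStarAlgebra.nonneg_iff_eq_star_mul_self.1 hA.nonneg
  have hB (u v : ι → ℝ) : u ⬝ᵥ ((star B * B) *ᵥ v) = (B *ᵥ u) ⬝ᵥ (B *ᵥ v) := by
    rw [star_eq_conjTranspose, conjTranspose_eq_transpose_of_trivial, ← mulVec_mulVec,
      dotProduct_mulVec, vecMul_transpose]
  simpa only [hB] using sq_dotProduct_le (B *ᵥ u) (B *ᵥ v)

lemma dotProduct_self_le_norm_mul_inv [DecidableEq ι] {A : Matrix ι ι ℝ} (hA : A.PosDef)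
    (u : ι → ℝ) : u ⬝ᵥ u ≤ ‖A‖ * (u ⬝ᵥ (A⁻¹ *ᵥ u)) := by
  have hAinv : A *ᵥ (A⁻¹ *ᵥ u) = u := by
    rw [mulVec_mulVec, mul_nonsing_inv A ((isUnit_iff_isUnit_det A).1 hA.isUnit), one_mulVec]
  have hnonneg : 0 ≤ u ⬝ᵥ (A⁻¹ *ᵥ u) := by
    simpa using hA.inv.posSemidef.dotProduct_mulVec_nonneg u
  obtain hu | hu := (dotProduct_self_nonneg u).eq_or_lt
  · rw [← hu]
    positivity
  refine le_of_mul_le_mul_right ?_ hu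
  calc (u ⬝ᵥ u) * (u ⬝ᵥ u) = (u ⬝ᵥ (A *ᵥ (A⁻¹ *ᵥ u))) ^ 2 := by rw [hAinv, pow_two]
    _ ≤ (u ⬝ᵥ (A *ᵥ u)) * ((A⁻¹ *ᵥ u) ⬝ᵥ (A *ᵥ (A⁻¹ *ᵥ u))) :=
        sq_dotProduct_mulVec_le hA.posSemidef _ _
    _ ≤ ‖A‖ * (u ⬝ᵥ u) * (u ⬝ᵥ (A⁻¹ *ᵥ u)) := by
        rw [hAinv, dotProduct_comm (A⁻¹ *ᵥ u) u]
        gcongr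
        exact (le_abs_self _).trans (abs_dotProduct_mulVec_self_le A u)
    _ = ‖A‖ * (u ⬝ᵥ (A⁻¹ *ᵥ u)) * (u ⬝ᵥ u) := by ring

variable {Ω : Type*} {_ : MeasurableSpace Ω} {u v : Ω → ι → ℝ}

lemma stronglyMeasurable_dotProduct (hu : StronglyMeasurable u) (hv : StronglyMeasurable v) :
    StronglyMeasurable fun ω => u ω ⬝ᵥ v ω :=
  (show Continuous fun z : (ι → ℝ) × (ι → ℝ) => z.1 ⬝ᵥ z.2 by fun_prop).comp_stronglyMeasurable
    (hu.prodMk hv)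

lemma stronglyMeasurable_mulVec {A : Ω → Matrix ι ι ℝ} (hA : StronglyMeasurable A)
    (hv : StronglyMeasurable v) : StronglyMeasurable fun ω => A ω *ᵥ v ω :=
  (show Continuous fun z : Matrix ι ι ℝ × (ι → ℝ) => z.1 *ᵥ z.2 by
    fun_prop).comp_stronglyMeasurable (hA.prodMk hv)

end QuadraticForms

section GramMatrix

variable {Ω : Type*} {d : ℕ}

/-- The Gram matrix `T + ∑_{k<n} x(k) x(k)ᵗ` of the regressors `x`, started at `T`. In contrast to
`Smat`, the regressor with index `n` is not included. -/
def gramMatrix (T : Matrix (Fin d) (Fin d) ℝ) (x : ℕ → Ω → Fin d → ℝ) (n : ℕ) (ω : Ω) :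
    Matrix (Fin d) (Fin d) ℝ :=
  T + ∑ k ∈ range n, vecMulVec (x k ω) (x k ω)

/-- The trace of the Gram matrix, which plays the role of time: it is the sequence `β` of the
theorem, shifted by one. -/
def gramTrace (T : Matrix (Fin d) (Fin d) ℝ) (x : ℕ → Ω → Fin d → ℝ) (n : ℕ) (ω : Ω) : ℝ :=
  (gramMatrix T x n ω).trace

/-- The deviation of the trace-normalised Gram matrix from its isotropic value `d⁻¹ • 1`. -/
def anisotropy (T : Matrix (Fin d) (Fin d) ℝ) (x : ℕ → Ω → Fin d → ℝ) (n : ℕ) (ω : Ω) :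
    Matrix (Fin d) (Fin d) ℝ :=
  (gramTrace T x n ω)⁻¹ • gramMatrix T x n ω - (d : ℝ)⁻¹ • 1

/-- The relative increment of the trace of the Gram matrix: the sequence `γ` of the theorem,
shifted by one. -/
def gramWeight (T : Matrix (Fin d) (Fin d) ℝ) (x : ℕ → Ω → Fin d → ℝ) (n : ℕ) (ω : Ω) : ℝ :=
  x n ω ⬝ᵥ x n ω / gramTrace T x (n + 1) ω

variable (T : Matrix (Fin d) (Fin d) ℝ) (x : ℕ → Ω → Fin d → ℝ) (n : ℕ) (ω : Ω)

lemma gramMatrix_succ :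
    gramMatrix T x (n + 1) ω = gramMatrix T x n ω + vecMulVec (x n ω) (x n ω) := by
  simp only [gramMatrix, sum_range_succ, add_assoc]

lemma gramTrace_succ : gramTrace T x (n + 1) ω = gramTrace T x n ω + x n ω ⬝ᵥ x n ω := by
  rw [gramTrace, gramMatrix_succ, trace_add, trace_vecMulVec, gramTrace]

lemma dotProduct_gramMatrix_succ_mulVec (u v : Fin d → ℝ) :
    u ⬝ᵥ (gramMatrix T x (n + 1) ω *ᵥ v) =
      u ⬝ᵥ (gramMatrix T x n ω *ᵥ v) + (u ⬝ᵥ x n ω) * (x n ω ⬝ᵥ v) := by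
  rw [gramMatrix_succ, add_mulVec, dotProduct_add, vecMulVec_mulVec, dotProduct_smul,
    op_smul_eq_smul, smul_eq_mul, mul_comm (x n ω ⬝ᵥ v)]

lemma dotProduct_anisotropy_mulVec (u v : Fin d → ℝ) :
    u ⬝ᵥ (anisotropy T x n ω *ᵥ v) =
      (gramTrace T x n ω)⁻¹ * (u ⬝ᵥ (gramMatrix T x n ω *ᵥ v)) - (d : ℝ)⁻¹ * (u ⬝ᵥ v) := by
  simp only [anisotropy, sub_mulVec, smul_mulVec, one_mulVec, dotProduct_sub, dotProduct_smul,
    smul_eq_mul]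

variable {T}

lemma gramTrace_pos (hT : 0 < T.trace) : 0 < gramTrace T x n ω := by
  induction n with
  | zero => simpa [gramTrace, gramMatrix] using hT
  | succ n ih =>
    rw [gramTrace_succ]
    exact add_pos_of_pos_of_nonneg ih (dotProduct_self_nonneg _)

lemma one_sub_gramWeight (hT : 0 < T.trace) :
    1 - gramWeight T x n ω = gramTrace T x n ω / gramTrace T x (n + 1) ω := by
  have := (gramTrace_pos x (n + 1) ω hT).ne'
  rw [gramWeight, eq_div_iff this, sub_mul, div_mul_cancel₀ _ this, gramTrace_succ]
  ring

lemma gramWeight_eq :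
    gramWeight T x n ω =
      (gramTrace T x (n + 1) ω - gramTrace T x n ω) / gramTrace T x (n + 1) ω := by
  rw [gramWeight, gramTrace_succ, add_sub_cancel_left]

lemma monotone_gramTrace : Monotone fun n => gramTrace T x n ω :=
  monotone_nat_of_le_succ fun n => by
    rw [gramTrace_succ]
    exact le_add_of_nonneg_right (dotProduct_self_nonneg _)

lemma gramWeight_nonneg (hT : 0 < T.trace) : 0 ≤ gramWeight T x n ω :=
  div_nonneg (dotProduct_self_nonneg _) (gramTrace_pos x (n + 1) ω hT).le

lemma gramWeight_le_one (hT : 0 < T.trace) : gramWeight T x n ω ≤ 1 := by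
  rw [← sub_nonneg, one_sub_gramWeight x n ω hT]
  exact div_nonneg (gramTrace_pos x n ω hT).le (gramTrace_pos x (n + 1) ω hT).le

variable {n} {x} {m0 : MeasurableSpace Ω} {F : Filtration ℕ m0} {l : ℕ}

lemma stronglyMeasurable_gramMatrix (hx : ∀ k, StronglyMeasurable[F k] (x k)) (hn : n ≤ l + 1) :
    StronglyMeasurable[F l] (gramMatrix T x n) := by
  refine stronglyMeasurable_const.add (Finset.stronglyMeasurable_fun_sum _ fun k hk => ?_)
  have hk : k ≤ l := by grind
  exact (show Continuous fun z : Fin d → ℝ => vecMulVec z z by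
    fun_prop).comp_stronglyMeasurable ((hx k).mono (F.mono hk))

lemma stronglyMeasurable_gramTrace (hx : ∀ k, StronglyMeasurable[F k] (x k)) (hn : n ≤ l + 1) :
    StronglyMeasurable[F l] (gramTrace T x n) :=
  (show Continuous fun A : Matrix (Fin d) (Fin d) ℝ => A.trace by
    fun_prop).comp_stronglyMeasurable (stronglyMeasurable_gramMatrix hx hn)

lemma stronglyMeasurable_anisotropy (hx : ∀ k, StronglyMeasurable[F k] (x k)) (hn : n ≤ l + 1) :
    StronglyMeasurable[F l] (anisotropy T x n) :=
  ((stronglyMeasurable_gramTrace hx hn).measurable.inv.stronglyMeasurable.smul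
    (stronglyMeasurable_gramMatrix hx hn)).sub stronglyMeasurable_const

end GramMatrix

section LogarithmicWeights

lemma abs_relativeIncrement_sub_log_le {s t : ℝ} (hs : 0 < s) (ht : 0 < t) :
    |(t - s) / t - (Real.log t - Real.log s)| ≤ (t - s) / t * (Real.log t - Real.log s) := by
  have hw : (t - s) / t = 1 - s / t := by rw [sub_div, div_self ht.ne']
  have hlower : 1 - s / t ≤ Real.log t - Real.log s := by
    rw [← Real.log_div ht.ne' hs.ne', ← inv_div]
    exact Real.one_sub_inv_le_log_of_pos (div_pos ht hs)
  have hupper : s / t * (Real.log t - Real.log s) ≤ 1 - s / t :=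
    calc s / t * (Real.log t - Real.log s) = s / t * Real.log (t / s) := by
          rw [Real.log_div ht.ne' hs.ne']
      _ ≤ s / t * (t / s - 1) := by
          gcongr
          exact Real.log_le_sub_one_of_pos (div_pos ht hs)
      _ = 1 - s / t := by field_simp
  rw [hw, abs_of_nonpos (sub_nonpos.2 hlower)]
  linarith

variable {b : ℕ → ℝ}

lemma tendsto_cumWeight_div_log (hb : ∀ n, 0 < b n) (hmono : Monotone b)
    (htop : Tendsto b atTop atTop)
    (hweight : Tendsto (fun n => (b (n + 1) - b n) / b (n + 1)) atTop (𝓝 0)) :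
    Tendsto (fun n => cumWeight (fun k => (b (k + 1) - b k) / b (k + 1)) n / Real.log (b n))
      atTop (𝓝 1) := by
  set w : ℕ → ℝ := fun k => (b (k + 1) - b k) / b (k + 1)
  set g : ℕ → ℝ := fun n => Real.log (b n)
  have hgtop : Tendsto g atTop atTop := Real.tendsto_log_atTop.comp htop
  have hgmono : Monotone g := fun i j hij => Real.log_le_log (hb i) (hmono hij)
  have hsum : (fun n => ∑ k ∈ range n, (w k - (g (k + 1) - g k))) =o[atTop] g := by
    refine (IsBigO.of_norm_le fun n => ?_).trans_isLittleO
      (isLittleO_sum_mul_sub hgmono hgtop hweight)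
    exact (abs_sum_le_sum_abs _ _).trans
      (sum_le_sum fun k _ => abs_relativeIncrement_sub_log_le (hb k) (hb (k + 1)))
  have hdiff : (fun n => cumWeight w n - g n) =o[atTop] g := by
    refine (hsum.add (isLittleO_const_of_tendsto_atTop hgtop (1 - g 0))).congr_left fun n => ?_
    rw [sum_sub_distrib, sum_range_sub, cumWeight]
    ring
  have hlim := hdiff.tendsto_div_nhds_zero.add_const 1
  rw [zero_add] at hlim
  refine hlim.congr' ?_
  filter_upwards [hgtop.eventually_gt_atTop 0] with n hn
  rw [sub_div, div_self hn.ne', sub_add_cancel]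

lemma tendsto_cumWeight_atTop (hb : ∀ n, 0 < b n) (hmono : Monotone b)
    (htop : Tendsto b atTop atTop)
    (hweight : Tendsto (fun n => (b (n + 1) - b n) / b (n + 1)) atTop (𝓝 0)) :
    Tendsto (cumWeight fun k => (b (k + 1) - b k) / b (k + 1)) atTop atTop := by
  have hgtop : Tendsto (fun n => Real.log (b n)) atTop atTop := Real.tendsto_log_atTop.comp htop
  refine ((tendsto_cumWeight_div_log hb hmono htop hweight).pos_mul_atTop one_pos hgtop).congr' ?_
  filter_upwards [hgtop.eventually_gt_atTop 0] with n hn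
  rw [div_mul_cancel₀ _ hn.ne']

end LogarithmicWeights

section RegressionRecursion

open scoped Matrix.Norms.L2Operator

variable {Ω : Type*} {d : ℕ}

/-- The energy `β(n-1)⁻¹ |N(n)|²` of the martingale transform `N = Mart N₀ x ε`, normalised by the
trace of the Gram matrix of its regressors. -/
def transformEnergy (T : Matrix (Fin d) (Fin d) ℝ) (N₀ : Ω → Fin d → ℝ) (x : ℕ → Ω → Fin d → ℝ)
    (ε : ℕ → Ω → ℝ) (n : ℕ) (ω : Ω) : ℝ :=
  (gramTrace T x n ω)⁻¹ * (Mart N₀ x ε n ω ⬝ᵥ Mart N₀ x ε n ω)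

/-- Half the coefficient of the noise in the recursion for `transformEnergy`. -/
def transformSlope (T : Matrix (Fin d) (Fin d) ℝ) (N₀ : Ω → Fin d → ℝ) (x : ℕ → Ω → Fin d → ℝ)
    (ε : ℕ → Ω → ℝ) (n : ℕ) (ω : Ω) : ℝ :=
  (gramTrace T x (n + 1) ω)⁻¹ * (Mart N₀ x ε n ω ⬝ᵥ x n ω)

/-- The part of the quadratic form of the Gram matrix at the martingale transform that is not
accounted for by isotropy, normalised like `transformEnergy`. -/
def transformAnisotropy (T : Matrix (Fin d) (Fin d) ℝ) (N₀ : Ω → Fin d → ℝ)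
    (x : ℕ → Ω → Fin d → ℝ) (ε : ℕ → Ω → ℝ) (n : ℕ) (ω : Ω) : ℝ :=
  (gramTrace T x n ω)⁻¹ *
    (Mart N₀ x ε n ω ⬝ᵥ (anisotropy T x n ω *ᵥ Mart N₀ x ε n ω))

open Polynomial in
/-- The polynomial in the noise giving the next value of `transformAnisotropy`. -/
def anisotropyPoly (T : Matrix (Fin d) (Fin d) ℝ) (N₀ : Ω → Fin d → ℝ)
    (x : ℕ → Ω → Fin d → ℝ) (ε : ℕ → Ω → ℝ) (n : ℕ) (ω : Ω) : ℝ[X] :=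
  let β := gramTrace T x (n + 1) ω
  let E := anisotropy T x (n + 1) ω
  let N := Mart N₀ x ε n ω
  energyPoly (β⁻¹ * (N ⬝ᵥ (E *ᵥ N))) (β⁻¹ * ((N ⬝ᵥ (E *ᵥ x n ω) + x n ω ⬝ᵥ (E *ᵥ N)) / 2))
    (β⁻¹ * (x n ω ⬝ᵥ (E *ᵥ x n ω)))

variable {T : Matrix (Fin d) (Fin d) ℝ} {N₀ : Ω → Fin d → ℝ} {x : ℕ → Ω → Fin d → ℝ}
  {ε : ℕ → Ω → ℝ}

lemma Mart_succ (n : ℕ) (ω : Ω) :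
    Mart N₀ x ε (n + 1) ω = Mart N₀ x ε n ω + ε (n + 1) ω • x n ω := by
  simp only [Mart, sum_range_succ, add_assoc]

lemma one_sub_gramWeight_mul_transformEnergy (hT : 0 < T.trace) (n : ℕ) (ω : Ω) :
    (1 - gramWeight T x n ω) * transformEnergy T N₀ x ε n ω =
      (gramTrace T x (n + 1) ω)⁻¹ * (Mart N₀ x ε n ω ⬝ᵥ Mart N₀ x ε n ω) := by
  have := (gramTrace_pos x n ω hT).ne'
  rw [one_sub_gramWeight x n ω hT, transformEnergy]
  field_simp

lemma sq_transformSlope_le (hT : 0 < T.trace) (n : ℕ) (ω : Ω) :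
    transformSlope T N₀ x ε n ω ^ 2 ≤
      (1 - gramWeight T x n ω) * transformEnergy T N₀ x ε n ω * gramWeight T x n ω := by
  rw [one_sub_gramWeight_mul_transformEnergy hT, gramWeight, transformSlope, mul_pow]
  calc (gramTrace T x (n + 1) ω)⁻¹ ^ 2 * (Mart N₀ x ε n ω ⬝ᵥ x n ω) ^ 2
      ≤ (gramTrace T x (n + 1) ω)⁻¹ ^ 2 *
          ((Mart N₀ x ε n ω ⬝ᵥ Mart N₀ x ε n ω) * (x n ω ⬝ᵥ x n ω)) := by
        gcongr
        exact sq_dotProduct_le _ _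
    _ = _ := by ring

lemma transformEnergy_succ (hT : 0 < T.trace) (n : ℕ) (ω : Ω) :
    transformEnergy T N₀ x ε (n + 1) ω =
      (1 - gramWeight T x n ω) * transformEnergy T N₀ x ε n ω +
        2 * transformSlope T N₀ x ε n ω * ε (n + 1) ω + gramWeight T x n ω * ε (n + 1) ω ^ 2 := by
  rw [one_sub_gramWeight_mul_transformEnergy hT, transformEnergy, transformSlope, gramWeight,
    Mart_succ]
  simp only [add_dotProduct, dotProduct_add, smul_dotProduct, dotProduct_smul, smul_eq_mul,
    dotProduct_comm (x n ω) (Mart N₀ x ε n ω)]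
  ring

lemma eval_anisotropyPoly (n : ℕ) (ω : Ω) :
    (anisotropyPoly T N₀ x ε n ω).eval (ε (n + 1) ω) = transformAnisotropy T N₀ x ε (n + 1) ω := by
  rw [anisotropyPoly, eval_energyPoly, transformAnisotropy, Mart_succ]
  simp only [mulVec_add, mulVec_smul, add_dotProduct, dotProduct_add, smul_dotProduct,
    dotProduct_smul, smul_eq_mul]
  ring

lemma abs_transformAnisotropy_le (hT : 0 < T.trace) (n : ℕ) (ω : Ω) :
    |transformAnisotropy T N₀ x ε n ω| ≤
      ‖anisotropy T x n ω‖ * transformEnergy T N₀ x ε n ω := by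
  have := gramTrace_pos x n ω hT
  rw [transformAnisotropy, abs_mul, abs_of_pos (inv_pos.2 this), transformEnergy, mul_left_comm]
  gcongr
  exact abs_dotProduct_mulVec_self_le _ _

lemma coeffAbsLE_anisotropyPoly (hT : 0 < T.trace) (n : ℕ) (ω : Ω) :
    CoeffAbsLE (anisotropyPoly T N₀ x ε n ω) (Polynomial.C ‖anisotropy T x (n + 1) ω‖ *
      (Polynomial.C √((1 - gramWeight T x n ω) * transformEnergy T N₀ x ε n ω) +
        Polynomial.C √(gramWeight T x n ω) * Polynomial.X) ^ 2) := by
  have hβ := inv_pos.2 (gramTrace_pos x (n + 1) ω hT)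
  have hsqrt : √(Mart N₀ x ε n ω ⬝ᵥ Mart N₀ x ε n ω) * √(x n ω ⬝ᵥ x n ω) *
      (gramTrace T x (n + 1) ω)⁻¹ =
      √((gramTrace T x (n + 1) ω)⁻¹ * (Mart N₀ x ε n ω ⬝ᵥ Mart N₀ x ε n ω)) *
        √((gramTrace T x (n + 1) ω)⁻¹ * (x n ω ⬝ᵥ x n ω)) := by
    rw [Real.sqrt_mul hβ.le, Real.sqrt_mul hβ.le, mul_mul_mul_comm, Real.mul_self_sqrt hβ.le]
    ring
  rw [one_sub_gramWeight_mul_transformEnergy hT, gramWeight, div_eq_inv_mul]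
  refine coeffAbsLE_energyPoly_of_abs_le (mul_nonneg hβ.le (dotProduct_self_nonneg _))
    (mul_nonneg hβ.le (dotProduct_self_nonneg _)) ?_ ?_ ?_
  · rw [abs_mul, abs_of_pos hβ, mul_left_comm]
    gcongr
    exact abs_dotProduct_mulVec_self_le _ _
  · have h₁ := abs_dotProduct_mulVec_le (anisotropy T x (n + 1) ω) (Mart N₀ x ε n ω) (x n ω)
    have h₂ := abs_dotProduct_mulVec_le (anisotropy T x (n + 1) ω) (x n ω) (Mart N₀ x ε n ω)
    rw [← hsqrt, abs_mul, abs_of_pos hβ, ← mul_assoc ‖_‖, mul_comm _ (gramTrace T x (n + 1) ω)⁻¹,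
      abs_div, abs_two]
    gcongr
    linarith [abs_add_le (Mart N₀ x ε n ω ⬝ᵥ (anisotropy T x (n + 1) ω *ᵥ x n ω))
      (x n ω ⬝ᵥ (anisotropy T x (n + 1) ω *ᵥ Mart N₀ x ε n ω))]
  · rw [abs_mul, abs_of_pos hβ, mul_left_comm]
    gcongr
    exact abs_dotProduct_mulVec_self_le _ _

lemma sq_transformSlope_eq (hT : 0 < T.trace) (n : ℕ) (ω : Ω) :
    transformSlope T N₀ x ε n ω ^ 2 =
      gramWeight T x n ω * ((1 - gramWeight T x n ω) * transformEnergy T N₀ x ε n ω) / d +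
        ((anisotropyPoly T N₀ x ε n ω).coeff 0 -
          (1 - gramWeight T x n ω) ^ 2 * transformAnisotropy T N₀ x ε n ω) := by
  have h₀ := (gramTrace_pos x n ω hT).ne'
  have h₁ := (gramTrace_pos x (n + 1) ω hT).ne'
  have hx : x n ω ⬝ᵥ x n ω = gramTrace T x (n + 1) ω - gramTrace T x n ω := by
    rw [gramTrace_succ, add_sub_cancel_left]
  rw [one_sub_gramWeight_mul_transformEnergy hT, one_sub_gramWeight x n ω hT, anisotropyPoly,
    coeff_energyPoly_zero, transformAnisotropy, transformSlope, gramWeight, hx,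
    dotProduct_anisotropy_mulVec, dotProduct_anisotropy_mulVec, dotProduct_gramMatrix_succ_mulVec,
    dotProduct_comm (x n ω)]
  field_simp
  ring

section

variable {ω : Ω}

lemma tendsto_cumWeight_gramWeight_div_log (hT : 0 < T.trace)
    (hweight : Tendsto (fun n => gramWeight T x n ω) atTop (𝓝 0))
    (htop : Tendsto (fun n => gramTrace T x n ω) atTop atTop) :
    Tendsto (fun n => cumWeight (gramWeight T x · ω) n / Real.log (gramTrace T x n ω)) atTop
      (𝓝 1) := by
  simp only [gramWeight_eq] at hweight ⊢
  exact tendsto_cumWeight_div_log (b := fun n => gramTrace T x n ω)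
    (fun n => gramTrace_pos x n ω hT) (monotone_gramTrace x ω) htop hweight

lemma tendsto_cumWeight_gramWeight_atTop (hT : 0 < T.trace)
    (hweight : Tendsto (fun n => gramWeight T x n ω) atTop (𝓝 0))
    (htop : Tendsto (fun n => gramTrace T x n ω) atTop atTop) :
    Tendsto (cumWeight (gramWeight T x · ω)) atTop atTop := by
  simp only [gramWeight_eq] at hweight ⊢
  exact tendsto_cumWeight_atTop (b := fun n => gramTrace T x n ω)
    (fun n => gramTrace_pos x n ω hT) (monotone_gramTrace x ω) htop hweight

end

variable {m0 : MeasurableSpace Ω} {μ : Measure Ω} {F : Filtration ℕ m0}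

lemma stronglyMeasurable_Mart (hx : ∀ n, StronglyMeasurable[F n] (x n))
    (hN₀ : StronglyMeasurable[F 0] N₀) (hε : ∀ n, StronglyMeasurable[F n] (ε n)) (n : ℕ) :
    StronglyMeasurable[F n] (Mart N₀ x ε n) := by
  refine (hN₀.mono (F.mono n.zero_le)).add (Finset.stronglyMeasurable_fun_sum _ fun k hk => ?_)
  have hk := mem_range.1 hk
  exact ((hε (k + 1)).mono (F.mono hk)).smul ((hx k).mono (F.mono hk.le))

lemma stronglyMeasurable_coeff_anisotropyPoly (hx : ∀ n, StronglyMeasurable[F n] (x n))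
    (hN₀ : StronglyMeasurable[F 0] N₀) (hε : ∀ n, StronglyMeasurable[F n] (ε n)) (n j : ℕ) :
    StronglyMeasurable[F n] fun ω => (anisotropyPoly T N₀ x ε n ω).coeff j := by
  have hβ : StronglyMeasurable[F n] fun ω => (gramTrace T x (n + 1) ω)⁻¹ :=
    (stronglyMeasurable_gramTrace hx le_rfl).measurable.inv.stronglyMeasurable
  have hE := stronglyMeasurable_anisotropy (T := T) hx (le_refl (n + 1))
  have hN := stronglyMeasurable_Mart hx hN₀ hε n
  have hNE := stronglyMeasurable_mulVec hE hN
  have hxE := stronglyMeasurable_mulVec hE (hx n)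
  exact stronglyMeasurable_coeff_energyPoly (hβ.mul (stronglyMeasurable_dotProduct hN hNE))
    (hβ.mul (((stronglyMeasurable_dotProduct hN hxE).add
      (stronglyMeasurable_dotProduct (hx n) hNE)).measurable.div_const 2).stronglyMeasurable)
    (hβ.mul (stronglyMeasurable_dotProduct (hx n) hxE)) j

lemma isAsymptoticallyIsotropic_transform (hT : 0 < T.trace)
    (hx : ∀ n, StronglyMeasurable[F n] (x n)) (hN₀ : StronglyMeasurable[F 0] N₀)
    (hε : ∀ n, StronglyMeasurable[F n] (ε n))
    (haniso : ∀ᵐ ω ∂μ, Tendsto (fun n => anisotropy T x n ω) atTop (𝓝 0)) :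
    IsAsymptoticallyIsotropic μ F (fun n => ε (n + 1)) (gramWeight T x) (transformEnergy T N₀ x ε)
      (transformSlope T N₀ x ε) d (transformAnisotropy T N₀ x ε)
      (fun n ω => ‖anisotropy T x n ω‖) (anisotropyPoly T N₀ x ε) where
  stronglyMeasurable_coeff := stronglyMeasurable_coeff_anisotropyPoly hx hN₀ hε
  eval_eq := eval_anisotropyPoly
  bound_nonneg _ _ := norm_nonneg _
  abs_le := abs_transformAnisotropy_le hT
  coeffAbsLE := coeffAbsLE_anisotropyPoly hT
  sq_slope := sq_transformSlope_eq hT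
  ae_tendsto_bound := by
    filter_upwards [haniso] with ω h
    simpa only [norm_zero] using h.norm

lemma isEnergyRecursion_transform (hT : 0 < T.trace) (hx : ∀ n, StronglyMeasurable[F n] (x n))
    (hN₀ : StronglyMeasurable[F 0] N₀) (hε : ∀ n, StronglyMeasurable[F n] (ε n))
    (hweight : ∀ᵐ ω ∂μ, Tendsto (fun n => gramWeight T x n ω) atTop (𝓝 0))
    (htop : ∀ᵐ ω ∂μ, Tendsto (fun n => gramTrace T x n ω) atTop atTop) :
    IsEnergyRecursion μ F (fun n => ε (n + 1)) (gramWeight T x) (transformEnergy T N₀ x ε)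
      (transformSlope T N₀ x ε) where
  stronglyMeasurable_weight n := ((stronglyMeasurable_dotProduct (hx n) (hx n)).measurable.div
    (stronglyMeasurable_gramTrace hx le_rfl).measurable).stronglyMeasurable
  stronglyMeasurable_energy n :=
    have hN := stronglyMeasurable_Mart hx hN₀ hε n
    (stronglyMeasurable_gramTrace hx n.le_succ).measurable.inv.stronglyMeasurable.mul
      (stronglyMeasurable_dotProduct hN hN)
  stronglyMeasurable_slope n :=
    (stronglyMeasurable_gramTrace hx le_rfl).measurable.inv.stronglyMeasurable.mul
      (stronglyMeasurable_dotProduct (stronglyMeasurable_Mart hx hN₀ hε n) (hx n))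
  weight_nonneg n ω := gramWeight_nonneg x n ω hT
  weight_le_one n ω := gramWeight_le_one x n ω hT
  energy_nonneg n ω :=
    mul_nonneg (inv_pos.2 (gramTrace_pos x n ω hT)).le (dotProduct_self_nonneg _)
  sq_slope_le := sq_transformSlope_le hT
  energy_succ := transformEnergy_succ hT
  ae_tendsto_weight := hweight
  ae_tendsto_cumWeight := by
    filter_upwards [hweight, htop] with ω hω hω'
    exact tendsto_cumWeight_gramWeight_atTop hT hω hω'

theorem ae_tendsto_sum_gramWeight_mul_transformEnergy_pow [IsFiniteMeasure μ] {σ a : ℝ} {p : ℕ}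
    (hT : 0 < T.trace) (hx : ∀ n, StronglyMeasurable[F n] (x n))
    (hN₀ : StronglyMeasurable[F 0] N₀) (hε : ∀ n, StronglyMeasurable[F n] (ε n))
    (hnoise : IsNoise μ F (fun n => ε (n + 1)) σ a) (hpa : 2 * p < a)
    (hweight : ∀ᵐ ω ∂μ, Tendsto (fun n => gramWeight T x n ω) atTop (𝓝 0))
    (htop : ∀ᵐ ω ∂μ, Tendsto (fun n => gramTrace T x n ω) atTop atTop)
    (haniso : ∀ᵐ ω ∂μ, Tendsto (fun n => anisotropy T x n ω) atTop (𝓝 0)) :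
    ∀ᵐ ω ∂μ, Tendsto (fun n => (∑ k ∈ range n,
      gramWeight T x k ω * transformEnergy T N₀ x ε k ω ^ p) / Real.log (gramTrace T x n ω))
      atTop (𝓝 (∏ j ∈ range p, σ ^ 2 * (1 + 2 * j / d))) := by
  have hI := isAsymptoticallyIsotropic_transform hT hx hN₀ hε haniso
  have hE := isEnergyRecursion_transform hT hx hN₀ hε hweight htop
  have hmoment := hI.ae_tendsto_sum_weight_mul_energy_pow_div hE hnoise hpa
  filter_upwards [hmoment, hweight, htop] with ω hmoment hweight htop
  have hprod := hmoment.mul (tendsto_cumWeight_gramWeight_div_log hT hweight htop)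
  rw [mul_one] at hprod
  refine hprod.congr fun n => div_mul_div_cancel₀ ?_
  exact (cumWeight_pos (fun k => gramWeight_nonneg x k ω hT) n).ne'

end RegressionRecursion

section IsotropicLimit

open scoped Matrix.Norms.L2Operator

variable {Ω : Type*} {d : ℕ} {S T : Matrix (Fin d) (Fin d) ℝ} {x : ℕ → Ω → Fin d → ℝ} {ω : Ω}

lemma posDef_Smat (hS : S.PosDef) (Φ : ℕ → Ω → Fin d → ℝ) (n : ℕ) (ω : Ω) :
    (Smat S Φ n ω).PosDef :=
  hS.add_posSemidef (posSemidef_sum _ fun k _ => by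
    simpa using posSemidef_vecMulVec_self_star (Φ k ω))

lemma gramWeight_le_norm_mul_expl (hT : T.PosDef) (htr : 0 < T.trace) (n : ℕ) :
    gramWeight T x n ω ≤
      ‖(gramTrace T x (n + 1) ω)⁻¹ • gramMatrix T x (n + 1) ω‖ * expl T x n ω := by
  have hpos := inv_pos.2 (gramTrace_pos x (n + 1) ω htr)
  rw [gramWeight, div_eq_inv_mul, norm_smul, Real.norm_of_nonneg hpos.le, mul_assoc]
  gcongr
  exact dotProduct_self_le_norm_mul_inv (posDef_Smat hT x n ω) _

variable {α : ℕ → ℝ}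

lemma tendsto_gramTrace_succ_div
    (hconv : Tendsto (fun n => (α n)⁻¹ • Smat T x n ω) atTop (𝓝 1)) :
    Tendsto (fun n => gramTrace T x (n + 1) ω / α n) atTop (𝓝 d) := by
  have htrace := ((show Continuous fun A : Matrix (Fin d) (Fin d) ℝ => A.trace by
    fun_prop).tendsto 1).comp hconv
  rw [trace_one, Fintype.card_fin] at htrace
  refine htrace.congr fun n => ?_
  rw [Function.comp_apply, trace_smul, smul_eq_mul, ← div_eq_inv_mul]
  rfl

lemma tendsto_gramTrace_atTop (hα : Tendsto α atTop atTop)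
    (hconv : Tendsto (fun n => (α n)⁻¹ • Smat T x n ω) atTop (𝓝 1)) (hd : 0 < d) :
    Tendsto (fun n => gramTrace T x n ω) atTop atTop := by
  refine (tendsto_add_atTop_iff_nat 1).1 (((tendsto_gramTrace_succ_div hconv).pos_mul_atTop
    (Nat.cast_pos.2 hd) hα).congr' ?_)
  filter_upwards [hα.eventually_gt_atTop 0] with n hn
  rw [div_mul_cancel₀ _ hn.ne']

lemma tendsto_inv_gramTrace_smul_gramMatrix (hα : Tendsto α atTop atTop)
    (hconv : Tendsto (fun n => (α n)⁻¹ • Smat T x n ω) atTop (𝓝 1)) (hd : 0 < d) :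
    Tendsto (fun n => (gramTrace T x n ω)⁻¹ • gramMatrix T x n ω) atTop (𝓝 ((d : ℝ)⁻¹ • 1)) := by
  have hd : (d : ℝ) ≠ 0 := Nat.cast_ne_zero.2 hd.ne'
  refine (tendsto_add_atTop_iff_nat 1).1
    ((((tendsto_gramTrace_succ_div hconv).inv₀ hd).smul hconv).congr' ?_)
  filter_upwards [hα.eventually_gt_atTop 0] with n hn
  rw [smul_smul, inv_div, div_mul_eq_mul_div, mul_inv_cancel₀ hn.ne', one_div]
  rfl

lemma tendsto_anisotropy (hα : Tendsto α atTop atTop)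
    (hconv : Tendsto (fun n => (α n)⁻¹ • Smat T x n ω) atTop (𝓝 1)) (hd : 0 < d) :
    Tendsto (fun n => anisotropy T x n ω) atTop (𝓝 0) := by
  simpa only [anisotropy, sub_self] using
    (tendsto_inv_gramTrace_smul_gramMatrix hα hconv hd).sub_const ((d : ℝ)⁻¹ • 1)

lemma tendsto_gramWeight (hα : Tendsto α atTop atTop)
    (hconv : Tendsto (fun n => (α n)⁻¹ • Smat T x n ω) atTop (𝓝 1)) (hT : T.PosDef)
    (htr : 0 < T.trace) (hd : 0 < d)
    (hexpl : Tendsto (fun n => expl T x n ω) atTop (𝓝 0)) :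
    Tendsto (fun n => gramWeight T x n ω) atTop (𝓝 0) := by
  have hbound := ((tendsto_add_atTop_iff_nat 1).2
    (tendsto_inv_gramTrace_smul_gramMatrix hα hconv hd)).norm.mul hexpl
  rw [mul_zero] at hbound
  exact squeeze_zero (fun n => gramWeight_nonneg x n ω htr)
    (gramWeight_le_norm_mul_expl hT htr) hbound

end IsotropicLimit

section Whitening

variable {Ω : Type*} {d : ℕ}

lemma gramMatrix_mulVec (K T : Matrix (Fin d) (Fin d) ℝ) (x : ℕ → Ω → Fin d → ℝ) (n : ℕ) (ω : Ω) :
    gramMatrix (K * T * Kᵀ) (fun k ω => K *ᵥ x k ω) n ω = K * gramMatrix T x n ω * Kᵀ := by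
  simp only [gramMatrix, mul_add, add_mul, mul_sum, sum_mul, mul_vecMulVec, vecMulVec_mul,
    vecMul_transpose]

lemma Mart_mulVec (K : Matrix (Fin d) (Fin d) ℝ) (M0 : Ω → Fin d → ℝ) (Φ : ℕ → Ω → Fin d → ℝ)
    (ε : ℕ → Ω → ℝ) (n : ℕ) (ω : Ω) :
    Mart (fun ω => K *ᵥ M0 ω) (fun k ω => K *ᵥ Φ k ω) ε n ω = K *ᵥ Mart M0 Φ ε n ω := by
  simp only [Mart, mulVec_add, mulVec_sum, mulVec_smul]

lemma Smat_mulVec (K S : Matrix (Fin d) (Fin d) ℝ) (Φ : ℕ → Ω → Fin d → ℝ) (n : ℕ) (ω : Ω) :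
    Smat (K * S * Kᵀ) (fun k ω => K *ᵥ Φ k ω) n ω = K * Smat S Φ n ω * Kᵀ :=
  gramMatrix_mulVec K S Φ (n + 1) ω

lemma expl_mulVec {K : Matrix (Fin d) (Fin d) ℝ} (hK : IsUnit K.det) (S : Matrix (Fin d) (Fin d) ℝ)
    (Φ : ℕ → Ω → Fin d → ℝ) (n : ℕ) (ω : Ω) :
    expl (K * S * Kᵀ) (fun k ω => K *ᵥ Φ k ω) n ω = expl S Φ n ω := by
  rw [expl, Smat_mulVec, Matrix.mul_inv_rev, Matrix.mul_inv_rev, mulVec_mulVec, mul_assoc,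
    mul_assoc, nonsing_inv_mul K hK, mul_one, ← vecMul_transpose, ← dotProduct_mulVec,
    mulVec_mulVec, ← mul_assoc, mul_nonsing_inv Kᵀ (by rwa [det_transpose]), one_mul, expl]

section

variable {ι : Type*} [Fintype ι] [DecidableEq ι] {K L S : Matrix ι ι ℝ}

lemma posDef_mul_mul_transpose (hS : S.PosDef) (hK : IsUnit K) : (K * S * Kᵀ).PosDef := by
  simpa only [conjTranspose_eq_transpose_of_trivial] using
    hS.mul_mul_conjTranspose_same (vecMul_injective_iff_isUnit.2 hK)

lemma isUnit_of_mul_mul_transpose_eq_one (hKL : K * L * Kᵀ = 1) : IsUnit K :=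
  IsUnit.of_mul_eq_one (L * Kᵀ) (by rw [← mul_assoc, hKL])

lemma transpose_mul_self_eq_inv (hKL : K * L * Kᵀ = 1) : Kᵀ * K = L⁻¹ := by
  rw [mul_assoc, mul_eq_one_comm, mul_assoc] at hKL
  exact (inv_eq_right_inv hKL).symm

lemma mulVec_dotProduct_mulVec_self (hKL : K * L * Kᵀ = 1) (v : ι → ℝ) :
    (K *ᵥ v) ⬝ᵥ (K *ᵥ v) = v ⬝ᵥ (L⁻¹ *ᵥ v) := by
  rw [← transpose_mul_self_eq_inv hKL, ← mulVec_mulVec, dotProduct_mulVec v, vecMul_transpose]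

end

lemma tendsto_inv_smul_Smat_mulVec {K L S : Matrix (Fin d) (Fin d) ℝ} {Φ : ℕ → Ω → Fin d → ℝ}
    {α : ℕ → ℝ} {ω : Ω} (hKL : K * L * Kᵀ = 1)
    (hconv : Tendsto (fun n => (α n)⁻¹ • Smat S Φ n ω) atTop (𝓝 L)) :
    Tendsto (fun n => (α n)⁻¹ • Smat (K * S * Kᵀ) (fun k ω => K *ᵥ Φ k ω) n ω) atTop (𝓝 1) := by
  rw [← hKL]
  refine ((hconv.const_mul K).mul_const Kᵀ).congr fun n => ?_
  rw [Smat_mulVec, mul_smul_comm, smul_mul_assoc]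

end Whitening

section DeterminantNormalization

lemma tendsto_log_div_log {f α : ℕ → ℝ} {c : ℝ} {k : ℕ} (hα : Tendsto α atTop atTop) (hc : c ≠ 0)
    (h : Tendsto (fun n => f n / α n ^ k) atTop (𝓝 c)) :
    Tendsto (fun n => Real.log (f n) / Real.log (α n)) atTop (𝓝 k) := by
  have hlog : Tendsto (fun n => Real.log (α n)) atTop atTop := Real.tendsto_log_atTop.comp hα
  have hlim := ((h.log hc).div_atTop hlog).add_const (k : ℝ)
  rw [zero_add] at hlim
  refine hlim.congr' ?_
  filter_upwards [hα.eventually_gt_atTop 0, hlog.eventually_gt_atTop 0, h.eventually_ne hc]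
    with n hαn hlogn hn
  rw [Real.log_div (fun hf => hn (by rw [hf, zero_div])) (pow_pos hαn k).ne', Real.log_pow, sub_div,
    mul_div_cancel_right₀ _ hlogn.ne', sub_add_cancel]

lemma tendsto_log_det_div_log {d : ℕ} {A : ℕ → Matrix (Fin d) (Fin d) ℝ}
    {L : Matrix (Fin d) (Fin d) ℝ} {α : ℕ → ℝ} (hα : Tendsto α atTop atTop) (hL : L.det ≠ 0)
    (h : Tendsto (fun n => (α n)⁻¹ • A n) atTop (𝓝 L)) :
    Tendsto (fun n => Real.log (A n).det / Real.log (α n)) atTop (𝓝 d) := by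
  refine tendsto_log_div_log hα hL ((((show Continuous fun B : Matrix (Fin d) (Fin d) ℝ => B.det by
    fun_prop).tendsto L).comp h).congr fun n => ?_)
  rw [Function.comp_apply, det_smul, Fintype.card_fin, inv_pow, ← div_eq_inv_mul]

lemma tendsto_log_det_div_log_gramTrace {Ω : Type*} {d : ℕ} {S T L : Matrix (Fin d) (Fin d) ℝ}
    {Φ x : ℕ → Ω → Fin d → ℝ} {ω : Ω} {α : ℕ → ℝ} (hd : 0 < d) (hα : Tendsto α atTop atTop)
    (hL : L.det ≠ 0) (hconv : Tendsto (fun n => (α n)⁻¹ • Smat S Φ n ω) atTop (𝓝 L))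
    (hiso : Tendsto (fun n => (α n)⁻¹ • Smat T x n ω) atTop (𝓝 1)) :
    Tendsto (fun n => Real.log (Smat S Φ n ω).det / Real.log (gramTrace T x (n + 1) ω))
      atTop (𝓝 d) := by
  have htrace : Tendsto (fun n => gramTrace T x (n + 1) ω / α n ^ 1) atTop (𝓝 d) := by
    simpa only [pow_one] using tendsto_gramTrace_succ_div hiso
  have hlim := (tendsto_log_det_div_log hα hL hconv).div
    (tendsto_log_div_log hα (Nat.cast_ne_zero.2 hd.ne') htrace) (Nat.cast_ne_zero.2 one_ne_zero)
  rw [Nat.cast_one, div_one] at hlim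
  refine hlim.congr' ?_
  filter_upwards [(Real.tendsto_log_atTop.comp hα).eventually_gt_atTop 0] with n hn
  exact div_div_div_cancel_right₀ hn.ne' _ _

lemma tendsto_inv_mul_sum_Icc {t u v : ℕ → ℝ} {b c : ℝ} (hb : b ≠ 0) (hv : Tendsto v atTop atTop)
    (hsum : Tendsto (fun n => (∑ k ∈ range n, t k) / v n) atTop (𝓝 c))
    (huv : Tendsto (fun n => u n / v (n + 1)) atTop (𝓝 b)) :
    Tendsto (fun n => (u n)⁻¹ * ∑ k ∈ Icc 1 n, t k) atTop (𝓝 (c / b)) := by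
  have hv := (tendsto_add_atTop_iff_nat 1).2 hv
  have hsum := (((tendsto_add_atTop_iff_nat 1).2 hsum).sub (hv.const_div_atTop (t 0))).div huv hb
  rw [sub_zero] at hsum
  refine hsum.congr' ?_
  filter_upwards [hv.eventually_gt_atTop 0] with n hn
  have hIcc : ∑ k ∈ range (n + 1), t k - t 0 = ∑ k ∈ Icc 1 n, t k := by
    rw [range_eq_Ico, sum_eq_sum_Ico_succ_bot n.succ_pos, add_sub_cancel_left]
    rfl
  rw [Pi.div_apply, ← sub_div, div_div_div_cancel_right₀ hn.ne', hIcc, div_eq_inv_mul]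

lemma prod_moment_ratio_div_eq_elllim {d p : ℕ} (hd : 0 < d) (hp : 1 ≤ p) (σ : ℝ) :
    (∏ j ∈ range p, σ ^ 2 * (1 + 2 * j / d)) / d = elllim d p σ / (d : ℝ) ^ (p + 1) := by
  have hd : (d : ℝ) ≠ 0 := Nat.cast_ne_zero.2 hd.ne'
  induction p, hp using Nat.le_induction with
  | base => simp [elllim]; field_simp
  | succ p hp ih =>
    obtain ⟨q, rfl⟩ := Nat.exists_eq_add_of_le' hp
    rw [prod_range_succ, mul_div_right_comm, ih]
    simp only [elllim, Nat.add_sub_cancel]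
    rw [prod_Icc_succ_top q.succ_pos]
    push_cast
    field_simp
    ring

end DeterminantNormalization

section WhitenedTransform

variable {Ω : Type*} {m0 : MeasurableSpace Ω} {μ : Measure Ω} {F : Filtration ℕ m0} {d : ℕ}
  {K L S : Matrix (Fin d) (Fin d) ℝ} {Φ : ℕ → Ω → Fin d → ℝ} {M₀ : Ω → Fin d → ℝ} {ε : ℕ → Ω → ℝ}

lemma stronglyMeasurable_const_mulVec {m : MeasurableSpace Ω} (K : Matrix (Fin d) (Fin d) ℝ)
    {v : Ω → Fin d → ℝ} (hv : StronglyMeasurable v) : StronglyMeasurable fun ω => K *ᵥ v ω :=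
  (show Continuous (K *ᵥ ·) by fun_prop).comp_stronglyMeasurable hv

theorem ae_tendsto_inv_log_det_mul_sum_mulVec [IsFiniteMeasure μ] {α : ℕ → Ω → ℝ} {σ a : ℝ} {p : ℕ}
    (hd : 0 < d) (hp : 1 ≤ p) (hpa : 2 * p < a) (hS : S.PosDef) (hL : L.det ≠ 0)
    (hKL : K * L * Kᵀ = 1) (hΦ : ∀ n, StronglyMeasurable[F n] (Φ n))
    (hM₀ : StronglyMeasurable[F 0] M₀) (hε : ∀ n, StronglyMeasurable[F n] (ε n))
    (hnoise : IsNoise μ F (fun n => ε (n + 1)) σ a)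
    (hexpl : ∀ᵐ ω ∂μ, Tendsto (fun n => expl S Φ n ω) atTop (𝓝 0))
    (hα : ∀ᵐ ω ∂μ, Tendsto (fun n => α n ω) atTop atTop)
    (hconv : ∀ᵐ ω ∂μ, Tendsto (fun n => (α n ω)⁻¹ • Smat S Φ n ω) atTop (𝓝 L)) :
    ∀ᵐ ω ∂μ, Tendsto (fun n => (Real.log (Smat S Φ n ω).det)⁻¹ * ∑ k ∈ Icc 1 n,
      gramWeight (K * S * Kᵀ) (fun k ω => K *ᵥ Φ k ω) k ω *
        transformEnergy (K * S * Kᵀ) (fun ω => K *ᵥ M₀ ω) (fun k ω => K *ᵥ Φ k ω) ε k ω ^ p)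
      atTop (𝓝 (elllim d p σ / (d : ℝ) ^ (p + 1))) := by
  have : Nonempty (Fin d) := ⟨⟨0, hd⟩⟩
  have hK : IsUnit K := isUnit_of_mul_mul_transpose_eq_one hKL
  have hT : (K * S * Kᵀ).PosDef := posDef_mul_mul_transpose hS hK
  have hiso := hconv.mono fun ω h => tendsto_inv_smul_Smat_mulVec hKL h
  have htop : ∀ᵐ ω ∂μ, Tendsto (fun n => gramTrace (K * S * Kᵀ) (fun k ω => K *ᵥ Φ k ω) n ω)
      atTop atTop := by
    filter_upwards [hα, hiso] with ω hα hiso using tendsto_gramTrace_atTop hα hiso hd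
  have hmoment := ae_tendsto_sum_gramWeight_mul_transformEnergy_pow hT.trace_pos
    (fun n => stronglyMeasurable_const_mulVec K (hΦ n)) (stronglyMeasurable_const_mulVec K hM₀) hε
    hnoise hpa
    (by
      filter_upwards [hα, hiso, hexpl] with ω hα hiso hexpl
      refine tendsto_gramWeight hα hiso hT hT.trace_pos hd (hexpl.congr fun n => ?_)
      rw [expl_mulVec ((isUnit_iff_isUnit_det K).1 hK)])
    htop
    (by filter_upwards [hα, hiso] with ω hα hiso using tendsto_anisotropy hα hiso hd)
  filter_upwards [hmoment, htop, hα, hconv, hiso] with ω hmoment htop hα hconv hiso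
  rw [← prod_moment_ratio_div_eq_elllim hd hp]
  exact tendsto_inv_mul_sum_Icc (Nat.cast_ne_zero.2 hd.ne') (Real.tendsto_log_atTop.comp htop)
    hmoment (tendsto_log_det_div_log_gramTrace hd hα hL hconv hiso)

end WhitenedTransform

section SquareRootWhitening

variable {Ω : Type*} {d : ℕ}

lemma gramTrace_succ_mulVec (K S : Matrix (Fin d) (Fin d) ℝ) (Φ : ℕ → Ω → Fin d → ℝ) (n : ℕ)
    (ω : Ω) :
    gramTrace (K * S * Kᵀ) (fun k ω => K *ᵥ Φ k ω) (n + 1) ω = (K * Smat S Φ n ω * Kᵀ).trace :=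
  congrArg trace (Smat_mulVec K S Φ n ω)

lemma transformEnergy_mulVec {K L : Matrix (Fin d) (Fin d) ℝ} (hKL : K * L * Kᵀ = 1)
    (S : Matrix (Fin d) (Fin d) ℝ) (M₀ : Ω → Fin d → ℝ) (Φ : ℕ → Ω → Fin d → ℝ) (ε : ℕ → Ω → ℝ)
    (n : ℕ) (ω : Ω) :
    transformEnergy (K * S * Kᵀ) (fun ω => K *ᵥ M₀ ω) (fun k ω => K *ᵥ Φ k ω) ε n ω =
      (gramTrace (K * S * Kᵀ) (fun k ω => K *ᵥ Φ k ω) n ω)⁻¹ *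
        (Mart M₀ Φ ε n ω ⬝ᵥ (L⁻¹ *ᵥ Mart M₀ Φ ε n ω)) := by
  rw [transformEnergy, Mart_mulVec, mulVec_dotProduct_mulVec_self hKL]

lemma inv_mul_mul_inv_eq_one {ι : Type*} [Fintype ι] [DecidableEq ι] {A L : Matrix ι ι ℝ}
    (hA : IsUnit A.det) (hAL : A * A = L) : A⁻¹ * L * A⁻¹ = 1 := by
  rw [← hAL, ← mul_assoc, nonsing_inv_mul A hA, one_mul, mul_nonsing_inv A hA]

end SquareRootWhitening

/-- **Theorem 2, first part**: convergence of the even moments in the ASCLT for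
vector martingale transforms. -/
theorem key_lemma_first_part
    {Ω : Type*} {m0 : MeasurableSpace Ω} {μ : Measure Ω} [IsProbabilityMeasure μ]
    (F : Filtration ℕ m0) {d : ℕ} (hd : 0 < d)
    (ε : ℕ → Ω → ℝ) (Φ : ℕ → Ω → Fin d → ℝ) (M0 : Ω → Fin d → ℝ)
    (S L Lhalf : Matrix (Fin d) (Fin d) ℝ) (hS : S.PosDef) (hL : L.PosDef)
    (hLhalf : Lhalf.PosDef) (hLhalfsq : Lhalf * Lhalf = L)
    (σ : ℝ) (p : ℕ) (hp : 1 ≤ p) (a : ℝ) (ha : 2 * p < a)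
    (α : ℕ → Ω → ℝ)
    (hεadapt : ∀ n, StronglyMeasurable[F n] (ε n))
    (hεint : ∀ n, Integrable (ε n) μ)
    (hΦadapt : ∀ n, StronglyMeasurable[F n] (Φ n))
    (hM0 : StronglyMeasurable[F 0] M0)
    (hmds : ∀ n, μ[ε (n + 1)|F n] =ᵐ[μ] 0)
    (hvar : ∀ n, μ[fun ω => ε (n + 1) ω ^ 2|F n] =ᵐ[μ] fun _ => σ ^ 2)
    (hmomint : ∀ n, Integrable (fun ω => |ε (n + 1) ω| ^ a) μ)
    (hmom : ∀ᵐ ω ∂μ, ∃ C : ℝ, ∀ n, (μ[fun ω => |ε (n + 1) ω| ^ a|F n]) ω ≤ C)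
    (hf0 : ∀ᵐ ω ∂μ, Tendsto (fun n => expl S Φ n ω) atTop (𝓝 0))
    (hαmeas : ∀ n, Measurable (α n))
    (hαpos : ∀ n ω, 0 < α n ω)
    (hαmono : ∀ᵐ ω ∂μ, Monotone fun n => α n ω)
    (hαtop : ∀ᵐ ω ∂μ, Tendsto (fun n => α n ω) atTop atTop)
    (hconv : ∀ᵐ ω ∂μ, Tendsto (fun n => (α n ω)⁻¹ • Smat S Φ n ω) atTop (𝓝 L)) :
    let β : ℕ → Ω → ℝ := fun n ω => (Lhalf⁻¹ * Smat S Φ n ω * Lhalf⁻¹).trace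
    let γ : ℕ → Ω → ℝ := fun n ω => (β n ω - β (n - 1) ω) / β n ω
    let mseq : ℕ → Ω → ℝ :=
      fun n ω => (β (n - 1) ω)⁻¹ * (Mart M0 Φ ε n ω ⬝ᵥ (L⁻¹ *ᵥ Mart M0 Φ ε n ω))
    ∀ᵐ ω ∂μ, Tendsto (fun n =>
      (Real.log ((Smat S Φ n ω).det))⁻¹ * ∑ k ∈ Finset.Icc 1 n, γ k ω * mseq k ω ^ p)
      atTop (𝓝 (elllim d p σ / (d : ℝ) ^ (p + 1))) := by
  intro β γ mseq
  have hdet : IsUnit Lhalf.det := (isUnit_iff_isUnit_det Lhalf).1 hLhalf.isUnit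
  have hsymm : Lhalf⁻¹ᵀ = Lhalf⁻¹ := isHermitian_iff_isSymm.1 hLhalf.inv.isHermitian
  have hwhite : Lhalf⁻¹ * L * Lhalf⁻¹ᵀ = 1 := by
    rw [hsymm, inv_mul_mul_inv_eq_one hdet hLhalfsq]
  have hnoise : IsNoise μ F (fun n => ε (n + 1)) σ a :=
    ⟨⟨fun n => hεadapt (n + 1), fun n => hεint (n + 1), hmds⟩, hvar, hmomint, hmom⟩
  have hβ (n : ℕ) (ω : Ω) : β n ω =
      gramTrace (Lhalf⁻¹ * S * Lhalf⁻¹ᵀ) (fun k ω => Lhalf⁻¹ *ᵥ Φ k ω) (n + 1) ω := by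
    rw [gramTrace_succ_mulVec, hsymm]
  filter_upwards [ae_tendsto_inv_log_det_mul_sum_mulVec hd hp ha hS hL.det_pos.ne' hwhite hΦadapt
    hM0 hεadapt hnoise hf0 hαtop hconv] with ω hlim
  refine hlim.congr fun n => congrArg _ (sum_congr rfl fun k hk => ?_)
  obtain ⟨j, rfl⟩ := Nat.exists_eq_add_of_le' (mem_Icc.1 hk).1
  rw [transformEnergy_mulVec hwhite, gramWeight_eq, ← hβ, ← hβ]
  rfl
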